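/- arXiv:1104.2639 — 13 statements merged into one kernel-verified Lean document; each statement's English description precedes it below -/
import Mathlib

section
/- Let K be a compact Hausdorff space and μ a Radon probability measure on K. Suppose ℋ is a family of open subsets of K such that the collection of finite unions of finite intersections of members of ℋ forms a base of the topology of K. If there is a countable family ℱ of closed subsets of K such that μ(U) = sup{μ(F) : F ∈ ℱ, F ⊆ U} for every U ∈ ℋ, then μ is countably determined. -/
open MeasureTheory Set

/-- A (Radon probability) measure `μ` on a topological space is *countably determined*
if there is a countable family `𝓕` of closed sets such that
`μ U = sup {μ F : F ∈ 𝓕, F ⊆ U}` for every open set `U`. -/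
def CountablyDetermined {K : Type*} [TopologicalSpace K] [MeasurableSpace K]
    (μ : Measure K) : Prop :=
  ∃ 𝓕 : Set (Set K), 𝓕.Countable ∧ (∀ F ∈ 𝓕, IsClosed F) ∧
    ∀ U : Set K, IsOpen U → μ U = ⨆ (F : Set K) (_ : F ∈ 𝓕) (_ : F ⊆ U), μ F

/-- The collection of all finite unions of finite (nonempty) intersections of members
of a family `𝓗` of sets. -/
def FiniteUnionsOfFiniteInters {K : Type*} (𝓗 : Set (Set K)) : Set (Set K) :=
  {U | ∃ 𝓖 : Set (Set (Set K)), 𝓖.Finite ∧ (∀ S ∈ 𝓖, S.Finite ∧ S.Nonempty ∧ S ⊆ 𝓗) ∧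
      U = ⋃ S ∈ 𝓖, ⋂₀ S}

lemma aux_countable {K : Type*} (𝓕 : Set (Set K)) (h : 𝓕.Countable) :
    (FiniteUnionsOfFiniteInters 𝓕).Countable := by
  have h1 : {S : Set (Set K) | S.Finite ∧ S ⊆ 𝓕}.Countable := countable_setOf_finite_subset h
  have h2 := countable_setOf_finite_subset h1
  refine (h2.image (fun 𝓖 => ⋃ S ∈ 𝓖, ⋂₀ S)).mono ?_
  rintro U ⟨𝓖, hfin, hS, rfl⟩
  exact ⟨𝓖, ⟨hfin, fun S hSG => ⟨(hS S hSG).1, (hS S hSG).2.2⟩⟩, rfl⟩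

lemma aux_closed {K : Type*} [TopologicalSpace K] (𝓕 : Set (Set K)) (h : ∀ F ∈ 𝓕, IsClosed F) :
    ∀ F ∈ FiniteUnionsOfFiniteInters 𝓕, IsClosed F := by
  rintro U ⟨𝓖, hfin, hS, rfl⟩
  exact hfin.isClosed_biUnion fun S hSG => isClosed_sInter fun F hF => h F ((hS S hSG).2.2 hF)

lemma aux_approx {K : Type*} [TopologicalSpace K] [MeasurableSpace K] [BorelSpace K]
    (μ : Measure K) [IsProbabilityMeasure μ]
    (𝓕 : Set (Set K)) (h𝓕closed : ∀ F ∈ 𝓕, IsClosed F) (H : Set K)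
    (happrox : μ H = ⨆ (F : Set K) (_ : F ∈ 𝓕) (_ : F ⊆ H), μ F)
    (ε : ENNReal) (hε : ε ≠ 0) :
    ∃ F ∈ insert ∅ 𝓕, F ⊆ H ∧ μ (H \ F) ≤ ε := by
  by_cases hH : μ H ≤ ε
  · exact ⟨∅, mem_insert _ _, empty_subset _, by simpa using hH⟩
  · have hlt : μ H - ε < ⨆ (F : Set K) (_ : F ∈ 𝓕) (_ : F ⊆ H), μ F := by
      rw [← happrox]
      refine ENNReal.sub_lt_self (measure_ne_top _ _) ?_ hε
      intro h0
      simp [h0] at hH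
    simp only [lt_iSup_iff] at hlt
    obtain ⟨F, hF, hFH, hl⟩ := hlt
    refine ⟨F, mem_insert_of_mem _ hF, hFH, ?_⟩
    rw [measure_diff hFH (h𝓕closed F hF).measurableSet.nullMeasurableSet (measure_ne_top _ _)]
    exact tsub_le_iff_left.2 (tsub_le_iff_right.1 hl.le)

lemma aux_base {K : Type*} [TopologicalSpace K] [CompactSpace K] [T2Space K]
    (𝓗 : Set (Set K))
    (hbase : TopologicalSpace.IsTopologicalBasis (FiniteUnionsOfFiniteInters 𝓗))
    (C U : Set K) (hC : IsCompact C) (hU : IsOpen U) (hCU : C ⊆ U) :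
    ∃ B ∈ FiniteUnionsOfFiniteInters 𝓗, C ⊆ B ∧ B ⊆ U := by
  refine hC.induction_on (p := fun C => ∃ B ∈ FiniteUnionsOfFiniteInters 𝓗, C ⊆ B ∧ B ⊆ U)
    ?_ ?_ ?_ ?_
  · exact ⟨∅, ⟨∅, by simp⟩, by simp⟩
  · rintro s t hst ⟨B, hB, h1, h2⟩
    exact ⟨B, hB, hst.trans h1, h2⟩
  · rintro s t ⟨B, ⟨G, hG, hG2, rfl⟩, h1, h2⟩ ⟨B', ⟨G', hG', hG2', rfl⟩, h1', h2'⟩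
    refine ⟨_, ⟨G ∪ G', hG.union hG', ?_, rfl⟩, ?_, ?_⟩
    · rintro S (h | h)
      · exact hG2 S h
      · exact hG2' S h
    · rw [biUnion_union]
      exact union_subset_union h1 h1'
    · rw [biUnion_union]
      exact union_subset h2 h2'
  · intro x hx
    obtain ⟨B, hB, hxB, hBU⟩ := hbase.exists_subset_of_mem_open (hCU hx) hU
    exact ⟨B, mem_nhdsWithin_of_mem_nhds ((hbase.isOpen hB).mem_nhds hxB), B, hB, Subset.rfl, hBU⟩

theorem countablyDetermined_of_approx_on_pseudobase
    {K : Type*} [TopologicalSpace K] [CompactSpace K] [T2Space K]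
    [MeasurableSpace K] [BorelSpace K]
    (μ : Measure K) [IsProbabilityMeasure μ] [μ.Regular]
    (𝓗 : Set (Set K)) (h𝓗 : ∀ U ∈ 𝓗, IsOpen U)
    (hbase : TopologicalSpace.IsTopologicalBasis (FiniteUnionsOfFiniteInters 𝓗))
    (𝓕 : Set (Set K)) (h𝓕count : 𝓕.Countable) (h𝓕closed : ∀ F ∈ 𝓕, IsClosed F)
    (happrox : ∀ U ∈ 𝓗, μ U = ⨆ (F : Set K) (_ : F ∈ 𝓕) (_ : F ⊆ U), μ F) :
    CountablyDetermined μ := by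
  classical
  have hclosed' : ∀ F ∈ insert ∅ 𝓕, IsClosed F := by
    rintro F (rfl | hF)
    · exact isClosed_empty
    · exact h𝓕closed F hF
  refine ⟨FiniteUnionsOfFiniteInters (insert ∅ 𝓕), aux_countable _ (h𝓕count.insert _),
    aux_closed _ hclosed', ?_⟩
  intro U hU
  refine le_antisymm ?_ (iSup_le fun F => iSup_le fun _ => iSup_le fun h => measure_mono h)
  rw [hU.measure_eq_iSup_isCompact]
  refine iSup_le fun C => iSup_le fun hCU => iSup_le fun hC => ?_
  obtain ⟨B, ⟨𝓖, hfin, hS, rfl⟩, hCB, hBU⟩ := aux_base 𝓗 hbase C U hC hU hCU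
  refine (measure_mono hCB).trans ?_
  refine ENNReal.le_of_forall_pos_le_add fun δ hδ _ => ?_
  have hTfin : (⋃₀ 𝓖).Finite := hfin.sUnion fun S h => (hS S h).1
  have hTH : ⋃₀ 𝓖 ⊆ 𝓗 := sUnion_subset fun S h => (hS S h).2.2
  have : Countable (⋃₀ 𝓖 : Set (Set K)) := hTfin.countable
  obtain ⟨ε, hε, hsum⟩ := ENNReal.exists_pos_sum_of_countable
    (ε := (δ : ENNReal)) (by exact_mod_cast hδ.ne') (⋃₀ 𝓖 : Set (Set K))
  have key : ∀ H : Set K, ∃ F : Set K, ∀ hH : H ∈ ⋃₀ 𝓖,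
      F ∈ insert ∅ 𝓕 ∧ F ⊆ H ∧ μ (H \ F) ≤ ε ⟨H, hH⟩ := by
    intro H
    by_cases hH : H ∈ ⋃₀ 𝓖
    · obtain ⟨F, h1, h2⟩ := aux_approx μ 𝓕 h𝓕closed H (happrox H (hTH hH)) (ε ⟨H, hH⟩)
        (by exact_mod_cast (hε ⟨H, hH⟩).ne')
      exact ⟨F, fun _ => ⟨h1, h2⟩⟩
    · exact ⟨∅, fun h => absurd h hH⟩
  choose f hf using key
  let G : Set K := ⋃ S ∈ (fun S => f '' S) '' 𝓖, ⋂₀ S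
  have hGmem : G ∈ FiniteUnionsOfFiniteInters (insert ∅ 𝓕) := by
    refine ⟨_, hfin.image _, ?_, rfl⟩
    rintro _ ⟨S, hSG, rfl⟩
    refine ⟨(hS S hSG).1.image _, (hS S hSG).2.1.image _, ?_⟩
    rintro _ ⟨H, hH, rfl⟩
    exact (hf H ⟨S, hSG, hH⟩).1
  have hGB : G ⊆ ⋃ S ∈ 𝓖, ⋂₀ S := by
    intro x hx
    simp only [G, mem_iUnion, biUnion_image, exists_prop] at hx
    obtain ⟨S, hSG, hx⟩ := hx
    exact mem_biUnion hSG fun H hH => (hf H ⟨S, hSG, hH⟩).2.1 (hx _ ⟨H, hH, rfl⟩)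
  have hcov : (⋃ S ∈ 𝓖, ⋂₀ S) ⊆ G ∪ ⋃ H : (⋃₀ 𝓖 : Set (Set K)), (H.1 \ f H.1) := by
    intro x hx
    by_cases hx2 : x ∈ ⋃ H : (⋃₀ 𝓖 : Set (Set K)), (H.1 \ f H.1)
    · exact Or.inr hx2
    · left
      simp only [mem_iUnion, exists_prop] at hx
      obtain ⟨S, hSG, hx⟩ := hx
      simp only [G, mem_iUnion, biUnion_image, exists_prop]
      refine ⟨S, hSG, ?_⟩
      rintro _ ⟨H, hH, rfl⟩
      by_contra hn
      exact hx2 (mem_iUnion.2 ⟨⟨H, S, hSG, hH⟩, hx H hH, hn⟩)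
  calc μ (⋃ S ∈ 𝓖, ⋂₀ S) ≤ μ G + μ (⋃ H : (⋃₀ 𝓖 : Set (Set K)), (H.1 \ f H.1)) :=
        (measure_mono hcov).trans (measure_union_le _ _)
    _ ≤ μ G + ∑' H : (⋃₀ 𝓖 : Set (Set K)), (ε H : ENNReal) := by
        gcongr
        exact (measure_iUnion_le _).trans (ENNReal.tsum_le_tsum fun H => (hf H.1 H.2).2.2)
    _ ≤ _ := by
        gcongr
        exact le_iSup_of_le G (le_iSup_of_le hGmem (le_iSup_of_le (hGB.trans hBU) le_rfl))
end

section
/- Let X be a separable metrizable space and let K be a subspace of the product ℝ^X with the topology of pointwise convergence. Then for every Y ⊆ X, every x ∈ Y, and every δ > 0, the set {g ∈ K : osc(g, Y, x) ≥ δ} is a G_δ subset of K. -/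
open Set

/-- `osc g Y x` is the oscillation at `x` of the restriction of `g : X → ℝ` to `Y ⊆ X`:
the infimum, over open neighbourhoods `U` of `x`, of the diameter of `g '' (U ∩ Y)`. -/
noncomputable def osc {X : Type*} [TopologicalSpace X] (g : X → ℝ) (Y : Set X) (x : X) :
    ENNReal :=
  ⨅ (U : Set X) (_ : IsOpen U) (_ : x ∈ U), EMetric.diam (g '' (U ∩ Y))

theorem isGδ_osc_ge {X : Type*} [TopologicalSpace X] [TopologicalSpace.SeparableSpace X]
    [TopologicalSpace.MetrizableSpace X]
    (K : Set (X → ℝ)) (Y : Set X) (x : X) (hxY : x ∈ Y) (δ : ℝ) (hδ : 0 < δ) :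
    IsGδ {g : K | ENNReal.ofReal δ ≤ osc (g : X → ℝ) Y x} := by
  obtain ⟨B, hB⟩ := (nhds x).exists_antitone_basis
  have key : {g : K | ENNReal.ofReal δ ≤ osc (g : X → ℝ) Y x} =
      ⋂ n : ℕ, ⋂ q : ℚ, ⋂ _ : (q : ℝ) < δ, ⋃ y ∈ B n ∩ Y, ⋃ z ∈ B n ∩ Y,
        {g : K | (q : ℝ) < dist ((g : X → ℝ) y) ((g : X → ℝ) z)} := by
    ext g
    simp only [mem_setOf_eq, mem_iInter, mem_iUnion, exists_prop]
    constructor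
    · intro h n q hq
      by_contra! hcon
      obtain ⟨U, hUB, hUo, hxU⟩ := mem_nhds_iff.1 (hB.1.mem_of_mem (i := n) trivial)
      have h1 : osc (g : X → ℝ) Y x ≤ EMetric.diam ((g : X → ℝ) '' (U ∩ Y)) :=
        iInf_le_of_le U (iInf_le_of_le hUo (iInf_le_of_le hxU le_rfl))
      have h2 : EMetric.diam ((g : X → ℝ) '' (U ∩ Y)) ≤ ENNReal.ofReal q := by
        apply EMetric.diam_le
        rintro _ ⟨y, hy, rfl⟩ _ ⟨z, hz, rfl⟩
        rw [edist_dist]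
        exact ENNReal.ofReal_le_ofReal (hcon y ⟨hUB hy.1, hy.2⟩ z ⟨hUB hz.1, hz.2⟩)
      have h3 := (h.trans h1).trans h2
      have h4 := (ENNReal.ofReal_lt_ofReal_iff hδ).2 hq
      exact absurd h3 (not_le.2 h4)
    · intro h
      refine le_iInf fun U => le_iInf fun hUo => le_iInf fun hxU => ?_
      obtain ⟨n, -, hn⟩ := hB.1.mem_iff.1 (hUo.mem_nhds hxU)
      by_contra! hcon
      have hfin := ne_top_of_lt hcon
      have hlt : (EMetric.diam ((g : X → ℝ) '' (U ∩ Y))).toReal < δ :=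
        (ENNReal.lt_ofReal_iff_toReal_lt hfin).1 hcon
      obtain ⟨q, hq1, hq2⟩ := exists_rat_btwn hlt
      obtain ⟨y, hy, z, hz, hyz⟩ := h n q hq2
      have h5 := EMetric.edist_le_diam_of_mem
        (mem_image_of_mem (g : X → ℝ) (show y ∈ U ∩ Y from ⟨hn hy.1, hy.2⟩))
        (mem_image_of_mem (g : X → ℝ) (show z ∈ U ∩ Y from ⟨hn hz.1, hz.2⟩))
      have h6 := ENNReal.toReal_mono hfin h5
      rw [edist_dist, ENNReal.toReal_ofReal dist_nonneg] at h6
      linarith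
  rw [key]
  refine IsGδ.iInter fun n => IsGδ.iInter fun q => IsGδ.iInter fun _ => IsOpen.isGδ ?_
  refine isOpen_biUnion fun y _ => isOpen_biUnion fun z _ => ?_
  refine isOpen_lt continuous_const (Continuous.dist ?_ ?_)
  · exact (continuous_apply y).comp continuous_subtype_val
  · exact (continuous_apply z).comp continuous_subtype_val
end

section
/- Let X be a separable metrizable space, K ⊆ ℝ^X a compact space (with the pointwise topology), and μ a Radon probability measure on K. Suppose that for every δ > 0 the space X can be written as X = ⋃_{n∈ω} X_n(δ) so that for every n and every x ∈ X_n(δ) one has μ({g ∈ K : osc(g, X_n(δ), x) ≥ δ}) < δ. Then μ is countably determined. -/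
open MeasureTheory Set

/-- `U` is open and can be approximated from inside, on compact sets, by members of `𝓕`. -/
def ApproxOpen {K : Type*} [TopologicalSpace K] [MeasurableSpace K]
    (μ : Measure K) (𝓕 : Set (Set K)) (U : Set K) : Prop :=
  IsOpen U ∧ ∀ C : Set K, IsCompact C → C ⊆ U → ∀ ε : ℝ, 0 < ε →
    ∃ F ∈ 𝓕, F ⊆ U ∧ μ (C \ F) ≤ ENNReal.ofReal ε

theorem ApproxOpen.inter {K : Type*} [TopologicalSpace K] [MeasurableSpace K]
    {μ : Measure K} {𝓕 : Set (Set K)} (hi : ∀ s ∈ 𝓕, ∀ t ∈ 𝓕, s ∩ t ∈ 𝓕) {U V : Set K}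
    (hU : ApproxOpen μ 𝓕 U) (hV : ApproxOpen μ 𝓕 V) : ApproxOpen μ 𝓕 (U ∩ V) := by
  refine ⟨hU.1.inter hV.1, fun C hC hCU ε hε => ?_⟩
  obtain ⟨F, hF, hFU, hF'⟩ := hU.2 C hC (hCU.trans inter_subset_left) (ε / 2) (by positivity)
  obtain ⟨G, hG, hGV, hG'⟩ := hV.2 C hC (hCU.trans inter_subset_right) (ε / 2) (by positivity)
  refine ⟨F ∩ G, hi F hF G hG, inter_subset_inter hFU hGV, ?_⟩
  rw [sdiff_inter]
  refine (measure_union_le _ _).trans ((add_le_add hF' hG').trans ?_)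
  rw [← ENNReal.ofReal_add (by positivity) (by positivity), add_halves]

theorem ApproxOpen.sUnion {K : Type*} [TopologicalSpace K] [LocallyCompactSpace K]
    [MeasurableSpace K]
    {μ : Measure K} {𝓕 : Set (Set K)} (he : ∅ ∈ 𝓕) (hi : ∀ s ∈ 𝓕, ∀ t ∈ 𝓕, s ∪ t ∈ 𝓕)
    {𝓤 : Set (Set K)}
    (hU : ∀ U ∈ 𝓤, ApproxOpen μ 𝓕 U) : ApproxOpen μ 𝓕 (⋃₀ 𝓤) := by
  refine ⟨isOpen_sUnion fun U h => (hU U h).1, fun C hC hCU => ?_⟩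
  refine hC.induction_on (p := fun s => ∀ ε : ℝ, 0 < ε →
    ∃ F ∈ 𝓕, F ⊆ ⋃₀ 𝓤 ∧ μ (s \ F) ≤ ENNReal.ofReal ε) ?_ ?_ ?_ ?_
  · intro ε hε
    exact ⟨∅, he, empty_subset _, by simp⟩
  · intro s t hst ht ε hε
    obtain ⟨F, hF, hFU, h⟩ := ht ε hε
    exact ⟨F, hF, hFU, (measure_mono (sdiff_subset_sdiff_left hst)).trans h⟩
  · intro s t hs ht ε hε
    obtain ⟨F, hF, hFU, hF'⟩ := hs (ε / 2) (by positivity)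
    obtain ⟨G, hG, hGV, hG'⟩ := ht (ε / 2) (by positivity)
    refine ⟨F ∪ G, hi F hF G hG, union_subset hFU hGV, ?_⟩
    calc μ ((s ∪ t) \ (F ∪ G)) ≤ μ ((s \ F) ∪ (t \ G)) := measure_mono (by
          rintro x ⟨hx | hx, h⟩
          · exact Or.inl ⟨hx, fun h' => h (Or.inl h')⟩
          · exact Or.inr ⟨hx, fun h' => h (Or.inr h')⟩)
      _ ≤ _ := (measure_union_le _ _).trans (add_le_add hF' hG')
      _ = _ := by rw [← ENNReal.ofReal_add (by positivity) (by positivity), add_halves]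
  · intro x hx
    obtain ⟨U, hU𝓤, hxU⟩ := hCU hx
    obtain ⟨t, ht, htU, htc⟩ := local_compact_nhds ((hU U hU𝓤).1.mem_nhds hxU)
    refine ⟨t, mem_nhdsWithin_of_mem_nhds ht, fun ε hε => ?_⟩
    obtain ⟨F, hF, hFU, h⟩ := (hU U hU𝓤).2 t htc htU ε hε
    exact ⟨F, hF, hFU.trans (subset_sUnion_of_mem hU𝓤), h⟩

theorem isClosed_diam_le {X : Type*} (K : Set (X → ℝ)) (Y : Set X) (r : ENNReal) :
    IsClosed {g : K | Metric.ediam ((g : X → ℝ) '' Y) ≤ r} := by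
  have : {g : K | Metric.ediam ((g : X → ℝ) '' Y) ≤ r} =
      ⋂ (x ∈ Y) (y ∈ Y), {g : K | edist ((g : X → ℝ) x) ((g : X → ℝ) y) ≤ r} := by
    ext g
    simp [Metric.ediam_le_iff]
  rw [this]
  have hc : ∀ x, Continuous fun g : K => (g : X → ℝ) x :=
    fun x => (continuous_apply x).comp continuous_subtype_val
  exact isClosed_biInter fun x _ => isClosed_biInter fun y _ =>
    isClosed_le ((hc x).edist (hc y)) continuous_const

open TopologicalSpace in
theorem exists_basis_small {X : Type*} [TopologicalSpace X] [SecondCountableTopology X]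
    (K : Set (X → ℝ))
    [MeasurableSpace K] [BorelSpace K] (μ : Measure K) [IsProbabilityMeasure μ]
    (Y : Set X) (x : X) (r : ENNReal)
    (h : μ {g : K | r ≤ osc (g : X → ℝ) Y x} < r) :
    ∃ V ∈ countableBasis X, x ∈ V ∧
      μ {g : K | Metric.ediam ((g : X → ℝ) '' (V ∩ Y)) ≤ r}ᶜ < r := by
  let ι := {V : Set X // V ∈ countableBasis X ∧ x ∈ V}
  have hcι : Countable ι := ((countable_countableBasis X).mono (fun V hV => hV.1)).to_subtype
  obtain ⟨V₀, hV₀, hxV₀, -⟩ := (isBasis_countableBasis X).exists_subset_of_mem_open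
    (mem_univ x) isOpen_univ
  let s : ι → Set K := fun V => {g : K | Metric.ediam ((g : X → ℝ) '' (V.1 ∩ Y)) ≤ r}ᶜ
  have hs : ∀ V, MeasurableSet (s V) := fun V => (isClosed_diam_le K _ r).measurableSet.compl
  have hd : Directed (· ⊇ ·) s := by
    intro V W
    obtain ⟨Z, hZ, hxZ, hZs⟩ := (isBasis_countableBasis X).exists_subset_of_mem_open
      (show x ∈ V.1 ∩ W.1 from ⟨V.2.2, W.2.2⟩)
      ((isOpen_of_mem_countableBasis V.2.1).inter (isOpen_of_mem_countableBasis W.2.1))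
    refine ⟨⟨Z, hZ, hxZ⟩, ?_, ?_⟩
    · refine compl_subset_compl.2 fun g hg => le_trans (Metric.ediam_mono (image_mono ?_)) hg
      exact inter_subset_inter_left _ (hZs.trans inter_subset_left)
    · refine compl_subset_compl.2 fun g hg => le_trans (Metric.ediam_mono (image_mono ?_)) hg
      exact inter_subset_inter_left _ (hZs.trans inter_subset_right)
  have hm := Directed.measure_iInter (μ := μ) (fun V => (hs V).nullMeasurableSet) hd
    ⟨⟨V₀, hV₀, hxV₀⟩, measure_ne_top _ _⟩
  have hsub : (⋂ V, s V) ⊆ {g : K | r ≤ osc (g : X → ℝ) Y x} := by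
    intro g hg
    by_contra hlt
    have hlt : osc (g : X → ℝ) Y x < r := not_le.1 hlt
    simp only [osc, iInf_lt_iff] at hlt
    obtain ⟨U, hU, hxU, hlt⟩ := hlt
    obtain ⟨Z, hZ, hxZ, hZs⟩ := (isBasis_countableBasis X).exists_subset_of_mem_open hxU hU
    refine mem_iInter.1 hg ⟨Z, hZ, hxZ⟩ ?_
    exact (Metric.ediam_mono (image_mono (inter_subset_inter_left _ hZs))).trans hlt.le
  have := (measure_mono hsub).trans_lt h
  rw [hm, iInf_lt_iff] at this
  obtain ⟨V, hV⟩ := this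
  exact ⟨V.1, V.2.1, V.2.2, hV⟩

theorem countablyDetermined_of_approx {K : Type*} [TopologicalSpace K]
    [MeasurableSpace K] [BorelSpace K] (μ : Measure K) [μ.Regular]
    {𝓕 : Set (Set K)} (hc : 𝓕.Countable) (hcl : ∀ F ∈ 𝓕, IsClosed F)
    (h : ∀ U, IsOpen U → ApproxOpen μ 𝓕 U) : CountablyDetermined μ := by
  refine ⟨𝓕, hc, hcl, fun U hU => le_antisymm ?_ ?_⟩
  · refine le_of_forall_lt fun r hr => ?_
    obtain ⟨C, hCU, hC, hrC⟩ := hU.exists_lt_isCompact hr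
    refine hrC.trans_le (ENNReal.le_of_forall_pos_le_add fun ε hε _ => ?_)
    obtain ⟨F, hF, hFU, hF'⟩ := (h U hU).2 C hC hCU ε hε
    calc μ C ≤ μ (F ∪ (C \ F)) := measure_mono (by simp)
      _ ≤ μ F + μ (C \ F) := measure_union_le _ _
      _ ≤ _ := add_le_add (le_iSup₂_of_le F hF (le_iSup (fun _ : F ⊆ U => μ F) hFU)) (by simpa using hF')
  · exact iSup₂_le fun F _ => iSup_le fun hF => measure_mono hF

open TopologicalSpace

theorem countablyDetermined_of_small_oscillation
    {X : Type*} [TopologicalSpace X] [TopologicalSpace.SeparableSpace X]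
    [TopologicalSpace.MetrizableSpace X]
    (K : Set (X → ℝ)) (hK : IsCompact K)
    [MeasurableSpace K] [BorelSpace K]
    (μ : Measure K) [IsProbabilityMeasure μ] [μ.Regular]
    (h : ∀ δ : ℝ, 0 < δ → ∃ Xn : ℕ → Set X, (⋃ n, Xn n) = univ ∧
      ∀ n, ∀ x ∈ Xn n,
        μ {g : K | ENNReal.ofReal δ ≤ osc (g : X → ℝ) (Xn n) x} < ENNReal.ofReal δ) :
    CountablyDetermined μ := by
  classical
  have : SecondCountableTopology X := by
    let _ := metrizableSpaceMetric X
    exact UniformSpace.secondCountable_of_separable X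
  have : CompactSpace K := isCompact_iff_compactSpace.1 hK
  have hcont : ∀ x, Continuous fun g : K => (g : X → ℝ) x :=
    fun x => (continuous_apply x).comp continuous_subtype_val
  have hpos : ∀ m : ℕ, (0 : ℝ) < 1 / ((m : ℝ) + 1) := fun m => by positivity
  choose Xn hXn hosc using fun m : ℕ => h (1 / ((m : ℝ) + 1)) (hpos m)
  let I := ℕ × ℕ × countableBasis X
  have : Countable (countableBasis X) := (countable_countableBasis X).to_subtype
  have hy : ∀ i : I, ∃ y : Option X, ((i.2.2 : Set X) ∩ Xn i.1 i.2.1).Nonempty →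
      ∃ z ∈ (i.2.2 : Set X) ∩ Xn i.1 i.2.1, y = some z := by
    intro i
    by_cases hn : ((i.2.2 : Set X) ∩ Xn i.1 i.2.1).Nonempty
    · exact ⟨some hn.some, fun _ => ⟨_, hn.some_mem, rfl⟩⟩
    · exact ⟨none, fun h => absurd h hn⟩
  choose y hy using hy
  let A : I → Set K := fun i => {g : K | Metric.ediam ((g : X → ℝ) ''
    ((i.2.2 : Set X) ∩ Xn i.1 i.2.1)) ≤ ENNReal.ofReal (1 / ((i.1 : ℝ) + 1))}
  let S1 : I × ℚ → Set K := fun p => {g : K | ∀ z ∈ y p.1, (p.2 : ℝ) ≤ (g : X → ℝ) z}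
  let S2 : I × ℚ → Set K := fun p => {g : K | ∀ z ∈ y p.1, (g : X → ℝ) z ≤ (p.2 : ℝ)}
  let S : Set (Set K) := range A ∪ (range S1 ∪ range S2)
  have hS : S.Countable := (countable_range A).union ((countable_range S1).union (countable_range S2))
  let 𝓕 : Set (Set K) := {F | F ∈ generateSetAlgebra S ∧ IsClosed F}
  have halg : IsSetAlgebra (generateSetAlgebra S) := isSetAlgebra_generateSetAlgebra
  have hF : 𝓕.Countable := (countable_generateSetAlgebra hS).mono fun F hF => hF.1
  have hinter : ∀ s ∈ 𝓕, ∀ t ∈ 𝓕, s ∩ t ∈ 𝓕 := fun s hs t ht =>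
    ⟨halg.inter_mem hs.1 ht.1, hs.2.inter ht.2⟩
  have hunion : ∀ s ∈ 𝓕, ∀ t ∈ 𝓕, s ∪ t ∈ 𝓕 := fun s hs t ht =>
    ⟨halg.union_mem hs.1 ht.1, hs.2.union ht.2⟩
  have hempty : ∅ ∈ 𝓕 := ⟨halg.empty_mem, isClosed_empty⟩
  have huniv : univ ∈ 𝓕 := ⟨halg.univ_mem, isClosed_univ⟩
  have hA : ∀ i, A i ∈ 𝓕 := fun i =>
    ⟨self_subset_generateSetAlgebra (Or.inl ⟨i, rfl⟩), isClosed_diam_le K _ _⟩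
  have key : ∀ x : X, ∀ ε : ℝ, 0 < ε → ∃ A ∈ 𝓕, ∃ z : X,
      (∀ q : ℚ, {g : K | (q : ℝ) ≤ (g : X → ℝ) z} ∈ 𝓕 ∧ {g : K | (g : X → ℝ) z ≤ (q : ℝ)} ∈ 𝓕) ∧
      μ Aᶜ ≤ ENNReal.ofReal ε ∧ ∀ g ∈ A, |(g : X → ℝ) x - (g : X → ℝ) z| ≤ ε := by
    intro x ε hε
    obtain ⟨m, hm⟩ := exists_nat_one_div_lt hε
    obtain ⟨n, hn⟩ := mem_iUnion.1 ((hXn m).symm ▸ mem_univ x)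
    obtain ⟨V, hV, hxV, hμ⟩ := exists_basis_small K μ (Xn m n) x _ (hosc m n x hn)
    let i : I := (m, n, ⟨V, hV⟩)
    obtain ⟨z, hz, hyz⟩ := hy i ⟨x, hxV, hn⟩
    refine ⟨A i, hA i, z, fun q => ⟨⟨self_subset_generateSetAlgebra ?_, ?_⟩,
      ⟨self_subset_generateSetAlgebra ?_, ?_⟩⟩, ?_, ?_⟩
    · exact Or.inr (Or.inl ⟨(i, q), by simp [S1, hyz]⟩)
    · exact isClosed_le continuous_const (hcont z)
    · exact Or.inr (Or.inr ⟨(i, q), by simp [S2, hyz]⟩)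
    · exact isClosed_le (hcont z) continuous_const
    · exact hμ.le.trans (ENNReal.ofReal_le_ofReal hm.le)
    · intro g hg
      have h1 : edist ((g : X → ℝ) x) ((g : X → ℝ) z) ≤ ENNReal.ofReal (1 / ((m : ℝ) + 1)) :=
        (Metric.edist_le_ediam_of_mem (mem_image_of_mem _ (show x ∈ V ∩ Xn m n from ⟨hxV, hn⟩))
          (mem_image_of_mem _ hz)).trans hg
      rw [edist_dist, ENNReal.ofReal_le_ofReal_iff (hpos m).le, Real.dist_eq] at h1
      exact h1.trans hm.le
  refine countablyDetermined_of_approx μ hF (fun F hF => hF.2) ?_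
  have hlo : ∀ (x : X) (a : ℝ), ApproxOpen μ 𝓕 {g : K | a < (g : X → ℝ) x} := by
    intro x a
    refine ⟨isOpen_lt continuous_const (hcont x), fun C hC hCU ε hε => ?_⟩
    rcases C.eq_empty_or_nonempty with rfl | hne
    · exact ⟨∅, hempty, empty_subset _, by simp⟩
    obtain ⟨g₀, hg₀, hmin⟩ := hC.exists_isMinOn hne (hcont x).continuousOn
    have ha : a < (g₀ : X → ℝ) x := hCU hg₀
    set a' := (g₀ : X → ℝ) x
    obtain ⟨B, hB, z, hz, hBμ, hBz⟩ := key x (min ε ((a' - a) / 3))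
      (lt_min hε (by linarith))
    have hδ : min ε ((a' - a) / 3) ≤ (a' - a) / 3 := min_le_right _ _
    obtain ⟨q, hq1, hq2⟩ := exists_rat_btwn
      (show a + (a' - a) / 3 < a' - (a' - a) / 3 by linarith)
    refine ⟨B ∩ _, hinter _ hB _ (hz q).1, ?_, (measure_mono ?_).trans
      (hBμ.trans (ENNReal.ofReal_le_ofReal (min_le_left _ _)))⟩
    · rintro g ⟨hg, hgq⟩
      have h1 := abs_le.1 (hBz g hg)
      have h2 : (q : ℝ) ≤ (g : X → ℝ) z := hgq
      change a < (g : X → ℝ) x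
      linarith [h1.1]
    · rintro g ⟨hgC, hgn⟩ hg
      refine hgn ⟨hg, ?_⟩
      have h1 := abs_le.1 (hBz g hg)
      have h2 : a' ≤ (g : X → ℝ) x := hmin hgC
      change (q : ℝ) ≤ (g : X → ℝ) z
      linarith [h1.2]
  have hhi : ∀ (x : X) (a : ℝ), ApproxOpen μ 𝓕 {g : K | (g : X → ℝ) x < a} := by
    intro x a
    refine ⟨isOpen_lt (hcont x) continuous_const, fun C hC hCU ε hε => ?_⟩
    rcases C.eq_empty_or_nonempty with rfl | hne
    · exact ⟨∅, hempty, empty_subset _, by simp⟩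
    obtain ⟨g₀, hg₀, hmax⟩ := hC.exists_isMaxOn hne (hcont x).continuousOn
    have ha : (g₀ : X → ℝ) x < a := hCU hg₀
    set a' := (g₀ : X → ℝ) x
    obtain ⟨B, hB, z, hz, hBμ, hBz⟩ := key x (min ε ((a - a') / 3))
      (lt_min hε (by linarith))
    have hδ : min ε ((a - a') / 3) ≤ (a - a') / 3 := min_le_right _ _
    obtain ⟨q, hq1, hq2⟩ := exists_rat_btwn
      (show a' + (a - a') / 3 < a - (a - a') / 3 by linarith)
    refine ⟨B ∩ _, hinter _ hB _ (hz q).2, ?_, (measure_mono ?_).trans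
      (hBμ.trans (ENNReal.ofReal_le_ofReal (min_le_left _ _)))⟩
    · rintro g ⟨hg, hgq⟩
      have h1 := abs_le.1 (hBz g hg)
      have h2 : (g : X → ℝ) z ≤ (q : ℝ) := hgq
      change (g : X → ℝ) x < a
      linarith [h1.2]
    · rintro g ⟨hgC, hgn⟩ hg
      refine hgn ⟨hg, ?_⟩
      have h1 := abs_le.1 (hBz g hg)
      have h2 : (g : X → ℝ) x ≤ a' := hmax hgC
      change (g : X → ℝ) z ≤ (q : ℝ)
      linarith [h1.1]
  let T : TopologicalSpace K :=
    { IsOpen := ApproxOpen μ 𝓕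
      isOpen_univ := ⟨isOpen_univ, fun C _ _ ε _ => ⟨univ, huniv, subset_rfl, by simp⟩⟩
      isOpen_inter := fun U V hU hV => hU.inter hinter hV
      isOpen_sUnion := fun 𝓤 h𝓤 => ApproxOpen.sUnion hempty hunion h𝓤 }
  suffices hT : T ≤ instTopologicalSpaceSubtype from fun U hU => hT U hU
  rw [← continuous_id_iff_le]
  refine continuous_induced_rng.2 ?_
  refine (@continuous_pi_iff K X (fun _ => ℝ) T _ _).2 fun x => ?_
  refine (@OrderTopology.continuous_iff ℝ K _ _ _ T _).2 fun a => ⟨hlo x a, hhi x a⟩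
end

section
/- Let X be a separable metrizable space, K ⊆ ℝ^X a compact space (with the pointwise topology), and μ a Radon probability measure on K. Suppose there is a decomposition X = ⋃_{n∈ω} X_n such that for every n and every x ∈ X_n, the restriction g|X_n is continuous at x for μ-almost all g ∈ K. Then μ is countably determined. -/
open MeasureTheory Set

theorem countablyDetermined_of_ae_continuous_restrictions
    {X : Type*} [TopologicalSpace X] [TopologicalSpace.SeparableSpace X]
    [TopologicalSpace.MetrizableSpace X]
    (K : Set (X → ℝ)) (hK : IsCompact K)
    [MeasurableSpace K] [BorelSpace K]
    (μ : Measure K) [IsProbabilityMeasure μ] [μ.Regular]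
    (h : ∃ Xn : ℕ → Set X, (⋃ n, Xn n) = univ ∧
      ∀ n, ∀ x ∈ Xn n, ∀ᵐ g ∂μ, ContinuousWithinAt (g.val : X → ℝ) (Xn n) x) :
    CountablyDetermined μ := by
  classical
  obtain ⟨Xn, hcov, hc⟩ := h
  let : MetricSpace X := TopologicalSpace.metrizableSpaceMetric X
  have : SecondCountableTopology X := UniformSpace.secondCountable_of_separable X
  have : CompactSpace K := isCompact_iff_compactSpace.mp hK
  let P := ℕ × TopologicalSpace.countableBasis X × ℚ × ℚ
  have : Countable (TopologicalSpace.countableBasis X) :=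
    (TopologicalSpace.countable_countableBasis X).to_subtype
  have : Countable P := inferInstanceAs (Countable (ℕ × _ × ℚ × ℚ))
  let F : P → Set K := fun p =>
    {g | ∀ x ∈ Xn p.1 ∩ (p.2.1 : Set X), g.val x ∈ Icc (p.2.2.1 : ℝ) (p.2.2.2 : ℝ)}
  have hF : ∀ p, IsClosed (F p) := by
    intro p
    have : F p = ⋂ x ∈ Xn p.1 ∩ (p.2.1 : Set X),
        (fun g : K => g.val x) ⁻¹' Icc (p.2.2.1 : ℝ) (p.2.2.2 : ℝ) := by
      ext g
      simp only [F, mem_ofPred_eq, mem_iInter, mem_preimage]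
    rw [this]
    exact isClosed_biInter fun x _ =>
      isClosed_Icc.preimage ((continuous_apply x).comp continuous_subtype_val)
  let G : Finset (Finset P) → Set K := fun T => ⋃ t ∈ T, ⋂ p ∈ t, F p
  have hG : ∀ T, IsClosed (G T) := fun T =>
    T.finite_toSet.isClosed_biUnion fun t _ => isClosed_biInter fun p _ => hF p
  refine ⟨range G, countable_range G, ?_, ?_⟩
  · rintro _ ⟨T, rfl⟩
    exact hG T
  intro U hU
  refine le_antisymm ?_ (iSup_le fun A => iSup_le fun _ => iSup_le fun hA => measure_mono hA)
  let S := {T : Finset (Finset P) // G T ⊆ U}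
  let W : Set K := ⋃ T : S, G T.1
  have hdir : Directed (· ⊆ ·) (fun T : S => G T.1) := by
    intro T₁ T₂
    have hu : G (T₁.1 ∪ T₂.1) = G T₁.1 ∪ G T₂.1 := Finset.set_biUnion_union _ _ _
    refine ⟨⟨T₁.1 ∪ T₂.1, ?_⟩, ?_, ?_⟩
    · rw [hu]
      exact union_subset T₁.2 T₂.2
    · change G T₁.1 ⊆ G (T₁.1 ∪ T₂.1)
      rw [hu]
      exact subset_union_left
    · change G T₂.1 ⊆ G (T₁.1 ∪ T₂.1)
      rw [hu]
      exact subset_union_right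
  have hWm : MeasurableSet W := MeasurableSet.iUnion fun T => (hG T.1).measurableSet
  have hW : μ W ≤ ⨆ (A : Set K) (_ : A ∈ range G) (_ : A ⊆ U), μ A := by
    rw [hdir.measure_iUnion]
    refine iSup_le fun T => ?_
    exact le_iSup_of_le (G T.1) (le_iSup_of_le (mem_range_self _) (le_iSup_of_le T.2 le_rfl))
  -- locally, The part of U outside W is null
  have hloc : ∀ g₀ ∈ U, ∃ B : Set K, IsOpen B ∧ g₀ ∈ B ∧ μ (B \ W) = 0 := by
    intro g₀ hg₀
    obtain ⟨U', hU', rfl⟩ := isOpen_induced_iff.mp hU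
    obtain ⟨I, u, hu, hsub⟩ := isOpen_pi_iff.mp hU' g₀.val hg₀
    have hN : ∀ x : X, ∃ n, x ∈ Xn n := fun x => mem_iUnion.mp (hcov ▸ mem_univ x)
    choose N hN using hN
    refine ⟨{g : K | ∀ x ∈ I, g.val x ∈ u x}, ?_, fun x hx => (hu x hx).2, ?_⟩
    · have : {g : K | ∀ x ∈ I, g.val x ∈ u x} = ⋂ x ∈ I, (fun g : K => g.val x) ⁻¹' u x := by
        ext g
        simp
      rw [this]
      exact isOpen_biInter_finset fun x hx =>
        (hu x hx).1.preimage ((continuous_apply x).comp continuous_subtype_val)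
    · have hae : ∀ᵐ g ∂μ, ∀ x ∈ I, ContinuousWithinAt (g.val : X → ℝ) (Xn (N x)) x :=
        (ae_ball_iff I.countable_toSet).mpr fun x _ => hc (N x) x (hN x)
      refine measure_mono_null ?_ (ae_iff.mp hae)
      rintro g ⟨hgB, hgW⟩ hgc
      apply hgW
      have key : ∀ x ∈ I, ∃ p : P, g ∈ F p ∧ ∀ f ∈ F p, f.val x ∈ u x := by
        intro x hx
        obtain ⟨ε, hε, hball⟩ := Metric.isOpen_iff.mp (hu x hx).1 (g.val x) (hgB x hx)
        obtain ⟨c, hc1, hc2⟩ := exists_rat_btwn (sub_lt_self (g.val x) hε)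
        obtain ⟨d, hd1, hd2⟩ := exists_rat_btwn (lt_add_of_pos_right (g.val x) hε)
        have hev := hgc x hx (Icc_mem_nhds hc2 hd1)
        obtain ⟨O, hO, hOs⟩ := mem_nhdsWithin_iff_exists_mem_nhds_inter.mp hev
        obtain ⟨V, hV, hxV, hVO⟩ :=
          (TopologicalSpace.isBasis_countableBasis X).mem_nhds_iff.mp hO
        refine ⟨(N x, ⟨V, hV⟩, c, d), ?_, ?_⟩
        · rintro y ⟨hy1, hy2⟩
          exact hOs ⟨hVO hy2, hy1⟩
        · intro f hf
          have := hf x ⟨hN x, hxV⟩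
          apply hball
          rw [Real.ball_eq_Ioo]
          exact ⟨hc1.trans_le this.1, this.2.trans_lt hd2⟩
      choose p hp1 hp2 using key
      obtain ⟨T, hGt⟩ : ∃ T, G T = ⋂ x : I, F (p x.1 x.2) := by
        refine ⟨{I.attach.image fun x => p x.1 x.2}, ?_⟩
        ext f
        simp only [G, Finset.mem_singleton, iUnion_iUnion_eq_left, mem_iInter, Finset.mem_image]
        exact ⟨fun h x => h _ ⟨x, Finset.mem_attach _ _, rfl⟩, fun h i ⟨x, _, e⟩ => e ▸ h x⟩
      refine mem_iUnion.mpr ⟨⟨T, ?_⟩, ?_⟩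
      · rw [hGt]
        intro f hf
        apply hsub
        intro x hx
        exact hp2 x hx f (mem_iInter.mp hf ⟨x, hx⟩)
      · change g ∈ G T
        rw [hGt]
        exact mem_iInter.mpr fun x => hp1 x.1 x.2
  have hnull : μ (U \ W) = 0 := by
    by_contra hne
    obtain ⟨C, hCs, hC, hpos⟩ := (hU.measurableSet.diff hWm).exists_lt_isCompact_of_ne_top
      (measure_ne_top μ _) (pos_iff_ne_zero.mpr hne)
    refine hpos.ne' (hC.measure_zero_of_nhdsWithin fun a ha => ?_)
    obtain ⟨B, hB, haB, hBW⟩ := hloc a (hCs ha).1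
    refine ⟨B ∩ C, ?_, measure_mono_null (t := B \ W) (fun y hy => ⟨hy.1, (hCs hy.2).2⟩) hBW⟩
    exact Filter.inter_mem (mem_nhdsWithin_of_mem_nhds (hB.mem_nhds haB)) self_mem_nhdsWithin
  calc μ U ≤ μ (W ∪ U \ W) := measure_mono (by rw [union_sdiff_self]; exact subset_union_right)
    _ ≤ μ W + μ (U \ W) := measure_union_le _ _
    _ = μ W := by rw [hnull, add_zero]
    _ ≤ _ := hW
end

section
/- Let X be a metric space, K ⊆ ℝ^X a compact space (with the pointwise topology), and μ a Radon probability measure on K. Then for any ε, δ > 0 the set X₀ = {x ∈ X : μ({g ∈ K : osc(g, x) ≥ δ}) ≥ ε} is closed in X. -/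
open MeasureTheory Set

theorem isOpen_lt_diam_image {X : Type*} (K : Set (X → ℝ)) (B : Set X) (c : ENNReal) :
    IsOpen {g : K | c < EMetric.diam (g.val '' B)} := by
  have h : {g : K | c < EMetric.diam (g.val '' B)} =
      ⋃ y ∈ B, ⋃ z ∈ B, {g : K | c < edist (g.val y) (g.val z)} := by
    ext g
    simp only [mem_setOf_eq, mem_iUnion, EMetric.diam, Metric.ediam, lt_iSup_iff,
      exists_prop, exists_mem_image]
  rw [h]
  refine isOpen_biUnion fun y _ => isOpen_biUnion fun z _ => ?_
  refine isOpen_lt continuous_const ?_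
  exact ((continuous_apply y).comp continuous_subtype_val).edist
    ((continuous_apply z).comp continuous_subtype_val)

theorem isClosed_large_oscillation
    {X : Type*} [MetricSpace X]
    (K : Set (X → ℝ)) (hK : IsCompact K)
    [MeasurableSpace K] [BorelSpace K]
    (μ : Measure K) [IsProbabilityMeasure μ] [μ.Regular]
    (ε δ : ℝ) (hε : 0 < ε) (hδ : 0 < δ) :
    IsClosed {x : X |
      ENNReal.ofReal ε ≤ μ {g : K | ENNReal.ofReal δ ≤ osc (g.val : X → ℝ) univ x}} := by
  rw [← closure_subset_iff_isClosed]
  intro x hx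
  obtain ⟨u, hu, hu', hut⟩ := exists_seq_strictMono_tendsto' (ENNReal.ofReal_pos.2 hδ)
  obtain ⟨r, hr, hr', hrt⟩ := exists_seq_strictAnti_tendsto (0 : ℝ)
  set U : ℕ → Set K := fun n => {g : K | u n < EMetric.diam (g.val '' Metric.ball x (r n))}
    with hU
  have hanti : Antitone U := by
    intro m n hmn g hg
    exact ((hu.monotone hmn).trans_lt hg).trans_le
      (Metric.ediam_mono (image_mono (Metric.ball_subset_ball (hr.antitone hmn))))
  have hsub : (⋂ n, U n) ⊆ {g : K | ENNReal.ofReal δ ≤ osc (g.val : X → ℝ) univ x} := by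
    intro g hg
    simp only [mem_setOf_eq, osc, le_iInf_iff]
    intro V hV hxV
    obtain ⟨s, hs, hsV⟩ := Metric.isOpen_iff.1 hV x hxV
    refine le_of_tendsto hut ?_
    filter_upwards [hrt.eventually (gt_mem_nhds hs)] with n hn
    refine (mem_iInter.1 hg n).le.trans (Metric.ediam_mono (image_mono ?_))
    rw [inter_univ]
    exact (Metric.ball_subset_ball hn.le).trans hsV
  refine le_trans ?_ (measure_mono hsub)
  rw [hanti.measure_iInter (fun n => (isOpen_lt_diam_image K _ _).measurableSet.nullMeasurableSet)
    ⟨0, measure_ne_top _ _⟩]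
  refine le_iInf fun n => ?_
  obtain ⟨y, hy, hyX⟩ := mem_closure_iff.1 hx _ Metric.isOpen_ball (Metric.mem_ball_self (hr' n))
  refine le_trans (mem_setOf_eq ▸ hyX) (measure_mono fun g hg => ?_)
  refine (hu' n).2.trans_le (le_trans hg ?_)
  refine (iInf_le_of_le (Metric.ball x (r n)) (iInf_le_of_le Metric.isOpen_ball
    (iInf_le_of_le hy ?_)))
  rw [inter_univ]
end

section
/- Let T be an uncountable separable metrizable space and let 𝒜 ⊆ Fin(T) be a hereditary ccc-family such that ⋃𝒜 = T. Then there is a nonempty countable dense-in-itself set S ⊆ T such that every finite subset of S belongs to 𝒜. -/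
open Set

/-- A subset `S` of a topological space is *dense-in-itself* if it has no isolated
points in its subspace topology, i.e. every point of `S` is an accumulation point of `S`. -/
def DenseInItself {T : Type*} [TopologicalSpace T] (S : Set T) : Prop :=
  ∀ x ∈ S, x ∈ closure (S \ {x})

/-- A family `𝓐` of (finite) subsets of `T` is a *ccc-family* if for every uncountable
pairwise disjoint subfamily `𝓐₀ ⊆ 𝓐` there are distinct `a, b ∈ 𝓐₀` with `a ∪ b ∈ 𝓐`. -/
def IsCCCFamily {T : Type*} (𝓐 : Set (Set T)) : Prop :=
  ∀ 𝓐₀ ⊆ 𝓐, ¬𝓐₀.Countable → 𝓐₀.Pairwise Disjoint →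
    ∃ a ∈ 𝓐₀, ∃ b ∈ 𝓐₀, a ≠ b ∧ a ∪ b ∈ 𝓐

/-- The transfinite part: a countable set `C` outside of which every member of the family
can be extended into every basic open set that it meets. -/
theorem exists_countable_good {T : Type*} (u : ℕ → Set T)
    (𝓐 : Set (Set T)) (hfin : ∀ a ∈ 𝓐, a.Finite)
    (hher : ∀ a ∈ 𝓐, ∀ b ⊆ a, b ∈ 𝓐) (hccc : IsCCCFamily 𝓐) :
    ∃ C : Set T, C.Countable ∧ ∀ a ∈ 𝓐, a ⊆ Cᶜ → ∀ n, (a ∩ u n).Nonempty →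
      ∃ y ∈ u n, y ∉ C ∧ y ∉ a ∧ insert y a ∈ 𝓐 := by
  by_contra! hcon
  have key : ∀ C : Set T, ∃ a : Set T, ∃ n : ℕ, a.Countable ∧ (C.Countable →
      a ∈ 𝓐 ∧ a ⊆ Cᶜ ∧ (a ∩ u n).Nonempty ∧
        ∀ y ∈ u n, y ∉ C → y ∉ a → insert y a ∉ 𝓐) := by
    intro C
    by_cases hC : C.Countable
    · obtain ⟨a, ha, haC, n, hn, h⟩ := hcon C hC
      exact ⟨a, n, (hfin a ha).countable, fun _ => ⟨ha, haC, hn, h⟩⟩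
    · exact ⟨∅, 0, countable_empty, fun h => absurd h hC⟩
  choose g k hg hspec using key
  let ι := (Cardinal.aleph.{0} 1).ord.ToType
  have hIio : ∀ i : ι, (Set.Iio i).Countable := by
    intro i
    have h := Cardinal.mk_Iio_toType_ord_lt i
    rw [← Cardinal.le_aleph0_iff_set_countable]
    rw [← Order.lt_succ_iff, Cardinal.succ_aleph0]
    exact h
  have hunc : ¬ (Set.univ : Set ι).Countable := by
    rw [← Cardinal.le_aleph0_iff_set_countable, not_le, Cardinal.mk_univ, Cardinal.mk_ord_toType]
    exact Cardinal.aleph0_lt_aleph_one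
  have hwf : WellFounded ((· < ·) : ι → ι → Prop) := wellFounded_lt
  let f : ι → Set T := hwf.fix (fun i ih => g (⋃ j, ⋃ h : j < i, ih j h))
  have hf : ∀ i, f i = g (⋃ j, ⋃ _ : j < i, f j) := fun i => hwf.fix_eq _ i
  let C : ι → Set T := fun i => ⋃ j, ⋃ _ : j < i, f j
  have hfC : ∀ i, (f i).Countable := fun i => by rw [hf i]; exact hg _
  have hC : ∀ i, (C i).Countable := fun i => (hIio i).biUnion (fun j _ => hfC j)
  have hS : ∀ i, f i ∈ 𝓐 ∧ f i ⊆ (C i)ᶜ ∧ (f i ∩ u (k (C i))).Nonempty ∧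
        ∀ y ∈ u (k (C i)), y ∉ C i → y ∉ f i → insert y (f i) ∉ 𝓐 := by
    intro i
    have h := hspec (C i) (hC i)
    rw [← hf i] at h
    exact h
  have hmono : ∀ i j, i < j → f i ⊆ C j := fun i j hij x hx =>
    mem_iUnion₂.2 ⟨i, hij, hx⟩
  have hdis : ∀ i j, i < j → Disjoint (f i) (f j) := fun i j hij =>
    disjoint_left.2 fun x hx hx' => (hS j).2.1 hx' (hmono i j hij hx)
  have hdis' : ∀ i j, i ≠ j → Disjoint (f i) (f j) := fun i j hij =>
    (lt_or_gt_of_ne hij).elim (hdis i j) fun h => (hdis j i h).symm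
  have hinj : Function.Injective f := by
    intro i j hij
    by_contra hne
    have h := hdis' i j hne
    rw [← hij, disjoint_self] at h
    obtain ⟨x, hx, -⟩ := (hS i).2.2.1
    rw [h] at hx
    exact hx
  obtain ⟨n, hn⟩ : ∃ n, ¬ {i | k (C i) = n}.Countable := by
    by_contra! h
    apply hunc
    refine (countable_iUnion h).mono fun i _ => mem_iUnion.2 ⟨k (C i), rfl⟩
  have main : ∀ i j, i < j → k (C i) = n → k (C j) = n → f i ∪ f j ∉ 𝓐 := by
    intro i j hij hi hj hU
    obtain ⟨y, hy, hyu⟩ := (hS j).2.2.1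
    rw [hj] at hyu
    have hyC : y ∉ C i := fun hy' => by
      obtain ⟨l, hl, hyl⟩ := mem_iUnion₂.1 hy'
      exact disjoint_left.1 (hdis l j (hl.trans hij)) hyl hy
    refine (hS i).2.2.2 y (hi ▸ hyu) hyC (fun h => disjoint_left.1 (hdis i j hij) h hy) ?_
    refine hher _ hU _ ?_
    exact insert_subset (Or.inr hy) subset_union_left
  obtain ⟨a, ⟨i, hi, rfl⟩, b, ⟨j, hj, rfl⟩, hab, hU⟩ := hccc (f '' {i | k (C i) = n})
    (by rintro _ ⟨i, -, rfl⟩; exact (hS i).1)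
    (fun h => hn (Set.countable_of_injective_of_countable_image hinj.injOn h))
    (by
      rintro _ ⟨i, -, rfl⟩ _ ⟨j, -, rfl⟩ hne
      exact hdis' i j fun h => hne (h ▸ rfl))
  have hij : i ≠ j := fun h => hab (h ▸ rfl)
  rcases lt_or_gt_of_ne hij with h | h
  · exact main i j h hi hj hU
  · exact main j i h hj hi (union_comm (f i) (f j) ▸ hU)

theorem exists_denseInItself_of_ccc_hereditary
    {T : Type*} [TopologicalSpace T] [TopologicalSpace.SeparableSpace T]
    [TopologicalSpace.MetrizableSpace T] [Uncountable T]
    (𝓐 : Set (Set T)) (hfin : ∀ a ∈ 𝓐, a.Finite)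
    (hher : ∀ a ∈ 𝓐, ∀ b ⊆ a, b ∈ 𝓐)
    (hccc : IsCCCFamily 𝓐) (hcov : ⋃₀ 𝓐 = univ) :
    ∃ S : Set T, S.Nonempty ∧ S.Countable ∧ DenseInItself S ∧
      ∀ b ⊆ S, b.Finite → b ∈ 𝓐 := by
  have hsc : SecondCountableTopology T := by
    letI := TopologicalSpace.metrizableSpaceMetric T
    exact UniformSpace.secondCountable_of_separable T
  obtain ⟨B, hBc, -, hB⟩ := TopologicalSpace.exists_countable_basis T
  have hne : B.Nonempty := by
    obtain ⟨x⟩ : Nonempty T := inferInstance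
    obtain ⟨v, hv, -⟩ := hB.exists_subset_of_mem_open (mem_univ x) isOpen_univ
    exact ⟨v, hv⟩
  obtain ⟨u, rfl⟩ := hBc.exists_eq_range hne
  obtain ⟨C, hC, hgood⟩ := exists_countable_good u 𝓐 hfin hher hccc
  obtain ⟨x₀, hx₀⟩ : ∃ x, x ∉ C := by
    by_contra! h
    exact not_countable_univ (hC.mono fun x _ => h x)
  have hstep : ∀ (n : ℕ) (a : {a : Set T // a ∈ 𝓐 ∧ a ⊆ Cᶜ}),
      ∃ b : {a : Set T // a ∈ 𝓐 ∧ a ⊆ Cᶜ}, a.1 ⊆ b.1 ∧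
        ((a.1 ∩ u n).Nonempty → ∃ y ∈ u n, y ∉ a.1 ∧ y ∈ b.1) := by
    rintro n ⟨a, ha, haC⟩
    by_cases h : (a ∩ u n).Nonempty
    · obtain ⟨y, hy, hyC, hya, hins⟩ := hgood a ha haC n h
      exact ⟨⟨insert y a, hins, insert_subset hyC haC⟩, subset_insert _ _,
        fun _ => ⟨y, hy, hya, mem_insert _ _⟩⟩
    · exact ⟨⟨a, ha, haC⟩, Subset.rfl, fun h' => absurd h' h⟩
  choose s hs1 hs2 using hstep
  have hx₀A : {x₀} ∈ 𝓐 := by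
    obtain ⟨a, ha, hxa⟩ : x₀ ∈ ⋃₀ 𝓐 := hcov ▸ mem_univ x₀
    exact hher a ha _ (singleton_subset_iff.2 hxa)
  let F : ℕ → {a : Set T // a ∈ 𝓐 ∧ a ⊆ Cᶜ} := fun n =>
    Nat.rec ⟨{x₀}, hx₀A, singleton_subset_iff.2 hx₀⟩ (fun n a => s n.unpair.1 a) n
  have hF : ∀ n, F (n + 1) = s n.unpair.1 (F n) := fun n => rfl
  have hmono : Monotone fun n => (F n).1 := monotone_nat_of_le_succ fun n => by
    rw [hF]; exact hs1 _ _
  refine ⟨⋃ n, (F n).1, ⟨x₀, mem_iUnion.2 ⟨0, rfl⟩⟩,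
    countable_iUnion fun n => (hfin _ (F n).2.1).countable, ?_, ?_⟩
  · intro x hx
    obtain ⟨m, hm⟩ := mem_iUnion.1 hx
    rw [hB.mem_closure_iff]
    rintro _ ⟨l, rfl⟩ hxl
    have hxn : x ∈ (F (Nat.pair l m)).1 := hmono (Nat.right_le_pair l m) hm
    obtain ⟨y, hyu, hyn, hy⟩ := hs2 l (F (Nat.pair l m)) ⟨x, hxn, hxl⟩
    refine ⟨y, hyu, mem_iUnion.2 ⟨Nat.pair l m + 1, ?_⟩, ?_⟩
    · rw [hF, Nat.unpair_pair]; exact hy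
    · rintro rfl; exact hyn hxn
  · intro b hb hbf
    have : ∃ n, b ⊆ (F n).1 := by
      clear hs2
      induction b, hbf using Set.Finite.induction_on with
      | empty => exact ⟨0, empty_subset _⟩
      | @insert x c _ _ ih =>
        obtain ⟨n, hn⟩ := ih ((subset_insert _ _).trans hb)
        obtain ⟨m, hm⟩ := mem_iUnion.1 (hb (mem_insert _ _))
        exact ⟨max n m, insert_subset (hmono (le_max_right n m) hm)
          (hn.trans (hmono (le_max_left n m)))⟩
    obtain ⟨n, hn⟩ := this
    exact hher _ (F n).2.1 _ hn
end

section
/- Let T be an uncountable separable metrizable space, K a compact Hausdorff space, and μ a Borel probability measure on K. If t ↦ L_t is any mapping from T into the family of compact subsets of K with μ(L_t) > 0 for every t ∈ T, then there exists a nonempty dense-in-itself set S ⊆ T such that ⋂_{t∈S} L_t ≠ ∅. -/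
open MeasureTheory Set

/-- Exhaustion: a family of measurable sets closed under countable unions has an essentially
largest element. -/
lemma exhaustion_aux {K : Type*} [MeasurableSpace K] (μ : Measure K) [IsProbabilityMeasure μ]
    (F : Set (Set K)) (hne : F.Nonempty) (hm : ∀ B ∈ F, MeasurableSet B)
    (hU : ∀ f : ℕ → Set K, (∀ n, f n ∈ F) → (⋃ n, f n) ∈ F) :
    ∃ B ∈ F, ∀ B' ∈ F, μ (B' \ B) = 0 := by
  have hne' : (μ '' F).Nonempty := hne.image _
  obtain ⟨u, -, hu, huF⟩ := exists_seq_tendsto_sSup hne' (OrderTop.bddAbove _)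
  choose f hf hfu using huF
  have hle : sSup (μ '' F) ≤ μ (⋃ n, f n) :=
    le_of_tendsto' hu fun n => by rw [← hfu n]; exact measure_mono (subset_iUnion f n)
  refine ⟨_, hU f hf, fun B' hB' => ?_⟩
  have hmem : (B' ∪ ⋃ n, f n) ∈ F := by
    have := hU (fun n => Nat.casesOn n B' f) (fun n => by cases n <;> simp [hB', hf])
    convert this using 1
    ext x
    simp only [mem_union, mem_iUnion]
    constructor
    · rintro (h | ⟨n, h⟩)
      · exact ⟨0, h⟩
      · exact ⟨n + 1, h⟩
    · rintro ⟨_ | n, h⟩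
      · exact Or.inl h
      · exact Or.inr ⟨n, h⟩
  have h1 : μ (B' ∪ ⋃ n, f n) ≤ μ (⋃ n, f n) :=
    (le_sSup (mem_image_of_mem μ hmem)).trans hle
  have h2 : μ ((B' ∪ ⋃ n, f n) \ ⋃ n, f n) = 0 := by
    rw [measure_sdiff subset_union_right (hm _ (hU f hf)).nullMeasurableSet (measure_ne_top _ _)]
    exact tsub_eq_zero_of_le h1
  rwa [union_sdiff_right] at h2

/-- Essential suprema are attained on countable subfamilies. -/
lemma dominating_aux {T K : Type*} [MeasurableSpace K] (μ : Measure K) [IsProbabilityMeasure μ]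
    (L : T → Set K) (hL : ∀ t, MeasurableSet (L t)) (I : Set T) :
    ∃ D ⊆ I, D.Countable ∧ ∀ t ∈ I, μ (L t \ ⋃ s ∈ D, L s) = 0 := by
  obtain ⟨B, ⟨D, hDI, hD, rfl⟩, hB⟩ := exhaustion_aux μ
    {B | ∃ D ⊆ I, D.Countable ∧ B = ⋃ s ∈ D, L s}
    ⟨_, ∅, empty_subset _, countable_empty, rfl⟩
    (by rintro _ ⟨D, -, hD, rfl⟩; exact MeasurableSet.biUnion hD fun s _ => hL s)
    (by
      intro f hf
      choose D hDI hD hfD using hf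
      refine ⟨⋃ n, D n, iUnion_subset hDI, countable_iUnion hD, ?_⟩
      rw [biUnion_iUnion]
      exact iUnion_congr hfD)
  refine ⟨D, hDI, hD, fun t ht => ?_⟩
  refine hB _ ⟨{t}, by simpa using ht, countable_singleton t, by simp⟩

theorem exists_denseInItself_inter_nonempty
    {T : Type*} [TopologicalSpace T] [TopologicalSpace.SeparableSpace T]
    [TopologicalSpace.MetrizableSpace T] [Uncountable T]
    {K : Type*} [TopologicalSpace K] [CompactSpace K] [T2Space K]
    [MeasurableSpace K] [BorelSpace K]
    (μ : Measure K) [IsProbabilityMeasure μ]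
    (L : T → Set K) (hLcpt : ∀ t, IsCompact (L t)) (hLpos : ∀ t, 0 < μ (L t)) :
    ∃ S : Set T, S.Nonempty ∧ DenseInItself S ∧ (⋂ t ∈ S, L t).Nonempty := by
  have hL : ∀ t, MeasurableSet (L t) := fun t => (hLcpt t).measurableSet
  letI := TopologicalSpace.metrizableSpaceMetric T
  haveI : SecondCountableTopology T := UniformSpace.secondCountable_of_separable T
  have hb := TopologicalSpace.isBasis_countableBasis T
  have hbc := TopologicalSpace.countable_countableBasis T
  set b := TopologicalSpace.countableBasis T
  -- the essentially largest set met by only countably many members indexed in `U`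
  have hB : ∀ U : Set T, ∃ B : Set K, {t ∈ U | μ (L t ∩ B) ≠ 0}.Countable ∧
      ∀ B', MeasurableSet B' → {t ∈ U | μ (L t ∩ B') ≠ 0}.Countable → μ (B' \ B) = 0 := by
    intro U
    obtain ⟨B, hB, hmax⟩ := exhaustion_aux μ
      {B | MeasurableSet B ∧ {t ∈ U | μ (L t ∩ B) ≠ 0}.Countable}
      ⟨∅, by simp⟩ (fun B h => h.1)
      (by
        intro f hf
        refine ⟨MeasurableSet.iUnion fun n => (hf n).1,
          (countable_iUnion fun n => (hf n).2).mono ?_⟩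
        rintro t ⟨htU, ht⟩
        by_contra hcon
        simp only [mem_iUnion, mem_setOf_eq, not_exists, not_and, not_not] at hcon
        apply ht
        rw [inter_iUnion, measure_iUnion_null_iff]
        exact fun n => hcon n htU)
    exact ⟨B, hB.2, fun B' h1 h2 => hmax B' ⟨h1, h2⟩⟩
  choose B hBc hBmax using hB
  set C : Set T := ⋃ U ∈ b, {t ∈ U | μ (L t ∩ B U) ≠ 0} with hC
  have hCc : C.Countable := hbc.biUnion fun U _ => hBc U
  have key : ∀ U ∈ b, ∀ E : Set T, E.Countable → ∃ D ⊆ (U \ C) \ E, D.Countable ∧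
      ∀ t ∈ U \ C, μ (L t \ ⋃ s ∈ D, L s) = 0 := by
    intro U hU E hE
    obtain ⟨D, hDI, hD, hdom⟩ := dominating_aux μ L hL ((U \ C) \ E)
    refine ⟨D, hDI, hD, fun t ht => ?_⟩
    have h1 : μ ((L t \ ⋃ s ∈ D, L s) \ B U) = 0 := by
      apply hBmax U _ ((hL t).diff (MeasurableSet.biUnion hD fun s _ => hL s))
      refine (hCc.union hE).mono ?_
      rintro s ⟨hsU, hs⟩
      by_contra hcon
      rw [mem_union, not_or] at hcon
      apply hs
      refine measure_mono_null ?_ (hdom s ⟨⟨hsU, hcon.1⟩, hcon.2⟩)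
      rintro x ⟨hx, hx'⟩
      exact ⟨hx, hx'.2⟩
    have h2 : μ (L t ∩ B U) = 0 := by
      by_contra h
      exact ht.2 (mem_biUnion hU ⟨ht.1, h⟩)
    refine measure_mono_null ?_ (measure_union_null h1 h2)
    intro x hx
    by_cases hxB : x ∈ B U
    · exact Or.inr ⟨hx.1, hxB⟩
    · exact Or.inl ⟨hx, hxB⟩
  have key2 : ∀ U : Set T, ∃ D₀ D₁ : Set T, U ∈ b → D₀ ⊆ U \ C ∧ D₁ ⊆ U \ C ∧ D₀.Countable ∧
      D₁.Countable ∧ Disjoint D₀ D₁ ∧ (∀ t ∈ U \ C, μ (L t \ ⋃ s ∈ D₀, L s) = 0) ∧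
      (∀ t ∈ U \ C, μ (L t \ ⋃ s ∈ D₁, L s) = 0) := by
    intro U
    by_cases hU : U ∈ b
    · obtain ⟨D₀, h0, h0c, h0d⟩ := key U hU ∅ countable_empty
      obtain ⟨D₁, h1, h1c, h1d⟩ := key U hU D₀ h0c
      refine ⟨D₀, D₁, fun _ => ⟨h0.trans sdiff_subset, h1.trans sdiff_subset, h0c, h1c, ?_,
        h0d, h1d⟩⟩
      exact Set.disjoint_left.2 fun x hx hx' => (h1 hx').2 hx
    · exact ⟨∅, ∅, fun h => absurd h hU⟩
  choose D₀ D₁ hD using key2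
  obtain ⟨t₀, ht₀⟩ : ∃ t₀, t₀ ∉ C := by
    by_contra! h
    exact not_countable_univ (α := T) (hCc.mono fun t _ => h t)
  set D : Set T := {t₀} ∪ ⋃ U ∈ b, (D₀ U ∪ D₁ U) with hDdef
  have hDc : D.Countable := (countable_singleton t₀).union
    (hbc.biUnion fun U hU => (hD U hU).2.2.1.union (hD U hU).2.2.2.1)
  have hDC : ∀ t ∈ D, t ∉ C := by
    rintro t (h | h)
    · rw [mem_singleton_iff.1 h]; exact ht₀
    · simp only [mem_iUnion] at h
      obtain ⟨U, hU, h | h⟩ := h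
      · exact ((hD U hU).1 h).2
      · exact ((hD U hU).2.1 h).2
  set N : Set K := ⋃ t ∈ D, ⋃ U ∈ {U ∈ b | t ∈ U},
    ((L t \ ⋃ s ∈ D₀ U, L s) ∪ (L t \ ⋃ s ∈ D₁ U, L s)) with hN
  have hN0 : μ N = 0 := by
    rw [hN, measure_biUnion_null_iff hDc]
    intro t ht
    rw [measure_biUnion_null_iff (hbc.mono (sep_subset _ _))]
    rintro U ⟨hU, htU⟩
    exact measure_union_null ((hD U hU).2.2.2.2.2.1 t ⟨htU, hDC t ht⟩)
      ((hD U hU).2.2.2.2.2.2 t ⟨htU, hDC t ht⟩)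
  obtain ⟨x, hx, hxN⟩ : ∃ x ∈ L t₀, x ∉ N := by
    by_contra! h
    exact (hLpos t₀).ne' (measure_mono_null h hN0)
  refine ⟨{t ∈ D | x ∈ L t}, ⟨t₀, Or.inl rfl, hx⟩, ?_, x, ?_⟩
  · rintro t ⟨htD, hxt⟩
    rw [hb.mem_closure_iff]
    intro U hU htU
    have hnot : x ∉ (L t \ ⋃ s ∈ D₀ U, L s) ∪ (L t \ ⋃ s ∈ D₁ U, L s) := fun h =>
      hxN (mem_biUnion htD (mem_biUnion (show U ∈ {U ∈ b | t ∈ U} from ⟨hU, htU⟩) h))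
    have h0 : ∃ s ∈ D₀ U, x ∈ L s := by
      by_contra hc
      exact hnot (Or.inl ⟨hxt, by simpa using hc⟩)
    have h1 : ∃ s ∈ D₁ U, x ∈ L s := by
      by_contra hc
      exact hnot (Or.inr ⟨hxt, by simpa using hc⟩)
    obtain ⟨s0, hs0, hx0⟩ := h0
    obtain ⟨s1, hs1, hx1⟩ := h1
    by_cases hst : s0 = t
    · refine ⟨s1, ((hD U hU).2.1 hs1).1, ⟨Or.inr (mem_biUnion hU (Or.inr hs1)), hx1⟩, ?_⟩
      rintro h
      have h' : s1 = t := h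
      exact Set.disjoint_left.1 (hD U hU).2.2.2.2.1 hs0 (by rw [hst, ← h']; exact hs1)
    · exact ⟨s0, ((hD U hU).1 hs0).1, ⟨Or.inr (mem_biUnion hU (Or.inl hs0)), hx0⟩, hst⟩
  · simp only [mem_iInter]
    exact fun t ht => ht.2
end

section
/- Let μ be the standard product probability measure on K = 2^ω and fix a sequence (I_n)_{n≥1} of pairwise disjoint subsets of ω with |I_n| = n+1 for every n ≥ 1. For a finite set I ⊆ ω and φ : I → 2 let C(I,φ) = {x ∈ 2^ω : x(i) = φ(i) for all i ∈ I}, and for t ∈ 2^ω set L_t = 2^ω \ ⋃_{n≥1} C(I_n, t|I_n). Then: (i) μ(L_t) ≥ 1/2 for every t ∈ 2^ω; (ii) every set S ⊆ 2^ω with ⋂_{s∈S} L_s ≠ ∅ is nowhere dense in 2^ω. (Hence the dense-in-itself conclusion in the preceding caliber theorem cannot be strengthened to 'not nowhere dense'.) -/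
open MeasureTheory Set

theorem cantor_example_nowhereDense
    (μ : Measure (ℕ → Bool)) [IsProbabilityMeasure μ]
    (hμ : ∀ (I : Finset ℕ) (φ : ℕ → Bool),
      μ {x : ℕ → Bool | ∀ i ∈ I, x i = φ i} = (1 / 2 : ENNReal) ^ I.card)
    (I : ℕ → Finset ℕ)
    (hdisj : ∀ m n, 1 ≤ m → 1 ≤ n → m ≠ n → Disjoint (I m) (I n))
    (hcard : ∀ n, 1 ≤ n → (I n).card = n + 1)
    (L : (ℕ → Bool) → Set (ℕ → Bool))
    (hL : ∀ t, L t =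
      univ \ ⋃ (n : ℕ) (_ : 1 ≤ n), {x : ℕ → Bool | ∀ i ∈ I n, x i = t i}) :
    (∀ t, (1 / 2 : ENNReal) ≤ μ (L t)) ∧
    (∀ S : Set (ℕ → Bool), (⋂ s ∈ S, L s).Nonempty → IsNowhereDense S) := by
  classical
  constructor
  · intro t
    have hmeas : ∀ n, MeasurableSet {x : ℕ → Bool | ∀ i ∈ I n, x i = t i} := by
      intro n
      have : {x : ℕ → Bool | ∀ i ∈ I n, x i = t i} =
          ⋂ i ∈ I n, (fun x : ℕ → Bool => x i) ⁻¹' {t i} := by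
        ext x; simp
      rw [this]
      exact Finset.measurableSet_biInter _ fun i _ =>
        measurable_pi_apply i (measurableSet_singleton _)
    have hle : μ (⋃ (n : ℕ) (_ : 1 ≤ n), {x : ℕ → Bool | ∀ i ∈ I n, x i = t i}) ≤ 1 / 2 := by
      have hsub : (⋃ (n : ℕ) (_ : 1 ≤ n), {x : ℕ → Bool | ∀ i ∈ I n, x i = t i}) ⊆
          ⋃ n : ℕ, {x : ℕ → Bool | ∀ i ∈ I (n + 1), x i = t i} := by
        intro x hx
        simp only [mem_iUnion] at hx ⊢
        obtain ⟨n, hn, hx⟩ := hx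
        refine ⟨n - 1, ?_⟩
        rwa [Nat.sub_add_cancel hn]
      calc _ ≤ _ := measure_mono hsub
        _ ≤ ∑' n : ℕ, μ {x : ℕ → Bool | ∀ i ∈ I (n + 1), x i = t i} := measure_iUnion_le _
        _ = ∑' n : ℕ, (1 / 2 : ENNReal) ^ (n + 1) * (1 / 2) := by
          congr 1; ext n
          rw [hμ, hcard _ (by omega), pow_succ]
        _ = 1 / 2 := by
          rw [ENNReal.tsum_mul_right]
          simp only [one_div]
          rw [ENNReal.tsum_geometric_add_one]
          simp [ENNReal.one_sub_inv_two, ENNReal.inv_mul_cancel]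
    rw [hL, ← compl_eq_univ_diff, prob_compl_eq_one_sub
      (MeasurableSet.iUnion fun n => MeasurableSet.iUnion fun _ => hmeas n)]
    calc (1 / 2 : ENNReal) = 1 - 1 / 2 := by simp [ENNReal.one_sub_inv_two]
      _ ≤ _ := tsub_le_tsub_left hle 1
  · rintro S ⟨x, hx⟩
    have hST : S ⊆ {s | ∀ n, 1 ≤ n → ∃ i ∈ I n, x i ≠ s i} := by
      intro s hs n hn
      have h := mem_iInter₂.1 hx s hs
      rw [hL] at h
      by_contra! hc
      exact h.2 (mem_iUnion₂.2 ⟨n, hn, hc⟩)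
    have hclosed : IsClosed {s : ℕ → Bool | ∀ n, 1 ≤ n → ∃ i ∈ I n, x i ≠ s i} := by
      have : {s : ℕ → Bool | ∀ n, 1 ≤ n → ∃ i ∈ I n, x i ≠ s i} =
          ⋂ (n : ℕ) (_ : 1 ≤ n), ⋃ i ∈ I n, (fun s : ℕ → Bool => s i) ⁻¹' {b | x i ≠ b} := by
        ext s; simp
      rw [this]
      refine isClosed_iInter fun n => isClosed_iInter fun _ => ?_
      exact (I n).finite_toSet.isClosed_biUnion fun i _ =>
        (isClosed_discrete _).preimage (continuous_apply i)
    rw [IsNowhereDense, eq_empty_iff_forall_notMem]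
    intro y hy
    have hy' := interior_mono (closure_minimal hST hclosed) hy
    have htend : Filter.Tendsto (fun k i => if i ∈ I k then x i else y i) Filter.atTop
        (nhds y) := by
      rw [tendsto_pi_nhds]
      intro i
      apply tendsto_const_nhds.congr'
      by_cases h : ∃ m, 1 ≤ m ∧ i ∈ I m
      · obtain ⟨m, hm, him⟩ := h
        filter_upwards [Filter.eventually_gt_atTop m] with k hk
        rw [if_neg]
        exact fun hik => Finset.disjoint_left.1 (hdisj m k hm (by omega) (by omega)) him hik
      · filter_upwards [Filter.eventually_ge_atTop 1] with k hk
        rw [if_neg]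
        exact fun hik => h ⟨k, hk, hik⟩
    obtain ⟨k, hk, hk1⟩ := ((htend.eventually (isOpen_interior.mem_nhds hy')).and
      (Filter.eventually_ge_atTop 1)).exists
    obtain ⟨i, hi, hne⟩ := interior_subset hk k hk1
    simp [hi] at hne
end

section
/- Let μ be a probability measure on a measurable space K. Suppose {(L^0_ξ, L^1_ξ) : ξ < ω₁} is a family of pairs of disjoint measurable subsets of K such that for some constant ε > 0: (i) μ(L^0_ξ) + μ(L^1_ξ) > 1 − ε/2 for every ξ < ω₁, and (ii) μ(L^0_ξ ∩ L^1_η) ≥ ε whenever ξ, η < ω₁ with ξ ≠ η. Let 𝒜 be the family of those finite sets a ⊆ ω₁ for which {(L^0_ξ, L^1_ξ) : ξ ∈ a} is μ-independent. Then there exist an uncountable set T ⊆ ω₁ and a hereditary ccc-family 𝒜₀ ⊆ 𝒜 consisting of subsets of T such that ⋃𝒜₀ = T. -/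
open MeasureTheory Set

/-- The family of pairs `(L ξ false, L ξ true)`, `ξ ∈ a`, is `μ`-independent: every
intersection `⋂_{ξ ∈ a} L ξ (φ ξ)` has positive `μ`-measure. -/
def MuIndependent {K ι : Type*} [MeasurableSpace K] (μ : Measure K)
    (L : ι → Bool → Set K) (a : Set ι) : Prop :=
  ∀ φ : ι → Bool, 0 < μ (⋂ ξ ∈ a, L ξ (φ ξ))

/-- The sigma-algebra generated by the sets with index below `α`. -/
def SgAlg {K ι : Type*} [LinearOrder ι] (L : ι → Bool → Set K) (α : ι) : MeasurableSpace K :=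
  MeasurableSpace.generateFrom {s | ∃ x < α, ∃ i, s = L x i}

/-- Iterated goodness of a list of indices. -/
def GoodList {K ι : Type*} [MeasurableSpace K] [LinearOrder ι] (μ : Measure K)
    (L : ι → Bool → Set K) : List ι → Set K → Prop
  | [], _ => True
  | α :: b, F => MeasurableSet[SgAlg L α] F ∧ ∃ G, GoodList μ L b G ∧
      ∀ i, ∀ t, MeasurableSet[SgAlg L α] t → t ⊆ F → 0 < μ t → 0 < μ (t ∩ (L α i ∩ G))

lemma SgAlg_mono {K ι : Type*} [LinearOrder ι] (L : ι → Bool → Set K) {α β : ι} (h : α ≤ β) :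
    SgAlg L α ≤ SgAlg L β := by
  apply MeasurableSpace.generateFrom_mono
  rintro s ⟨x, hx, i, rfl⟩
  exact ⟨x, hx.trans_le h, i, rfl⟩

lemma SgAlg_le {K ι : Type*} [m : MeasurableSpace K] [LinearOrder ι] (L : ι → Bool → Set K)
    (hmeas : ∀ ξ i, MeasurableSet (L ξ i)) (α : ι) : SgAlg L α ≤ m := by
  apply MeasurableSpace.generateFrom_le
  rintro s ⟨x, hx, i, rfl⟩
  exact hmeas x i

lemma SgAlg_mem {K ι : Type*} [LinearOrder ι] (L : ι → Bool → Set K) {α β : ι} (h : α < β)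
    (i : Bool) : MeasurableSet[SgAlg L β] (L α i) :=
  MeasurableSpace.measurableSet_generateFrom ⟨α, h, i, rfl⟩

lemma hull_aux {K : Type*} {m : MeasurableSpace K} (μ ν : Measure K) [IsFiniteMeasure μ]
    [IsFiniteMeasure ν] : ∃ Z, MeasurableSet Z ∧ ν Z = 0 ∧
      ∀ t, MeasurableSet t → Disjoint t Z → ν t = 0 → μ t = 0 := by
  have hs := μ.mutuallySingular_singularPart ν
  obtain ⟨S, hS, h1, h2⟩ := hs
  refine ⟨Sᶜ, hS.compl, h2, ?_⟩
  intro t ht hd h0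
  have hdec := μ.haveLebesgueDecomposition_add ν
  rw [hdec, Measure.add_apply]
  have a1 : μ.singularPart ν t = 0 := by
    apply measure_mono_null _ h1
    exact disjoint_compl_right_iff_subset.1 hd
  have a2 : (ν.withDensity (μ.rnDeriv ν)) t = 0 := withDensity_absolutelyContinuous _ _ h0
  rw [a1, a2, add_zero]

lemma hull {K : Type*} {m m0 : MeasurableSpace K} (hm : m ≤ m0) (μ : Measure[m0] K)
    [IsFiniteMeasure μ] (A : Set K) : ∃ Z, MeasurableSet[m] Z ∧ μ (Z ∩ A) = 0 ∧
      ∀ t, MeasurableSet[m] t → Disjoint t Z → μ (t ∩ A) = 0 → μ t = 0 := by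
  obtain ⟨Z, h1, h2, h3⟩ := hull_aux (μ.trim hm) ((μ.restrict A).trim hm)
  refine ⟨Z, h1, ?_, ?_⟩
  · rwa [trim_measurableSet_eq hm h1, Measure.restrict_apply (hm _ h1)] at h2
  · intro t ht hd h0
    have := h3 t ht hd (by
      rwa [trim_measurableSet_eq hm ht, Measure.restrict_apply (hm _ ht)])
    rwa [trim_measurableSet_eq hm ht] at this

lemma ac_aux {K : Type*} {m : MeasurableSpace K} (μ ν : Measure K) [IsFiniteMeasure μ]
    [IsFiniteMeasure ν] (h : μ ≪ ν) (κ : ENNReal) (hκ : 0 < κ) :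
    ∃ δ > 0, ∀ t, ν t < δ → μ t < κ := by
  have e := Measure.withDensity_rnDeriv_eq μ ν h
  have hf : ∫⁻ x, μ.rnDeriv ν x ∂ν ≠ ⊤ := by
    have := Measure.lintegral_rnDeriv h
    rw [this]
    exact measure_ne_top _ _
  obtain ⟨δ, hδ, H⟩ := exists_pos_setLIntegral_lt_of_measure_lt hf hκ.ne'
  refine ⟨δ, hδ, fun t ht => ?_⟩
  have := H t ht
  rwa [← withDensity_apply', e] at this

lemma ac {K : Type*} {m m0 : MeasurableSpace K} (hm : m ≤ m0) (μ : Measure[m0] K)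
    [IsFiniteMeasure μ] (A F : Set K) (hF : MeasurableSet[m] F)
    (h : ∀ t, MeasurableSet[m] t → t ⊆ F → 0 < μ t → 0 < μ (t ∩ A))
    (κ : ENNReal) (hκ : 0 < κ) :
    ∃ δ > 0, ∀ t, MeasurableSet[m] t → t ⊆ F → μ (t ∩ A) < δ → μ t < κ := by
  have hac : (μ.restrict F).trim hm ≪ (μ.restrict A).trim hm := by
    refine Measure.AbsolutelyContinuous.mk fun t ht h0 => ?_
    rw [trim_measurableSet_eq hm ht, Measure.restrict_apply (hm _ ht)] at h0 ⊢
    by_contra hne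
    have := h (t ∩ F) (ht.inter hF) inter_subset_right (pos_iff_ne_zero.2 hne)
    exact this.ne' (measure_mono_null (by gcongr; exact inter_subset_left) h0)
  obtain ⟨δ, hδ, H⟩ := ac_aux _ _ hac κ hκ
  refine ⟨δ, hδ, fun t ht hs hlt => ?_⟩
  have := H t (by rwa [trim_measurableSet_eq hm ht, Measure.restrict_apply (hm _ ht)])
  rwa [trim_measurableSet_eq hm ht, Measure.restrict_apply (hm _ ht),
    inter_eq_left.2 hs] at this

lemma approx_aux' {K : Type*} {m : MeasurableSpace K} (μ : Measure K)
    [IsFiniteMeasure μ] (D : Set (Set K)) (halg : IsSetAlgebra D)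
    (hgen : m = MeasurableSpace.generateFrom D) (s : Set K) (hs : MeasurableSet s)
    (δ : ENNReal) (hδ : 0 < δ) : ∃ A ∈ D, MeasurableSet A ∧ μ (symmDiff s A) < δ := by
  have hden : μ.MeasureDense D :=
    Measure.MeasureDense.of_generateFrom_isSetAlgebra_finite _ halg hgen
  obtain ⟨r, hr, hrδ⟩ : ∃ r : ℝ, 0 < r ∧ ENNReal.ofReal r ≤ δ := by
    refine ⟨(min δ 1).toReal, ENNReal.toReal_pos (lt_min hδ one_pos).ne' (by simp), ?_⟩
    rw [ENNReal.ofReal_toReal (by simp)]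
    exact min_le_left _ _
  obtain ⟨A, hA, hlt⟩ := hden.approx s hs (measure_ne_top _ _) r hr
  exact ⟨A, hA, hden.measurable A hA, hlt.trans_le hrδ⟩

lemma approx_aux {K : Type*} {m m0 : MeasurableSpace K} (hm : m ≤ m0) (μ : Measure[m0] K)
    [IsFiniteMeasure μ] (D : Set (Set K)) (halg : IsSetAlgebra D)
    (hgen : m = MeasurableSpace.generateFrom D) (s : Set K) (hs : MeasurableSet[m] s)
    (δ : ENNReal) (hδ : 0 < δ) : ∃ A ∈ D, μ (symmDiff s A) < δ := by
  obtain ⟨A, hA, hAm, hlt⟩ := approx_aux' (μ.trim hm) D halg hgen s hs δ hδ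
  refine ⟨A, hA, ?_⟩
  rwa [trim_measurableSet_eq hm (MeasurableSet.symmDiff hs hAm)] at hlt

section
variable {K ι : Type*} [MeasurableSpace K] [LinearOrder ι] {μ : Measure K}
  {L : ι → Bool → Set K}

lemma good_sublist {b a : List ι} (hba : b.Sublist a) :
    a.Pairwise (· < ·) → ∀ F, GoodList μ L a F → ∃ F', GoodList μ L b F' ∧
      ∀ t, (∀ x ∈ a, MeasurableSet[SgAlg L x] t) → 0 < μ (t ∩ F) → 0 < μ (t ∩ F') := by
  induction hba with
  | slnil => exact fun _ F h => ⟨F, h, fun t _ h => h⟩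
  | @cons b a α hs ih =>
    intro hp F hF
    rw [List.pairwise_cons] at hp
    obtain ⟨hFm, G, hG, hpos⟩ := hF
    obtain ⟨G', hG', h⟩ := ih hp.2 G hG
    refine ⟨G', hG', fun t ht h0 => h t (fun x hx => ht x (by simp [hx])) ?_⟩
    have := hpos false (t ∩ F) ((ht α (by simp)).inter hFm) inter_subset_right h0
    refine this.trans_le (measure_mono ?_)
    rintro x ⟨⟨a, b⟩, c, d⟩
    exact ⟨a, d⟩
  | @cons_cons b a α hs ih =>
    intro hp F hF
    rw [List.pairwise_cons] at hp
    obtain ⟨hFm, G, hG, hpos⟩ := hF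
    obtain ⟨G', hG', h⟩ := ih hp.2 G hG
    refine ⟨F, ⟨hFm, G', hG', fun i t ht hs h0 => ?_⟩, fun t _ h => h⟩
    have := hpos i t ht hs h0
    rw [← inter_assoc] at this ⊢
    refine h _ (fun x hx => ?_) this
    exact (SgAlg_mono L (hp.1 x hx).le _ ht).inter (SgAlg_mem L (hp.1 x hx) i)

lemma good_indep (φ : ι → Bool) {a : List ι} :
    a.Pairwise (· < ·) → ∀ F, GoodList μ L a F → 
      ∀ t, (∀ x ∈ a, MeasurableSet[SgAlg L x] t) → 0 < μ (t ∩ F) →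
        0 < μ (t ∩ ⋂ x ∈ a, L x (φ x)) := by
  induction a with
  | nil =>
    intro _ F _ t _ h0
    simp only [List.not_mem_nil, iInter_of_empty, iInter_univ, inter_univ]
    exact h0.trans_le (measure_mono inter_subset_left)
  | cons α b ih =>
    intro hp F hF t ht h0
    rw [List.pairwise_cons] at hp
    obtain ⟨hFm, G, hG, hpos⟩ := hF
    have htF := (ht α (by simp)).inter hFm
    have := hpos (φ α) (t ∩ F) htF inter_subset_right h0
    rw [← inter_assoc] at this
    have := ih hp.2 G hG _ (fun x hx => 
      (SgAlg_mono L (hp.1 x hx).le _ htF).inter (SgAlg_mem L (hp.1 x hx) _)) this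
    refine this.trans_le (measure_mono ?_)
    rintro y ⟨⟨⟨h1, h2⟩, h3⟩, h4⟩
    refine ⟨h1, ?_⟩
    simp only [mem_iInter, List.mem_cons] at h4 ⊢
    rintro x (rfl | hx)
    · exact h3
    · exact h4 x hx

lemma good_concat [IsFiniteMeasure μ] (hmeas : ∀ ξ i, MeasurableSet (L ξ i)) (a : List ι) :
    a.Pairwise (· < ·) → ∀ F, GoodList μ L a F → ∀ κ : ENNReal, 0 < κ →
    ∃ δ : ENNReal, 0 < δ ∧ ∀ (b : List ι) (G H N : Set K) (γ : ι), GoodList μ L b G →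
      (∀ x ∈ a, x < γ) → (∀ x ∈ a, MeasurableSet[SgAlg L x] H) → μ N < δ →
      (∀ t, MeasurableSet[SgAlg L γ] t → 0 < μ (t ∩ (H \ N)) → 0 < μ (t ∩ G)) →
      ∃ F' N', GoodList μ L (a ++ b) F' ∧ μ N' < κ ∧
        ∀ t, MeasurableSet[SgAlg L γ] t → (∀ x ∈ a, MeasurableSet[SgAlg L x] t) →
          0 < μ (t ∩ ((F ∩ H) \ N')) → 0 < μ (t ∩ F') := by
  induction a with
  | nil =>
    intro _ F _ κ hκ
    refine ⟨κ, hκ, fun b G H N γ hG _ _ hN h => ⟨G, N, hG, hN, fun t ht _ h0 => h t ht ?_⟩⟩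
    refine h0.trans_le (measure_mono ?_)
    gcongr
    exact inter_subset_right
  | cons α a ih =>
    intro hp F hF κ hκ
    rw [List.pairwise_cons] at hp
    obtain ⟨hFm, G0, hG0, hpos⟩ := hF
    have hle := SgAlg_le L hmeas α
    have hκ2 : 0 < κ / 2 := ENNReal.half_pos hκ.ne'
    have hac := fun i => ac hle μ (L α i ∩ G0) F hFm (hpos i) (κ / 2) hκ2
    choose d hd hd' using hac
    obtain ⟨δ, hδ, hI⟩ := ih hp.2 G0 hG0 (min (d false) (d true)) (lt_min (hd _) (hd _))
    refine ⟨δ, hδ, fun b G H N γ hG hγ hH hN h => ?_⟩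
    obtain ⟨G', N', hG', hN', hh⟩ := hI b G H N γ hG (fun x hx => hγ x (by simp [hx]))
      (fun x hx => hH x (by simp [hx])) hN h
    have hZ := fun i => hull hle μ ((L α i ∩ G0) \ N')
    choose Z hZm hZ0 hZ using hZ
    have hsmall : ∀ i, μ (F ∩ Z i) < κ / 2 := by
      intro i
      apply hd' i _ (hFm.inter (hZm i)) inter_subset_left
      calc μ (F ∩ Z i ∩ (L α i ∩ G0)) ≤ μ (Z i ∩ ((L α i ∩ G0) \ N') ∪ N') := by
            apply measure_mono
            rintro y ⟨⟨h1, h2⟩, h3⟩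
            by_cases hy : y ∈ N'
            · exact Or.inr hy
            · exact Or.inl ⟨h2, h3, hy⟩
        _ ≤ _ := measure_union_le _ _
        _ = μ N' := by rw [hZ0, zero_add]
        _ < _ := hN'
        _ ≤ _ := by cases i <;> simp
    have hHα := hH α (by simp)
    refine ⟨(F ∩ H) \ ((F ∩ Z false) ∪ (F ∩ Z true)), (F ∩ Z false) ∪ (F ∩ Z true),
      ⟨?_, G', hG', ?_⟩, ?_, fun t _ _ h0 => h0⟩
    · exact (hFm.inter hHα).diff ((hFm.inter (hZm _)).union (hFm.inter (hZm _)))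
    · intro i t ht hs h0
      rw [← inter_assoc]
      refine hh _ ?_ ?_ ?_
      · exact (SgAlg_mono L (hγ α (by simp)).le _ ht).inter (SgAlg_mem L (hγ α (by simp)) i)
      · exact fun x hx =>
          (SgAlg_mono L (hp.1 x hx).le _ ht).inter (SgAlg_mem L (hp.1 x hx) _)
      · have hdis : Disjoint t (Z i) := by
          rw [Set.disjoint_left]
          intro y hy hz
          have := hs hy
          refine this.2 ?_
          cases i
          · exact Or.inl ⟨this.1.1, hz⟩
          · exact Or.inr ⟨this.1.1, hz⟩
        have : 0 < μ (t ∩ ((L α i ∩ G0) \ N')) := by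
          rw [pos_iff_ne_zero]
          intro h00
          exact h0.ne' (hZ i t ht hdis h00)
        refine this.trans_le (measure_mono ?_)
        rintro y ⟨h1, ⟨h2, h3⟩, h4⟩
        exact ⟨⟨h1, h2⟩, ⟨h3, (hs h1).1.2⟩, h4⟩
    · calc _ ≤ _ := measure_union_le _ _
        _ < κ / 2 + κ / 2 := ENNReal.add_lt_add (hsmall _) (hsmall _)
        _ = κ := ENNReal.add_halves κ

lemma bdd_of_countable [Uncountable ι] (hc : ∀ x : ι, (Iio x).Countable) (S : Set ι)
    (hS : S.Countable) : ∃ b, ∀ x ∈ S, x < b := by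
  have h : (⋃ x ∈ S, Iic x).Countable := hS.biUnion fun x _ => by
    rw [← Iio_insert]
    exact (hc x).insert x
  by_contra! hcon
  refine not_countable_univ (α := ι) (h.mono fun b _ => ?_)
  obtain ⟨x, hx, hb⟩ := hcon b
  exact mem_biUnion hx hb

lemma fodor [IsFiniteMeasure μ] [WellFoundedLT ι] [Uncountable ι]
    (hc : ∀ x : ι, (Iio x).Countable) (hmeas : ∀ ξ i, MeasurableSet (L ξ i))
    (H : ι → Set K) (hH : ∀ η, MeasurableSet[SgAlg L η] (H η)) (δ : ENNReal) (hδ : 0 < δ) :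
    ∃ β A, MeasurableSet[SgAlg L β] A ∧ ¬ {η | μ (symmDiff (H η) A) < δ}.Countable := by
  classical
  by_contra! hcon
  let C : ι → Set (Set K) := fun β => generateSetAlgebra {s | ∃ x < β, ∃ i, s = L x i}
  have hCc : ∀ β, (C β).Countable := by
    intro β
    apply countable_generateSetAlgebra
    have : {s | ∃ x < β, ∃ i, s = L x i} = ⋃ x ∈ Iio β, range (L x) := by
      ext s
      simp [eq_comm]
    rw [this]
    exact (hc β).biUnion fun x _ => countable_range _
  have hCgen : ∀ β, MeasurableSpace.generateFrom (C β) = SgAlg L β := fun β =>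
    generateFrom_generateSetAlgebra_eq
  have hCm : ∀ β, ∀ A ∈ C β, MeasurableSet[SgAlg L β] A := by
    intro β A hA
    rw [← hCgen]
    exact MeasurableSpace.measurableSet_generateFrom hA
  have hCmono : ∀ β γ, β ≤ γ → C β ⊆ C γ := by
    intro β γ h
    apply generateSetAlgebra_mono
    rintro s ⟨x, hx, i, rfl⟩
    exact ⟨x, hx.trans_le h, i, rfl⟩
  have hstep : ∀ β, ∃ β', β < β' ∧ ∀ A ∈ C β, ∀ η, μ (symmDiff (H η) A) < δ → η < β' := by
    intro β
    obtain ⟨b, hb⟩ := bdd_of_countable hc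
      (insert β (⋃ A ∈ C β, {η | μ (symmDiff (H η) A) < δ})) 
      (((hCc β).biUnion fun A hA => hcon β A (hCm β A hA)).insert β)
    exact ⟨b, hb β (mem_insert _ _), fun A hA η h => 
      hb η (mem_insert_of_mem _ (mem_biUnion hA h))⟩
  choose f hf1 hf2 using hstep
  obtain ⟨x0⟩ : Nonempty ι := inferInstance
  let lam : ℕ → ι := fun n => f^[n] x0
  have hlam : ∀ n, lam (n + 1) = f (lam n) := fun n => Function.iterate_succ_apply' _ _ _
  have hmono : Monotone lam := monotone_nat_of_le_succ fun n => by
    rw [hlam]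
    exact (hf1 _).le
  obtain ⟨b, hb⟩ := bdd_of_countable hc (range lam) (countable_range _)
  let l := WellFounded.min (wellFounded_lt (α := ι)) {b | ∀ n, lam n ≤ b}
    ⟨b, fun n => (hb _ ⟨n, rfl⟩).le⟩
  have hl1 : ∀ n, lam n ≤ l := WellFounded.min_mem (wellFounded_lt (α := ι)) {b | ∀ n, lam n ≤ b} _
  have hl2 : ∀ x < l, ∃ n, x < lam n := by
    intro x hx
    by_contra! hcon
    exact WellFounded.not_lt_min (wellFounded_lt (α := ι)) {b | ∀ n, lam n ≤ b} hcon hx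
  let D : Set (Set K) := ⋃ n, C (lam n)
  have halg : IsSetAlgebra D := by
    have hC : ∀ n, IsSetAlgebra (C (lam n)) := fun n => isSetAlgebra_generateSetAlgebra
    constructor
    · exact mem_iUnion.2 ⟨0, (hC 0).empty_mem⟩
    · intro s hs
      obtain ⟨n, hn⟩ := mem_iUnion.1 hs
      exact mem_iUnion.2 ⟨n, (hC n).compl_mem hn⟩
    · intro s t hs ht
      obtain ⟨n, hn⟩ := mem_iUnion.1 hs
      obtain ⟨k, hk⟩ := mem_iUnion.1 ht
      exact mem_iUnion.2 ⟨max n k, (hC _).union_mem 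
        (hCmono _ _ (hmono (le_max_left _ _)) hn) (hCmono _ _ (hmono (le_max_right _ _)) hk)⟩
  have hgen : SgAlg L l = MeasurableSpace.generateFrom D := by
    apply le_antisymm
    · apply MeasurableSpace.generateFrom_le
      rintro s ⟨x, hx, i, rfl⟩
      obtain ⟨n, hn⟩ := hl2 x hx
      apply MeasurableSpace.measurableSet_generateFrom
      exact mem_iUnion.2 ⟨n, self_subset_generateSetAlgebra ⟨x, hn, i, rfl⟩⟩
    · apply MeasurableSpace.generateFrom_le
      intro s hs
      obtain ⟨n, hn⟩ := mem_iUnion.1 hs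
      exact SgAlg_mono L (hl1 n) _ (hCm _ _ hn)
  have hle := SgAlg_le L hmeas l
  obtain ⟨A, hA, hlt⟩ := approx_aux hle μ D halg hgen (H l) (hH l) δ hδ
  obtain ⟨n, hn⟩ := mem_iUnion.1 hA
  have := hf2 _ A hn l hlt
  rw [← hlam] at this
  exact (hl1 _).not_gt this

end
theorem exists_ccc_family_of_independent_sets
    {K : Type*} [MeasurableSpace K] (μ : Measure K) [IsProbabilityMeasure μ]
    {ι : Type*} (hι : Cardinal.mk ι = Cardinal.aleph 1)
    (L : ι → Bool → Set K) (hmeas : ∀ ξ i, MeasurableSet (L ξ i))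
    (hdisj : ∀ ξ, Disjoint (L ξ false) (L ξ true))
    (ε : ℝ) (hε : 0 < ε)
    (h1 : ∀ ξ, 1 - ε / 2 < (μ (L ξ false)).toReal + (μ (L ξ true)).toReal)
    (h2 : ∀ ξ η, ξ ≠ η → ε ≤ (μ (L ξ false ∩ L η true)).toReal) :
    ∃ T : Set ι, ¬T.Countable ∧
      ∃ 𝓐₀ : Set (Set ι),
        (∀ a ∈ 𝓐₀, a.Finite ∧ a ⊆ T ∧ MuIndependent μ L a) ∧
        (∀ a ∈ 𝓐₀, ∀ b ⊆ a, b ∈ 𝓐₀) ∧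
        IsCCCFamily 𝓐₀ ∧ ⋃₀ 𝓐₀ = T := by
  classical
  -- a well-order of type ω₁
  have hι' : Cardinal.mk ι = Cardinal.mk (Cardinal.aleph 1).ord.ToType := by
    rw [hι, Cardinal.mk_ord_toType]
  obtain ⟨e⟩ := Cardinal.eq.1 hι'
  letI : LinearOrder ι := LinearOrder.lift' e e.injective
  have hlt : ∀ x y : ι, x < y ↔ e x < e y := fun x y => Iff.rfl
  haveI : WellFoundedLT ι := ⟨InvImage.wf e wellFounded_lt⟩
  haveI : Uncountable ι := by
    rw [← Cardinal.aleph0_lt_mk_iff, hι]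
    exact Cardinal.aleph0_lt_aleph_one
  have hc : ∀ x : ι, (Iio x).Countable := by
    intro x
    have h : (Iio (e x)).Countable := by
      rw [← Cardinal.le_aleph0_iff_set_countable, ← Order.lt_succ_iff, Cardinal.succ_aleph0]
      exact Cardinal.mk_Iio_toType_ord_lt (e x)
    exact h.preimage e.injective
  let 𝓐 : Set (Set ι) := {a | ∃ l : List ι, l.Pairwise (· < ·) ∧ {x | x ∈ l} = a ∧
    ∃ F, GoodList μ L l F ∧ 0 < μ F}
  have hher : ∀ a ∈ 𝓐, ∀ b ⊆ a, b ∈ 𝓐 := by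
    rintro a ⟨l, hl, rfl, F, hF, h0⟩ b hb
    have hsub : (l.filter (· ∈ b)).Sublist l := List.filter_sublist
    obtain ⟨F', hF', h⟩ := good_sublist hsub hl F hF
    refine ⟨l.filter (· ∈ b), hl.sublist hsub, ?_, F', hF', ?_⟩
    · ext x
      simp only [List.mem_filter, decide_eq_true_eq, mem_setOf_eq]
      exact ⟨fun h => h.2, fun h => ⟨hb h, h⟩⟩
    · have := h univ (fun x _ => MeasurableSet.univ) (by simpa using h0)
      simpa using this
  have hT : ¬ (⋃₀ 𝓐).Countable := by
    intro hcount
    have hle := SgAlg_le L hmeas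
    have hZ := fun ξ i => hull (hle ξ) μ (L ξ i)
    choose Z hZm hZ0 hZ using hZ
    have hnull : ∀ ξ, ξ ∉ ⋃₀ 𝓐 → μ ((Z ξ false)ᶜ ∩ (Z ξ true)ᶜ) = 0 := by
      intro ξ hξ
      by_contra hne
      refine hξ ⟨{ξ}, ⟨[ξ], by simp, by ext; simp, (Z ξ false)ᶜ ∩ (Z ξ true)ᶜ,
        ⟨(hZm _ _).compl.inter (hZm _ _).compl, univ, trivial, ?_⟩, pos_iff_ne_zero.2 hne⟩,
        rfl⟩
      intro i t ht hs h0
      rw [inter_univ, pos_iff_ne_zero]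
      intro h00
      refine h0.ne' (hZ ξ i t ht ?_ h00)
      rw [← subset_compl_iff_disjoint_right]
      cases i
      · exact hs.trans inter_subset_left
      · exact hs.trans inter_subset_right
    have hε2 : 0 < ENNReal.ofReal (ε / 2) := ENNReal.ofReal_pos.2 (by linarith)
    obtain ⟨β, A, hA, hU⟩ := fodor (μ := μ) hc hmeas (fun η => (Z η false)ᶜ)
      (fun η => (hZm η false).compl) _ hε2
    have hU' : ¬ ({η | μ (symmDiff (Z η false)ᶜ A) < ENNReal.ofReal (ε / 2)} \ ⋃₀ 𝓐).Countable :=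
      fun h => hU ((h.union hcount).mono fun x hx => by
        by_cases hx' : x ∈ ⋃₀ 𝓐
        · exact Or.inr hx'
        · exact Or.inl ⟨hx, hx'⟩)
    obtain ⟨ξ, hξ, η, hη, hne⟩ : Set.Nontrivial
        ({η | μ (symmDiff (Z η false)ᶜ A) < ENNReal.ofReal (ε / 2)} \ ⋃₀ 𝓐) := by
      by_contra hnt
      exact hU' (Set.not_nontrivial_iff.1 hnt).countable
    have hlt : μ (L ξ false ∩ L η true) < ENNReal.ofReal ε := by
      calc μ (L ξ false ∩ L η true) ≤ μ ((Z ξ false ∩ L ξ false) ∪ (Z η true ∩ L η true) ∪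
            ((Z η false)ᶜ ∩ (Z η true)ᶜ) ∪
            (symmDiff (Z ξ false)ᶜ A ∪ symmDiff (Z η false)ᶜ A)) := by
            apply measure_mono
            rintro y ⟨h1, h2⟩
            simp only [mem_union, mem_inter_iff, mem_compl_iff, Set.mem_symmDiff]
            tauto
        _ ≤ μ ((Z ξ false ∩ L ξ false) ∪ (Z η true ∩ L η true) ∪
            ((Z η false)ᶜ ∩ (Z η true)ᶜ)) +
            μ (symmDiff (Z ξ false)ᶜ A ∪ symmDiff (Z η false)ᶜ A) := measure_union_le _ _
        _ = μ (symmDiff (Z ξ false)ᶜ A ∪ symmDiff (Z η false)ᶜ A) := by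
            rw [measure_union_null (measure_union_null (hZ0 _ _) (hZ0 _ _)) (hnull η hη.2),
              zero_add]
        _ ≤ _ := measure_union_le _ _
        _ < ENNReal.ofReal (ε / 2) + ENNReal.ofReal (ε / 2) := ENNReal.add_lt_add hξ.1 hη.1
        _ = ENNReal.ofReal ε := by
            rw [← ENNReal.ofReal_add (by linarith) (by linarith), add_halves]
    have := h2 ξ η hne
    rw [ENNReal.lt_ofReal_iff_toReal_lt (measure_ne_top _ _)] at hlt
    linarith
  refine ⟨⋃₀ 𝓐, hT, 𝓐, ?_, hher, ?_, rfl⟩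
  · intro a ha
    refine ⟨?_, subset_sUnion_of_mem ha, ?_⟩
    · obtain ⟨l, hl, rfl, -⟩ := ha
      exact l.finite_toSet
    · obtain ⟨l, hl, rfl, F, hF, h0⟩ := ha
      intro φ
      have := good_indep φ hl F hF univ (fun x _ => MeasurableSet.univ) (by simpa using h0)
      simpa using this
  · intro 𝓓 hsub hunc hdis
    have hdata : ∀ a : Set ι, ∃ (l : List ι) (F : Set K) (δ : ENNReal), a ∈ 𝓓 →
        (l.Pairwise (· < ·) ∧ {x | x ∈ l} = a ∧ GoodList μ L l F ∧ 0 < μ F ∧ 0 < δ ∧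
        ∀ (b : List ι) (G H N : Set K) (γ : ι), GoodList μ L b G →
        (∀ x ∈ l, x < γ) → (∀ x ∈ l, MeasurableSet[SgAlg L x] H) → μ N < δ →
        (∀ t, MeasurableSet[SgAlg L γ] t → 0 < μ (t ∩ (H \ N)) → 0 < μ (t ∩ G)) →
        ∃ F' N', GoodList μ L (l ++ b) F' ∧ μ N' < μ F / 2 ∧
          ∀ t, MeasurableSet[SgAlg L γ] t → (∀ x ∈ l, MeasurableSet[SgAlg L x] t) →
            0 < μ (t ∩ ((F ∩ H) \ N')) → 0 < μ (t ∩ F')) := by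
      intro a
      by_cases ha : a ∈ 𝓓
      · obtain ⟨l, hl, hla, F, hF, h0⟩ := hsub ha
        obtain ⟨δ, hδ, h⟩ := good_concat hmeas l hl F hF (μ F / 2) (ENNReal.half_pos h0.ne')
        exact ⟨l, F, δ, fun _ => ⟨hl, hla, hF, h0, hδ, h⟩⟩
      · exact ⟨[], ∅, 0, fun h => absurd h ha⟩
    choose l F δ hl using hdata
    obtain ⟨n, hn⟩ : ∃ n : ℕ, ¬ {a ∈ 𝓓 | a.Nonempty ∧
        ((n : ENNReal))⁻¹ < min (δ a) (μ (F a) / 2)}.Countable := by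
      by_contra! hcon
      refine hunc (((countable_iUnion hcon).insert ∅).mono fun a ha => ?_)
      rcases a.eq_empty_or_nonempty with rfl | hne
      · exact mem_insert _ _
      · refine mem_insert_of_mem _ ?_
        obtain ⟨-, -, -, h0, hδ, -⟩ := hl a ha
        obtain ⟨n, hn⟩ := ENNReal.exists_inv_nat_lt
          (lt_min hδ (ENNReal.half_pos h0.ne')).ne'
        exact mem_iUnion.2 ⟨n, ha, hne, hn⟩
    have hchoose : ∀ η : ι, ∃ a ∈ 𝓓, a.Nonempty ∧
        ((n : ENNReal))⁻¹ < min (δ a) (μ (F a) / 2) ∧ ∀ x ∈ a, η ≤ x := by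
      intro η
      by_contra! hcon
      have hp : ∀ a : Set ι, ∃ x, a ∈ {a ∈ 𝓓 | a.Nonempty ∧
        ((n : ENNReal))⁻¹ < min (δ a) (μ (F a) / 2)} → x ∈ a ∧ x < η := by
        intro a
        by_cases ha : a ∈ {a ∈ 𝓓 | a.Nonempty ∧
          ((n : ENNReal))⁻¹ < min (δ a) (μ (F a) / 2)}
        · obtain ⟨x, hx⟩ := hcon a ha.1 ha.2.1 ha.2.2
          exact ⟨x, fun _ => hx⟩
        · exact ⟨η, fun h => absurd h ha⟩
      choose p hp using hp
      refine hn (MapsTo.countable_of_injOn (f := p) (t := Iio η) (fun a ha => (hp a ha).2) ?_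
        (hc η))
      intro a ha b hb hab
      by_contra hne
      exact Set.disjoint_left.1 (hdis ha.1 hb.1 hne) (hp a ha).1 (hab ▸ (hp b hb).1)
    choose a ha hane hasm hage using hchoose
    have hle := SgAlg_le L hmeas
    have hZ := fun η => hull (hle η) μ (F (a η))
    choose Z hZm hZ0 hZ using hZ
    obtain ⟨β, H, hH, hU⟩ := fodor (μ := μ) hc hmeas (fun η => (Z η)ᶜ)
      (fun η => (hZm η).compl) ((n : ENNReal))⁻¹ (by simp)
    have hbig : ∀ S : Set ι, S.Countable → ∃ η, μ (symmDiff (Z η)ᶜ H) < ((n : ENNReal))⁻¹ ∧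
        ∀ x ∈ S, x < η := by
      intro S hS
      obtain ⟨b, hb⟩ := bdd_of_countable hc S hS
      by_contra! hcon
      refine hU ((hc b).mono fun η hη => ?_)
      obtain ⟨x, hx, hxη⟩ := hcon η hη
      exact hxη.trans_lt (hb x hx)
    obtain ⟨ξ, hξ, hβξ⟩ := hbig {β} (countable_singleton _)
    obtain ⟨hlp, hla, hlF, hF0, hδ0, hcat⟩ := hl (a ξ) (ha ξ)
    obtain ⟨η, hη, hξη⟩ := hbig (a ξ) (by rw [← hla]; exact (List.finite_toSet _).countable)
    obtain ⟨hlp', hla', hlF', hF0', -, -⟩ := hl (a η) (ha η)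
    have hmem : ∀ x ∈ l (a ξ), x ∈ a ξ := fun x hx => hla ▸ hx
    have hmem' : ∀ x ∈ l (a η), x ∈ a η := fun x hx => hla' ▸ hx
    have hHx : ∀ x ∈ l (a ξ), MeasurableSet[SgAlg L x] H := fun x hx =>
      SgAlg_mono L ((hβξ β rfl).le.trans (hage ξ x (hmem x hx))) _ hH
    obtain ⟨F', N', hF', hN', hfin⟩ := hcat (l (a η)) (F (a η)) H (symmDiff (Z η)ᶜ H) η hlF'
      (fun x hx => hξη x (hmem x hx)) hHx 
      (hη.trans ((hasm ξ).trans_le (min_le_left _ _))) (by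
        intro t ht h0
        rw [pos_iff_ne_zero]
        intro h00
        have hz := hZ η (t ∩ (Z η)ᶜ) (ht.inter (hZm η).compl)
          (by rw [← subset_compl_iff_disjoint_right]; exact inter_subset_right)
          (measure_mono_null (by gcongr; exact inter_subset_left) h00)
        refine h0.ne' (measure_mono_null ?_ hz)
        rintro y ⟨h1, h2, h3⟩
        refine ⟨h1, ?_⟩
        by_contra h4
        exact h3 (Or.inr ⟨h2, h4⟩))
    refine ⟨a ξ, ha ξ, a η, ha η, ?_, l (a ξ) ++ l (a η), ?_, ?_, F', hF', ?_⟩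
    · intro heq
      obtain ⟨x, hx⟩ := hane ξ
      exact (hξη x hx).not_ge (hage η x (heq ▸ hx))
    · rw [List.pairwise_append]
      exact ⟨hlp, hlp', fun x hx y hy => 
        (hξη x (hmem x hx)).trans_le (hage η y (hmem' y hy))⟩
    · have hun : {x | x ∈ l (a ξ) ++ l (a η)} =
          {x | x ∈ l (a ξ)} ∪ {x | x ∈ l (a η)} := by
        ext x
        simp
      rw [hun, hla, hla']
    · have := hfin univ MeasurableSet.univ (fun x _ => MeasurableSet.univ) (by
        rw [univ_inter, pos_iff_ne_zero]
        intro h00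
        have : μ (F (a ξ)) < μ (F (a ξ)) := by
          calc μ (F (a ξ)) ≤ μ ((Z ξ ∩ F (a ξ)) ∪ ((F (a ξ) ∩ H) \ N') ∪
                (N' ∪ symmDiff (Z ξ)ᶜ H)) := by
                apply measure_mono
                intro y hy
                simp only [mem_union, mem_inter_iff, mem_compl_iff, Set.mem_symmDiff,
                  mem_diff]
                tauto
            _ ≤ μ ((Z ξ ∩ F (a ξ)) ∪ ((F (a ξ) ∩ H) \ N')) + μ (N' ∪ symmDiff (Z ξ)ᶜ H) :=
                measure_union_le _ _
            _ = μ (N' ∪ symmDiff (Z ξ)ᶜ H) := by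
                rw [measure_union_null (hZ0 _) h00, zero_add]
            _ ≤ _ := measure_union_le _ _
            _ < μ (F (a ξ)) / 2 + μ (F (a ξ)) / 2 := ENNReal.add_lt_add hN'
                (hξ.trans ((hasm ξ).trans_le (min_le_right _ _)))
            _ = _ := ENNReal.add_halves _
        exact lt_irrefl _ this)
      simpa using this
end

section
/- Let T be an uncountable separable metrizable space and μ a probability measure on a measurable space K. Suppose {(L^0_t, L^1_t) : t ∈ T} is a family of pairs of disjoint measurable subsets of K such that for some constant ε > 0: (i) μ(L^0_t) + μ(L^1_t) > 1 − ε/2 for every t ∈ T, and (ii) μ(L^0_t ∩ L^1_s) > ε whenever t, s ∈ T with t ≠ s. Then there is a nonempty dense-in-itself set S ⊆ T such that the family {(L^0_t, L^1_t) : t ∈ S} is independent. -/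
open MeasureTheory Set

open scoped symmDiff ENNReal

namespace DII

def gen {T K : Type*} (L : T → Bool → Set K) (A : Set T) : Set (Set K) :=
  {s | ∃ t ∈ A, ∃ i, s = L t i}

@[reducible]
def sig {T K : Type*} (L : T → Bool → Set K) (A : Set T) : MeasurableSpace K :=
  MeasurableSpace.generateFrom (gen L A)

def alg {T K : Type*} (L : T → Bool → Set K) (A : Set T) : Set (Set K) :=
  generateSetAlgebra (gen L A)

def Clos {T K : Type*} (L : T → Bool → Set K) (h : List (Set K) → Set T) (A : Set T) : Prop :=
  ∀ l : List (Set K), (∀ C ∈ l, C ∈ alg L A) → h l ⊆ A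

lemma gen_mono {T K : Type*} (L : T → Bool → Set K) {A A' : Set T} (h : A ⊆ A') :
    gen L A ⊆ gen L A' := by
  rintro s ⟨t, ht, i, rfl⟩
  exact ⟨t, h ht, i, rfl⟩

lemma gen_countable {T K : Type*} (L : T → Bool → Set K) {A : Set T} (h : A.Countable) :
    (gen L A).Countable := by
  have : gen L A = ⋃ t ∈ A, range (L t) := by
    ext s
    simp [gen]
  rw [this]
  exact h.biUnion fun t _ => countable_range _

lemma alg_mono {T K : Type*} (L : T → Bool → Set K) {A A' : Set T} (h : A ⊆ A') :
    alg L A ⊆ alg L A' := by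
  intro s hs
  induction hs with
  | base s hs => exact generateSetAlgebra.base s (gen_mono L h hs)
  | empty => exact generateSetAlgebra.empty
  | compl s _ ih => exact generateSetAlgebra.compl s ih
  | union s t _ _ ih1 ih2 => exact generateSetAlgebra.union s t ih1 ih2

lemma sig_mono {T K : Type*} (L : T → Bool → Set K) {A A' : Set T} (h : A ⊆ A') :
    sig L A ≤ sig L A' := MeasurableSpace.generateFrom_mono (gen_mono L h)

lemma alg_iUnion {T K : Type*} (L : T → Bool → Set K) {A : ℕ → Set T} (hA : Monotone A)
    {C : Set K} (hC : C ∈ alg L (⋃ n, A n)) : ∃ n, C ∈ alg L (A n) := by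
  induction hC with
  | base s hs =>
    obtain ⟨t, ht, i, rfl⟩ := hs
    obtain ⟨n, hn⟩ := mem_iUnion.1 ht
    exact ⟨n, generateSetAlgebra.base _ ⟨t, hn, i, rfl⟩⟩
  | empty => exact ⟨0, generateSetAlgebra.empty⟩
  | compl s _ ih =>
    obtain ⟨n, hn⟩ := ih
    exact ⟨n, generateSetAlgebra.compl s hn⟩
  | union s t _ _ ih1 ih2 =>
    obtain ⟨n, hn⟩ := ih1
    obtain ⟨m, hm⟩ := ih2
    exact ⟨max n m, generateSetAlgebra.union s t (alg_mono L (hA (le_max_left n m)) hn)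
      (alg_mono L (hA (le_max_right n m)) hm)⟩

lemma list_iUnion {T K : Type*} (L : T → Bool → Set K) {A : ℕ → Set T} (hA : Monotone A)
    (l : List (Set K)) (hl : ∀ C ∈ l, C ∈ alg L (⋃ n, A n)) :
    ∃ n, ∀ C ∈ l, C ∈ alg L (A n) := by
  induction l with
  | nil => exact ⟨0, by simp⟩
  | cons C l ih =>
    obtain ⟨n, hn⟩ := ih fun C hC => hl C (List.mem_cons_of_mem _ hC)
    obtain ⟨m, hm⟩ := alg_iUnion L hA (hl C List.mem_cons_self)
    refine ⟨max n m, fun D hD => ?_⟩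
    rcases List.mem_cons.1 hD with rfl | hD
    · exact alg_mono L (hA (le_max_right n m)) hm
    · exact alg_mono L (hA (le_max_left n m)) (hn D hD)

lemma exists_clos {T K : Type*} (L : T → Bool → Set K) (h : List (Set K) → Set T)
    (hc : ∀ l, (h l).Countable) : ∃ A : Set T, A.Countable ∧ Clos L h A := by
  let F : Set T → Set T := fun A => A ∪ ⋃ l ∈ {l : List (Set K) | ∀ C ∈ l, C ∈ alg L A}, h l
  have hF : ∀ A, A.Countable → (F A).Countable := by
    intro A hA
    refine hA.union (Set.Countable.biUnion ?_ fun l _ => hc l)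
    have h1 : (alg L A).Countable := countable_generateSetAlgebra (gen_countable L hA)
    have : Countable (alg L A) := h1
    rw [← Subtype.range_coe (s := alg L A), ]
    refine (countable_range (List.map ((↑) : alg L A → Set K))).mono ?_
    intro l hl
    rw [Set.range_list_map_coe]
    simpa using hl
  let A : ℕ → Set T := fun n => F^[n] ∅
  have hs : ∀ n, A (n+1) = F (A n) := fun n => Function.iterate_succ_apply' F n ∅
  have hm : Monotone A := monotone_nat_of_le_succ fun n => by
    rw [hs]; exact subset_union_left
  refine ⟨⋃ n, A n, countable_iUnion fun n => ?_, ?_⟩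
  · induction n with
    | zero => exact countable_empty
    | succ n ih => rw [hs]; exact hF _ ih
  · intro l hl
    obtain ⟨n, hn⟩ := list_iUnion L hm l hl
    refine Subset.trans ?_ (subset_iUnion A (n+1))
    rw [hs]
    refine Subset.trans ?_ subset_union_right
    exact subset_biUnion_of_mem (u := h) hn

lemma sig_le {T K : Type*} [m0 : MeasurableSpace K] (L : T → Bool → Set K)
    (hmeas : ∀ t i, MeasurableSet (L t i)) (A : Set T) : sig L A ≤ m0 := by
  refine MeasurableSpace.generateFrom_le ?_
  rintro s ⟨t, _, i, rfl⟩
  exact hmeas t i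

lemma approx {T K : Type*} [m0 : MeasurableSpace K] (μ : Measure K) [IsProbabilityMeasure μ]
    (L : T → Bool → Set K) (hmeas : ∀ t i, MeasurableSet (L t i)) (A : Set T)
    (B : Set K) (hB : MeasurableSet[sig L A] B) (r : ℝ) (hr : 0 < r) :
    ∃ C ∈ alg L A, μ (B ∆ C) < ENNReal.ofReal r := by
  have hm := sig_le L hmeas A
  have hg : sig L A = MeasurableSpace.generateFrom (alg L A) :=
    (generateFrom_generateSetAlgebra_eq (𝒜 := gen L A)).symm
  have hd := @Measure.MeasureDense.of_generateFrom_isSetAlgebra_finite K (sig L A) (μ.trim hm) (alg L A)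
    inferInstance isSetAlgebra_generateSetAlgebra hg
  obtain ⟨C, hC, h⟩ := @Measure.MeasureDense.approx K (sig L A) _ _ hd B hB (measure_ne_top _ _) r hr
  exact ⟨C, hC, (le_trim hm).trans_lt h⟩

lemma hull {K : Type*} [m0 : MeasurableSpace K] (μ : Measure K) [IsProbabilityMeasure μ]
    (m : MeasurableSpace K) (hm : m ≤ m0) (E : Set K) :
    ∃ B, MeasurableSet[m] B ∧ μ (E \ B) = 0 ∧
      ∀ C, MeasurableSet[m] C → C ⊆ B → μ (C ∩ E) = 0 → μ C = 0 := by
  let ν := (μ.restrict E).trim hm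
  let f := ν.rnDeriv (μ.trim hm)
  have hf : Measurable[m] f := Measure.measurable_rnDeriv _ _
  have hac : ν ≪ μ.trim hm := Measure.AbsolutelyContinuous.trim Measure.restrict_le_self.absolutelyContinuous hm
  have hw : (μ.trim hm).withDensity f = ν := Measure.withDensity_rnDeriv_eq _ _ hac
  have hB : MeasurableSet[m] {x | f x ≠ 0} := (hf (measurableSet_singleton 0)).compl
  have key : ∀ C, MeasurableSet[m] C → (μ (C ∩ E) = 0 ↔ μ ({x | f x ≠ 0} ∩ C) = 0) := by
    intro C hC
    rw [← trim_measurableSet_eq hm (hB.inter hC), ← withDensity_apply_eq_zero hf, hw,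
      trim_measurableSet_eq hm hC, Measure.restrict_apply (hm _ hC)]
  refine ⟨{x | f x ≠ 0}, hB, ?_, ?_⟩
  · have := (key _ hB.compl).2 (by simp)
    rwa [inter_comm] at this
  · intro C hC hCB h
    have := (key C hC).1 h
    rwa [inter_eq_self_of_subset_right hCB] at this

structure Tri (T K : Type*) where
  A : Set T
  t : T
  B : Set K

structure Valid {T K : Type*} [MeasurableSpace K] (μ : Measure K) (L : T → Bool → Set K)
    (x : Tri T K) : Prop where
  notMem : x.t ∉ x.A
  meas : MeasurableSet[sig L x.A] x.B
  pos : μ x.B ≠ 0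
  split : ∀ C, MeasurableSet[sig L x.A] C → C ⊆ x.B → ∀ i, μ (C ∩ L x.t i) = 0 → μ C = 0

/-- Uncountable `T`: the basic hypothesis gives many valid triples. -/
lemma exists_h0 {T K : Type*} [m0 : MeasurableSpace K] (μ : Measure K) [IsProbabilityMeasure μ]
    (L : T → Bool → Set K) (hmeas : ∀ t i, MeasurableSet (L t i))
    (ε : ℝ) (hε : 0 < ε)
    (h2 : ∀ t s, t ≠ s → ε < (μ (L t false ∩ L s true)).toReal) :
    ∃ h0 : List (Set K) → Set T, (∀ l, (h0 l).Countable) ∧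
      ∀ A, Clos L h0 A → ∀ t, t ∉ A → ∃ B, Valid μ L ⟨A, t, B⟩ := by
  let V : Set K → Set T := fun C =>
    {s | μ (L s false \ C) < ENNReal.ofReal (ε/2) ∧ μ (L s true ∩ C) < ENNReal.ofReal (ε/2)}
  have hV : ∀ C, (V C).Subsingleton := by
    intro C t ht s hs
    by_contra hne
    have h := h2 t s hne
    rw [← ENNReal.ofReal_lt_iff_lt_toReal hε.le (measure_ne_top _ _)] at h
    refine lt_irrefl _ (h.trans_le ?_)
    calc μ (L t false ∩ L s true) ≤ μ ((L t false \ C) ∪ (L s true ∩ C)) := by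
          refine measure_mono ?_
          rintro x ⟨h1, h2⟩
          by_cases hx : x ∈ C
          · exact Or.inr ⟨h2, hx⟩
          · exact Or.inl ⟨h1, hx⟩
      _ ≤ μ (L t false \ C) + μ (L s true ∩ C) := measure_union_le _ _
      _ ≤ ENNReal.ofReal (ε/2) + ENNReal.ofReal (ε/2) := add_le_add ht.1.le hs.2.le
      _ = ENNReal.ofReal ε := by
          rw [← ENNReal.ofReal_add (by linarith) (by linarith), add_halves]
  refine ⟨fun l => match l with
    | [] => ∅
    | C :: _ => V C, ?_, ?_⟩
  · intro l
    match l with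
    | [] => exact countable_empty
    | C :: _ => exact (hV C).countable
  intro A hA t ht
  have hm := sig_le L hmeas A
  obtain ⟨B0, hB0, hl0, hs0⟩ := hull μ _ hm (L t false)
  obtain ⟨B1, hB1, hl1, hs1⟩ := hull μ _ hm (L t true)
  refine ⟨B0 ∩ B1, ht, hB0.inter hB1, ?_, ?_⟩
  · intro h0
    apply ht
    obtain ⟨C, hC, hd⟩ := approx μ L hmeas A B0 hB0 (ε/2) (by linarith)
    refine hA [C] (by simpa using hC) ⟨?_, ?_⟩
    · calc μ (L t false \ C) ≤ μ ((L t false \ B0) ∪ B0 ∆ C) := by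
            refine measure_mono ?_
            rintro x ⟨h1, h2⟩
            by_cases hx : x ∈ B0
            · exact Or.inr (Or.inl ⟨hx, h2⟩)
            · exact Or.inl ⟨h1, hx⟩
        _ ≤ μ (L t false \ B0) + μ (B0 ∆ C) := measure_union_le _ _
        _ < _ := by rw [hl0, zero_add]; exact hd
    · calc μ (L t true ∩ C) ≤ μ (((L t true \ B1) ∪ (B0 ∩ B1)) ∪ B0 ∆ C) := by
            refine measure_mono ?_
            rintro x ⟨h1, h2⟩
            by_cases hx : x ∈ B0
            · by_cases hx1 : x ∈ B1
              · exact Or.inl (Or.inr ⟨hx, hx1⟩)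
              · exact Or.inl (Or.inl ⟨h1, hx1⟩)
            · exact Or.inr (Or.inr ⟨h2, hx⟩)
        _ ≤ μ (L t true \ B1) + μ (B0 ∩ B1) + μ (B0 ∆ C) :=
            (measure_union_le _ _).trans (add_le_add_left (measure_union_le _ _) _)
        _ < _ := by rw [hl1, h0, zero_add, zero_add]; exact hd
  · intro C hC hCB i h
    cases i
    · exact hs0 C hC (hCB.trans inter_subset_left) h
    · exact hs1 C hC (hCB.trans inter_subset_right) h

/-- Existence of a class of valid triples in which every triple is suitably accumulated. -/
lemma exists_good {T : Type*} [TopologicalSpace T] [SecondCountableTopology T] [Uncountable T]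
    {K : Type*} [m0 : MeasurableSpace K] (μ : Measure K) [IsProbabilityMeasure μ]
    (L : T → Bool → Set K) (hmeas : ∀ t i, MeasurableSet (L t i))
    (ε : ℝ) (hε : 0 < ε)
    (h2 : ∀ t s, t ≠ s → ε < (μ (L t false ∩ L s true)).toReal) :
    ∃ G : Set (Tri T K), G.Nonempty ∧ (∀ x ∈ G, Valid μ L x ∧ x.A.Countable) ∧
      ∀ x ∈ G, ∀ U : Set T, IsOpen U → x.t ∈ U → ∀ δ : ℝ≥0∞, 0 < δ → ∀ A0 : Set T, A0.Countable →
        ∃ y ∈ G, A0 ⊆ y.A ∧ y.t ∈ U ∧ μ (x.B ∆ y.B) < δ := by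
  obtain ⟨h0, hc0, H0⟩ := exists_h0 μ L hmeas ε hε h2
  let b := TopologicalSpace.countableBasis T
  let W : Set T → ℕ → Set K → Set (Tri T K) := fun U n C =>
    {x | Valid μ L x ∧ x.A.Countable ∧ x.t ∈ U ∧ μ (x.B ∆ C) < ENNReal.ofReal (1 / ((n : ℝ) + 1))}
  let Stat : Set (Tri T K) → Prop := fun W =>
    ∀ h : List (Set K) → Set T, (∀ l, (h l).Countable) → ∃ x ∈ W, Clos L h x.A
  have hns : ∀ U n C, ∃ h : List (Set K) → Set T, (∀ l, (h l).Countable) ∧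
      (¬ Stat (W U n C) → ∀ x ∈ W U n C, ¬ Clos L h x.A) := by
    intro U n C
    by_cases hS : Stat (W U n C)
    · exact ⟨fun _ => ∅, fun _ => countable_empty, fun h => absurd hS h⟩
    · have hS' := hS
      simp only [Stat, not_forall, not_exists, not_and] at hS'
      obtain ⟨h, hh, hx⟩ := hS'
      exact ⟨h, hh, fun _ => hx⟩
  choose hh hhc hhW using hns
  let hs : List (Set K) → Set T := fun l => match l with
    | [] => ∅
    | C :: l => ⋃ U ∈ b, ⋃ n : ℕ, hh U n C l
  have hsc : ∀ l, (hs l).Countable := by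
    intro l
    match l with
    | [] => exact countable_empty
    | C :: l =>
      exact (TopologicalSpace.countable_countableBasis T).biUnion
        fun U _ => countable_iUnion fun n => hhc U n C l
  have hsclos : ∀ A, Clos L hs A → ∀ C ∈ alg L A, ∀ U ∈ b, ∀ n, Clos L (hh U n C) A := by
    intro A hA C hC U hU n l hl
    refine Subset.trans ?_ (hA (C :: l) ?_)
    · intro t ht
      exact mem_biUnion hU (mem_iUnion.2 ⟨n, ht⟩)
    · intro D hD
      rcases List.mem_cons.1 hD with rfl | hD
      · exact hC
      · exact hl D hD
  refine ⟨{x | Valid μ L x ∧ x.A.Countable ∧ Clos L hs x.A}, ?_, fun x hx => ⟨hx.1, hx.2.1⟩, ?_⟩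
  · obtain ⟨A, hA, hcl⟩ := exists_clos L (fun l => h0 l ∪ hs l) fun l => (hc0 l).union (hsc l)
    obtain ⟨t, ht⟩ : ∃ t, t ∉ A := by
      by_contra hcon
      push Not at hcon
      exact not_countable_univ (hA.mono fun t _ => hcon t)
    obtain ⟨B, hB⟩ := H0 A (fun l hl => subset_union_left.trans (hcl l hl)) t ht
    exact ⟨⟨A, t, B⟩, hB, hA, fun l hl => subset_union_right.trans (hcl l hl)⟩
  · rintro x ⟨hx, hxA, hxs⟩ U hU hxU δ hδ A0 hA0
    obtain ⟨U', hU', hxU', hUU⟩ :=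
      (TopologicalSpace.isBasis_countableBasis T).exists_subset_of_mem_open hxU hU
    obtain ⟨n, hn⟩ : ∃ n : ℕ, ENNReal.ofReal (1 / ((n : ℝ) + 1)) +
        ENNReal.ofReal (1 / ((n : ℝ) + 1)) ≤ δ := by
      obtain ⟨r, hr0, hr⟩ := ENNReal.lt_iff_exists_nnreal_btwn.1 hδ
      obtain ⟨n, hn⟩ := exists_nat_one_div_lt (show (0:ℝ) < r / 2 by
        have : (0:ℝ) < r := by exact_mod_cast hr0
        linarith)
      refine ⟨n, le_trans ?_ hr.le⟩
      rw [← ENNReal.ofReal_add (by positivity) (by positivity), ← ENNReal.ofReal_coe_nnreal]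
      exact ENNReal.ofReal_le_ofReal (by linarith)
    obtain ⟨C, hC, hxC⟩ := approx μ L hmeas x.A x.B hx.meas (1 / ((n:ℝ)+1)) (by positivity)
    have hxW : x ∈ W U' n C := ⟨hx, hxA, hxU', hxC⟩
    have hst : Stat (W U' n C) := by
      by_contra hcon
      exact hhW U' n C hcon x hxW (hsclos x.A hxs C hC U' hU' n)
    obtain ⟨y, ⟨hy, hyA, hyU, hyC⟩, hycl⟩ := hst (fun l => hs l ∪ A0) fun l => (hsc l).union hA0
    refine ⟨y, ⟨hy, hyA, fun l hl => subset_union_left.trans (hycl l hl)⟩,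
      subset_union_right.trans (hycl [] (by simp)), hUU hyU, ?_⟩
    calc μ (x.B ∆ y.B) ≤ μ (x.B ∆ C) + μ (C ∆ y.B) := measure_symmDiff_le _ _ _
      _ < ENNReal.ofReal (1 / ((n : ℝ) + 1)) + ENNReal.ofReal (1 / ((n : ℝ) + 1)) := by
          rw [symmDiff_comm C]
          exact ENNReal.add_lt_add hxC hyC
      _ ≤ δ := hn

def atom {T K : Type*} (L : T → Bool → Set K) (F : Set (Tri T K)) (φ : Tri T K → Bool) : Set K :=
  ⋂ x ∈ F, (L x.t (φ x) ∩ x.B)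

lemma atom_lower {T K : Type*} [MeasurableSpace K] (μ : Measure K)
    (L : T → Bool → Set K) (F : Set (Tri T K)) (hF : F.Finite)
    (h : ∀ φ, μ (atom L F φ) ≠ 0) : ∃ δ : ℝ≥0∞, 0 < δ ∧ ∀ φ, δ ≤ μ (atom L F φ) := by
  classical
  have : Finite F := hF
  obtain ⟨ψ, hψ⟩ := Finite.exists_min
    (fun ψ : F → Bool => μ (atom L F fun x => if hx : x ∈ F then ψ ⟨x, hx⟩ else true))
  refine ⟨_, pos_iff_ne_zero.2 (h _), fun φ => (hψ (fun x => φ x)).trans (le_of_eq ?_)⟩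
  congr 1
  unfold atom
  refine iInter₂_congr fun x hx => ?_
  simp [hx]

lemma atom_meas {T K : Type*} (L : T → Bool → Set K) (F : Set (Tri T K)) (hF : F.Finite)
    (A : Set T) (hA : ∀ x ∈ F, insert x.t x.A ⊆ A) (hB : ∀ x ∈ F, MeasurableSet[sig L x.A] x.B)
    (φ : Tri T K → Bool) : MeasurableSet[sig L A] (atom L F φ) := by
  refine @Set.Finite.measurableSet_biInter _ _ (sig L A) _ _ hF fun x hx => ?_
  refine MeasurableSet.inter ?_ ?_
  · exact MeasurableSpace.measurableSet_generateFrom ⟨x.t, hA x hx (mem_insert _ _), _, rfl⟩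
  · exact sig_mono L ((subset_insert _ _).trans (hA x hx)) _ (hB x hx)

lemma step {T : Type*} [TopologicalSpace T]
    {K : Type*} [m0 : MeasurableSpace K] (μ : Measure K)
    (L : T → Bool → Set K) (G : Set (Tri T K))
    (hG : ∀ x ∈ G, Valid μ L x ∧ x.A.Countable)
    (hacc : ∀ x ∈ G, ∀ U : Set T, IsOpen U → x.t ∈ U → ∀ δ : ℝ≥0∞, 0 < δ → ∀ A0 : Set T,
      A0.Countable → ∃ y ∈ G, A0 ⊆ y.A ∧ y.t ∈ U ∧ μ (x.B ∆ y.B) < δ)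
    (F : Set (Tri T K)) (hF : F.Finite) (hFG : F ⊆ G) (h : ∀ φ, μ (atom L F φ) ≠ 0)
    (x : Tri T K) (hx : x ∈ F) (U : Set T) (hU : IsOpen U) (hxU : x.t ∈ U) :
    ∃ y ∈ G, y.t ∈ U ∧ y.t ≠ x.t ∧ ∀ φ, μ (atom L (insert y F) φ) ≠ 0 := by
  obtain ⟨δ, hδ, hle⟩ := atom_lower μ L F hF h
  obtain ⟨y, hy, hyA, hyU, hyB⟩ := hacc x (hFG hx) U hU hxU δ hδ (⋃ z ∈ F, insert z.t z.A)
    (hF.countable.biUnion fun z hz => (hG z (hFG hz)).2.insert _)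
  have hyA' : ∀ z ∈ F, insert z.t z.A ⊆ y.A := fun z hz =>
    (subset_biUnion_of_mem (u := fun z : Tri T K => insert z.t z.A) hz).trans hyA
  have hyv := (hG y hy).1
  refine ⟨y, hy, hyU, ?_, ?_⟩
  · intro he
    exact hyv.notMem (he ▸ hyA' x hx (mem_insert _ _))
  · intro φ h0
    have hm := (atom_meas L F hF y.A hyA' (fun z hz => (hG z (hFG hz)).1.meas) φ)
    have e : atom L (insert y F) φ = (atom L F φ ∩ y.B) ∩ L y.t (φ y) := by
      unfold atom
      rw [biInter_insert]
      ext k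
      simp only [mem_inter_iff]
      tauto
    rw [e] at h0
    have h1 := hyv.split _ (hm.inter hyv.meas) inter_subset_right _ h0
    have hsub : atom L F φ ⊆ (atom L F φ ∩ y.B) ∪ x.B ∆ y.B := by
      intro k hk
      by_cases hky : k ∈ y.B
      · exact Or.inl ⟨hk, hky⟩
      · exact Or.inr (Or.inl ⟨(mem_iInter₂.1 hk x hx).2, hky⟩)
    have := (measure_mono (μ := μ) hsub).trans (measure_union_le _ _)
    rw [h1, zero_add] at this
    exact lt_irrefl _ (((hle φ).trans this).trans_lt hyB)

end DII

open DII in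
theorem exists_denseInItself_independent
    {T : Type*} [TopologicalSpace T] [TopologicalSpace.SeparableSpace T]
    [TopologicalSpace.MetrizableSpace T] [Uncountable T]
    {K : Type*} [MeasurableSpace K] (μ : Measure K) [IsProbabilityMeasure μ]
    (L : T → Bool → Set K) (hmeas : ∀ t i, MeasurableSet (L t i))
    (hdisj : ∀ t, Disjoint (L t false) (L t true))
    (ε : ℝ) (hε : 0 < ε)
    (h1 : ∀ t, 1 - ε / 2 < (μ (L t false)).toReal + (μ (L t true)).toReal)
    (h2 : ∀ t s, t ≠ s → ε < (μ (L t false ∩ L s true)).toReal) :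
    ∃ S : Set T, S.Nonempty ∧ DenseInItself S ∧
      ∀ a ⊆ S, a.Finite → ∀ φ : T → Bool, (⋂ t ∈ a, L t (φ t)).Nonempty := by
  let : MetricSpace T := TopologicalSpace.metrizableSpaceMetric T
  have : SecondCountableTopology T := UniformSpace.secondCountable_of_separable T
  obtain ⟨G, ⟨x0, hx0⟩, hG, hacc⟩ := exists_good μ L hmeas ε hε h2
  let P : Set (Tri T K) → Prop := fun F => F.Finite ∧ F ⊆ G ∧ ∀ φ, μ (atom L F φ) ≠ 0
  have hstep : ∀ F, P F → ∀ n : ℕ, ∀ H : Set (Tri T K), H.Finite → H ⊆ F →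
      ∃ F', P F' ∧ F ⊆ F' ∧
        ∀ x ∈ H, ∃ y ∈ F', y.t ≠ x.t ∧ dist y.t x.t < 1 / ((n:ℝ) + 1) := by
    intro F hF n H hH
    induction H, hH using Set.Finite.induction_on with
    | empty => exact fun _ => ⟨F, hF, Subset.rfl, by simp⟩
    | @insert x H _ _ ih =>
      intro hsub
      obtain ⟨F', hF', hFF, hy⟩ := ih ((subset_insert _ _).trans hsub)
      obtain ⟨y, hyG, hyU, hne, hat⟩ := step μ L G hG hacc F' hF'.1 hF'.2.1 hF'.2.2 x
        (hFF (hsub (mem_insert _ _))) (Metric.ball x.t (1 / ((n:ℝ)+1))) Metric.isOpen_ball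
        (Metric.mem_ball_self (by positivity))
      refine ⟨insert y F', ⟨hF'.1.insert _, insert_subset hyG hF'.2.1, hat⟩,
        hFF.trans (subset_insert _ _), ?_⟩
      intro z hz
      rcases hz with rfl | hz
      · exact ⟨y, mem_insert _ _, hne, hyU⟩
      · obtain ⟨w, hw, hw'⟩ := hy z hz
        exact ⟨w, mem_insert_of_mem _ hw, hw'⟩
  have hstep' : ∀ (n : ℕ) (F : {F // P F}), ∃ F' : {F // P F}, F.1 ⊆ F'.1 ∧
        ∀ x ∈ F.1, ∃ y ∈ F'.1, y.t ≠ x.t ∧ dist y.t x.t < 1 / ((n:ℝ) + 1) := by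
    rintro n ⟨F, hF⟩
    obtain ⟨F', h, h'⟩ := hstep F hF n F hF.1 Subset.rfl
    exact ⟨⟨F', h⟩, h'⟩
  choose nxt hn1 hn2 using hstep'
  have hP0 : P {x0} := by
    refine ⟨finite_singleton _, by simpa using hx0, fun φ h0 => ?_⟩
    have hv := (hG x0 hx0).1
    have e : atom L {x0} φ = x0.B ∩ L x0.t (φ x0) := by
      simp [atom, inter_comm]
    rw [e] at h0
    exact hv.pos (hv.split _ hv.meas Subset.rfl _ h0)
  let Fs : ℕ → {F // P F} := fun n => Nat.rec ⟨{x0}, hP0⟩ (fun n F => nxt n F) n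
  have hmono : Monotone fun n => (Fs n).1 := monotone_nat_of_le_succ fun n => hn1 n (Fs n)
  refine ⟨⋃ n, Tri.t '' (Fs n).1, ⟨x0.t, mem_iUnion.2 ⟨0, x0, rfl, rfl⟩⟩, ?_, ?_⟩
  · intro t ht
    obtain ⟨n, x, hx, rfl⟩ := mem_iUnion.1 ht
    rw [Metric.mem_closure_iff]
    intro r hr
    obtain ⟨m, hm⟩ := exists_nat_one_div_lt hr
    obtain ⟨y, hy, hne, hd⟩ := hn2 (max n m) (Fs (max n m)) x (hmono (le_max_left n m) hx)
    refine ⟨y.t, ⟨mem_iUnion.2 ⟨max n m + 1, y, hy, rfl⟩, hne⟩, ?_⟩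
    rw [dist_comm]
    refine hd.trans (lt_of_le_of_lt ?_ hm)
    exact one_div_le_one_div_of_le (by positivity) (by gcongr; exact le_max_right n m)
  · intro a ha hfin φ
    obtain ⟨n, hn⟩ : ∃ n, a ⊆ Tri.t '' (Fs n).1 := by
      have hdir : Directed (· ⊆ ·) fun n => Tri.t '' (Fs n).1 :=
        Monotone.directed_le fun i j hij => image_mono (hmono hij)
      obtain ⟨n, hn⟩ := hdir.exists_mem_subset_of_finset_subset_biUnion (s := hfin.toFinset)
        (by simpa using ha)
      exact ⟨n, by simpa using hn⟩
    obtain ⟨k, hk⟩ := nonempty_of_measure_ne_zero ((Fs n).2.2.2 fun x => φ x.t)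
    refine ⟨k, mem_iInter₂.2 fun t ht => ?_⟩
    obtain ⟨x, hx, rfl⟩ := hn ht
    exact (mem_iInter₂.1 hk x hx).1
end

section
/- Let X be a Borel subset of a Polish space and let K ⊆ CD(X) be a compact space. Then for every Radon probability measure μ on K, the set {x ∈ X : μ({g ∈ K : osc(g, x) > 0}) > 0} is countable. -/
open MeasureTheory Set

theorem countable_set_of_positive_oscillation
    {Y : Type*} [TopologicalSpace Y] [PolishSpace Y] [MeasurableSpace Y] [BorelSpace Y]
    (X : Set Y) (hX : MeasurableSet X)
    (K : Set (X → ℝ)) (hK : IsCompact K)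
    (hCD : ∀ g ∈ K, {x : X | ¬ ContinuousAt g x}.Countable)
    [MeasurableSpace K] [BorelSpace K]
    (μ : Measure K) [IsProbabilityMeasure μ] [μ.Regular] :
    {x : X | 0 < μ {g : K | 0 < osc (g.val : X → ℝ) univ x}}.Countable := by
  haveI : StandardBorelSpace X := hX.standardBorel
  let B := TopologicalSpace.countableBasis X
  have hBc : B.Countable := TopologicalSpace.countable_countableBasis X
  have hB : TopologicalSpace.IsTopologicalBasis B := TopologicalSpace.isBasis_countableBasis X
  let D : Set X → ℕ → Set K := fun U n =>
    {g | ∃ y ∈ U, ∃ z ∈ U, (1 / ((n : ℝ) + 1)) < dist (g.val y) (g.val z)}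
  have hD : ∀ U n, MeasurableSet (D U n) := by
    intro U n
    apply IsOpen.measurableSet
    have : D U n = ⋃ y ∈ U, ⋃ z ∈ U,
        {g : K | (1 / ((n : ℝ) + 1)) < dist (g.val y) (g.val z)} := by
      ext g; simp [D]
    rw [this]
    refine isOpen_biUnion fun y _ => isOpen_biUnion fun z _ => ?_
    exact isOpen_lt continuous_const
      (((continuous_apply y).comp continuous_subtype_val).dist
        ((continuous_apply z).comp continuous_subtype_val))
  let S : Set (X × K) := ⋃ n : ℕ, ⋂ U ∈ B, ((Prod.fst ⁻¹' Uᶜ) ∪ (Prod.snd ⁻¹' (D U n)))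
  have hS : MeasurableSet S := by
    refine MeasurableSet.iUnion fun n => MeasurableSet.biInter hBc fun U hU => ?_
    exact (measurable_fst (hB.isOpen hU).measurableSet.compl).union (measurable_snd (hD U n))
  have memS : ∀ x g, (x, g) ∈ S ↔ ∃ n : ℕ, ∀ U ∈ B, x ∈ U → g ∈ D U n := by
    intro x g
    simp only [S, mem_iUnion, mem_iInter, mem_union, mem_preimage, mem_compl_iff]
    refine exists_congr fun n => forall₂_congr fun U hU => ?_
    tauto
  have h1 : ∀ (x : X) (g : K), 0 < osc g.val univ x → (x, g) ∈ S := by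
    intro x g h
    by_contra hn
    rw [memS] at hn
    push Not at hn
    obtain ⟨q, hq0, hq⟩ := ENNReal.lt_iff_exists_nnreal_btwn.1 h
    have hq0 : (0 : ℝ) < q := by exact_mod_cast hq0
    obtain ⟨n, hnq⟩ := exists_nat_one_div_lt hq0
    obtain ⟨U, hU, hxU, hg⟩ := hn n
    refine absurd hq (not_lt.2 ?_)
    refine (iInf₂_le_of_le U (hB.isOpen hU) (iInf_le_of_le hxU ?_))
    refine Metric.ediam_le ?_
    rintro _ ⟨y, ⟨hy, -⟩, rfl⟩ _ ⟨z, ⟨hz, -⟩, rfl⟩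
    have : ¬ (1 / ((n : ℝ) + 1)) < dist (g.val y) (g.val z) :=
      fun hh => hg ⟨y, hy, z, hz, hh⟩
    rw [edist_le_coe, ← NNReal.coe_le_coe, coe_nndist]
    linarith
  have h2 : ∀ (x : X) (g : K), (x, g) ∈ S → ¬ ContinuousAt g.val x := by
    intro x g h hc
    obtain ⟨n, hn⟩ := (memS x g).1 h
    have hp : (0 : ℝ) < 1 / ((n : ℝ) + 1) / 2 := by positivity
    obtain ⟨U, hU, hxU, hs⟩ := hB.mem_nhds_iff.1 (hc (Metric.ball_mem_nhds _ hp))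
    obtain ⟨y, hy, z, hz, hyz⟩ := hn U hU hxU
    have a := hs hy
    have b := hs hz
    simp only [mem_preimage, Metric.mem_ball] at a b
    have := dist_triangle_right (g.val y) (g.val z) (g.val x)
    linarith
  let A : Set X := {x | 0 < μ (Prod.mk x ⁻¹' S)}
  have hA : MeasurableSet A := measurableSet_lt measurable_const (measurable_measure_prodMk_left hS)
  suffices hAc : A.Countable by
    refine hAc.mono fun x hx => ?_
    exact lt_of_lt_of_le hx (measure_mono fun g hg => h1 x g hg)
  by_contra hAc
  haveI : StandardBorelSpace A := hA.standardBorel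
  let e : A ≃ᵐ ℝ := PolishSpace.measurableEquivOfNotCountable
    (fun h => hAc (Set.countable_coe_iff.1 h)) (fun h => not_countable (α := ℝ) h)
  let f : ℝ → X := fun t => (e.symm t).val
  have hf : Measurable f := measurable_subtype_coe.comp e.symm.measurable
  have hfi : Function.Injective f := Subtype.val_injective.comp e.symm.injective
  let T : Set (K × ℝ) := (fun p => (f p.2, p.1)) ⁻¹' S
  have hT : MeasurableSet T := ((hf.comp measurable_snd).prodMk measurable_fst) hS
  have hT0 : (μ.prod (volume : Measure ℝ)) T = 0 := by
    rw [Measure.measure_prod_null hT]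
    refine Filter.Eventually.of_forall fun g => ?_
    refine Set.Countable.measure_zero ?_ _
    refine ((hCD g.val g.2).preimage hfi).mono fun t ht => ?_
    exact h2 (f t) g ht
  rw [Measure.prod_apply_symm hT, lintegral_eq_zero_iff (measurable_measure_prodMk_right hT)] at hT0
  obtain ⟨t, ht⟩ := hT0.exists
  have : 0 < μ (Prod.mk (f t) ⁻¹' S) := (e.symm t).2
  exact this.ne' ht
end

section
/- Let X be a Borel subset of a Polish space and let K ⊆ CD(X) be a compact space. Then every Radon probability measure μ on K is countably determined. -/
open MeasureTheory Set

/-- Abstract step: it suffices to approximate a subbasis up to null sets. -/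
theorem cd_of_subbasis {X : Type*} (K : Set (X → ℝ))
    [MeasurableSpace K] [BorelSpace K] (μ : Measure K) [IsProbabilityMeasure μ] [μ.Regular]
    (C : Set (Set K)) (hC : C.Countable) (hcl : ∀ F ∈ C, IsClosed F)
    (h1 : ∀ (x : X) (a : ℝ), ∀ᵐ g : K ∂μ, a < g.1 x →
      ∃ F ∈ C, g ∈ F ∧ F ⊆ {g : K | a < g.1 x})
    (h2 : ∀ (x : X) (a : ℝ), ∀ᵐ g : K ∂μ, g.1 x < a →
      ∃ F ∈ C, g ∈ F ∧ F ⊆ {g : K | g.1 x < a}) :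
    CountablyDetermined μ := by
  classical
  set C' : Set (Set K) := (fun s : Set (Set K) => ⋂₀ s) '' {s | s.Finite ∧ s ⊆ C} with hC'
  have hC'c : C'.Countable := (countable_ofPred_finite_subset hC).image _
  have hC'cl : ∀ F ∈ C', IsClosed F := by
    rintro _ ⟨s, ⟨-, hs⟩, rfl⟩
    exact isClosed_sInter fun F hF => hcl F (hs hF)
  have hsub : ∀ F ∈ C, F ∈ C' := fun F hF => ⟨{F}, ⟨finite_singleton _, by simpa using hF⟩, by simp⟩
  have huniv : univ ∈ C' := ⟨∅, ⟨finite_empty, by simp⟩, by simp⟩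
  have hint : ∀ F ∈ C', ∀ G ∈ C', F ∩ G ∈ C' := by
    rintro _ ⟨s, ⟨hs, hs'⟩, rfl⟩ _ ⟨t, ⟨ht, ht'⟩, rfl⟩
    exact ⟨s ∪ t, ⟨hs.union ht, union_subset hs' ht'⟩, sInter_union s t⟩
  let Good : Set K → Prop := fun U => ∀ᵐ g ∂μ, g ∈ U → ∃ F ∈ C', g ∈ F ∧ F ⊆ U
  have hc : ∀ x : X, Continuous fun g : K => g.1 x :=
    fun x => (continuous_apply x).comp continuous_subtype_val
  have ho1 : ∀ (x : X) (a : ℝ), IsOpen ((fun g : K => g.1 x) ⁻¹' Ioi a) :=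
    fun x a => isOpen_Ioi.preimage (hc x)
  have ho2 : ∀ (x : X) (a : ℝ), IsOpen ((fun g : K => g.1 x) ⁻¹' Iio a) :=
    fun x a => isOpen_Iio.preimage (hc x)
  have hgood : ∀ U : Set K, IsOpen U → Good U := by
    let T : TopologicalSpace K :=
      { IsOpen := fun U => IsOpen U ∧ Good U
        isOpen_univ := ⟨isOpen_univ, Filter.Eventually.of_forall
          fun g _ => ⟨univ, huniv, mem_univ _, subset_univ _⟩⟩
        isOpen_inter := by
          rintro U V ⟨hU, hU'⟩ ⟨hV, hV'⟩
          refine ⟨hU.inter hV, ?_⟩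
          filter_upwards [hU', hV'] with g h h' hg
          obtain ⟨F, hF, hgF, hFU⟩ := h hg.1
          obtain ⟨G, hG, hgG, hGU⟩ := h' hg.2
          exact ⟨F ∩ G, hint F hF G hG, ⟨hgF, hgG⟩, inter_subset_inter hFU hGU⟩
        isOpen_sUnion := by
          intro 𝓤 h𝓤
          have hop : IsOpen (⋃₀ 𝓤) := isOpen_sUnion fun U hU => (h𝓤 U hU).1
          refine ⟨hop, ?_⟩
          set A : Set K := {g | ∃ F ∈ C', g ∈ F ∧ F ⊆ ⋃₀ 𝓤} with hA
          have hAm : MeasurableSet A := by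
            have : A = ⋃ F ∈ {F | F ∈ C' ∧ F ⊆ ⋃₀ 𝓤}, F := by
              ext g; simp only [hA, mem_ofPred_eq, mem_iUnion, exists_prop]; 
              constructor
              · rintro ⟨F, a, b, c⟩; exact ⟨F, ⟨a, c⟩, b⟩
              · rintro ⟨F, ⟨a, c⟩, b⟩; exact ⟨F, a, b, c⟩
            rw [this]
            exact MeasurableSet.biUnion (hC'c.mono fun F hF => hF.1)
              fun F hF => (hC'cl F hF.1).measurableSet
          have hAsub : A ⊆ ⋃₀ 𝓤 := by
            rintro g ⟨F, -, hgF, hF⟩; exact hF hgF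
          have hle : μ (⋃₀ 𝓤) ≤ μ A := by
            rw [hop.measure_eq_iSup_isCompact]
            refine iSup_le fun L => iSup_le fun hLU => iSup_le fun hL => ?_
            obtain ⟨t, ht, htf, hLt⟩ := hL.elim_finite_subcover_image (b := 𝓤) (c := id)
              (fun U hU => (h𝓤 U hU).1) (by rw [sUnion_eq_biUnion] at hLU; exact hLU)
            have : ∀ᵐ g ∂μ, ∀ U ∈ t, g ∈ U → ∃ F ∈ C', g ∈ F ∧ F ⊆ U :=
              (ae_ball_iff htf.countable).2 fun U hU => (h𝓤 U (ht hU)).2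
            refine measure_mono_ae ?_
            filter_upwards [this] with g hg hgL
            obtain ⟨U, hU, hgU⟩ := mem_iUnion₂.1 (hLt hgL)
            obtain ⟨F, hF, hgF, hFU⟩ := hg U hU hgU
            exact ⟨F, hF, hgF, hFU.trans (subset_sUnion_of_mem (ht hU))⟩
          have := ae_eq_of_subset_of_measure_ge hAsub hle hAm.nullMeasurableSet (measure_ne_top _ _)
          filter_upwards [this] with g hg hgU
          exact (iff_of_eq hg).2 hgU }
    have hT : T ≤ instTopologicalSpaceSubtype := by
      rw [← continuous_id_iff_le]
      refine (@continuous_induced_rng K (X → ℝ) K Subtype.val id _ T).2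
        (@continuous_pi _ _ _ T _ _ fun x => ?_)
      rw [OrderTopology.topology_eq_generate_intervals (α := ℝ), continuous_generateFrom_iff]
      rintro _ ⟨a, rfl | rfl⟩
      · refine ⟨ho1 x a, ?_⟩
        filter_upwards [h1 x a] with g hg hga
        obtain ⟨F, hF, h⟩ := hg hga
        exact ⟨F, hsub F hF, h⟩
      · refine ⟨ho2 x a, ?_⟩
        filter_upwards [h2 x a] with g hg hga
        obtain ⟨F, hF, h⟩ := hg hga
        exact ⟨F, hsub F hF, h⟩
    exact fun U hU => (hT U hU).2
  refine ⟨(fun s : Set (Set K) => ⋃₀ s) '' {s | s.Finite ∧ s ⊆ C'},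
    (countable_ofPred_finite_subset hC'c).image _, ?_, ?_⟩
  · rintro _ ⟨s, ⟨hs, hs'⟩, rfl⟩
    simp only [sUnion_eq_biUnion]
    exact Set.Finite.isClosed_biUnion hs fun F hF => hC'cl F (hs' hF)
  · intro U hU
    apply le_antisymm
    · set 𝓖 : Set (Set K) := {F | F ∈ (fun s : Set (Set K) => ⋃₀ s) '' {s | s.Finite ∧ s ⊆ C'} ∧
        F ⊆ U} with h𝓖
      have hGc : 𝓖.Countable :=
        ((countable_ofPred_finite_subset hC'c).image _).mono fun F hF => hF.1
      have hdir : DirectedOn (· ⊆ ·) 𝓖 := by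
        rintro _ ⟨⟨s, ⟨hs, hs'⟩, rfl⟩, hsU⟩ _ ⟨⟨t, ⟨ht, ht'⟩, rfl⟩, htU⟩
        refine ⟨⋃₀ (s ∪ t), ⟨⟨s ∪ t, ⟨hs.union ht, union_subset hs' ht'⟩, rfl⟩, ?_⟩, ?_, ?_⟩
        · rw [sUnion_union]; exact union_subset hsU htU
        · exact sUnion_subset_sUnion subset_union_left
        · exact sUnion_subset_sUnion subset_union_right
      calc μ U ≤ μ (⋃ F ∈ 𝓖, F) := by
            refine measure_mono_ae ?_
            filter_upwards [hgood U hU] with g hg hgU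
            obtain ⟨F, hF, hgF, hFU⟩ := hg hgU
            refine mem_biUnion (x := F) ⟨⟨{F}, ⟨finite_singleton _, by simpa using hF⟩, by simp⟩, hFU⟩ hgF
        _ = ⨆ F ∈ 𝓖, μ F := measure_biUnion_eq_iSup hGc hdir
        _ ≤ _ := by
            refine iSup_le fun F => iSup_le fun hF => ?_
            exact le_iSup_of_le F (le_iSup_of_le hF.1 (le_iSup_of_le hF.2 le_rfl))
    · exact iSup_le fun F => iSup_le fun _ => iSup_le fun h => measure_mono h

/-- The set of pairs `(x, g)` with `g` continuous at `x` is product measurable. -/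
theorem measurableSet_contAt {X : Type*} [TopologicalSpace X] [SecondCountableTopology X]
    [MeasurableSpace X] [BorelSpace X] (K : Set (X → ℝ))
    [MeasurableSpace K] [BorelSpace K] :
    MeasurableSet {p : X × K | ContinuousAt p.2.1 p.1} := by
  have hB := TopologicalSpace.isBasis_countableBasis X
  have : {p : X × K | ContinuousAt p.2.1 p.1} =
      ⋂ n : ℕ, ⋃ V ∈ TopologicalSpace.countableBasis X,
        V ×ˢ {g : K | ∀ y ∈ V, ∀ z ∈ V, |g.1 y - g.1 z| ≤ 1 / ((n : ℝ) + 1)} := by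
    ext ⟨x, g⟩
    simp only [mem_ofPred_eq, mem_iInter, mem_iUnion, mem_prod, exists_prop]
    constructor
    · intro h n
      have hpos : (0 : ℝ) < 1 / ((n : ℝ) + 1) / 2 := by positivity
      have := Metric.continuousAt_iff'.1 h _ hpos
      obtain ⟨V, hV, hxV, hVs⟩ := hB.mem_nhds_iff.1 this
      refine ⟨V, hV, hxV, fun y hy z hz => ?_⟩
      have h1 := hVs hy
      have h2 := hVs hz
      simp only [mem_ofPred_eq] at h1 h2
      have := dist_triangle_right (g.1 y) (g.1 z) (g.1 x)
      rw [← Real.dist_eq]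
      linarith
    · intro h
      rw [Metric.continuousAt_iff']
      intro ε hε
      obtain ⟨n, hn⟩ := exists_nat_one_div_lt hε
      obtain ⟨V, hV, hxV, hg⟩ := h n
      filter_upwards [(hB.isOpen hV).mem_nhds hxV] with y hy
      rw [Real.dist_eq]
      exact (hg y hy x hxV).trans_lt hn
  rw [this]
  refine MeasurableSet.iInter fun n =>
    MeasurableSet.biUnion (TopologicalSpace.countable_countableBasis X) fun V hV => ?_
  refine (hB.isOpen hV).measurableSet.prod (IsClosed.measurableSet ?_)
  have hc : ∀ x : X, Continuous fun g : K => g.1 x :=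
    fun x => (continuous_apply x).comp continuous_subtype_val
  simp only [ofPred_forall]
  exact isClosed_iInter fun y => isClosed_iInter fun _ => isClosed_iInter fun z =>
    isClosed_iInter fun _ => isClosed_le ((hc y).sub (hc z)).abs continuous_const

/-- Only countably many points are discontinuity points of a non-null set of functions. -/
theorem countable_bad {X : Type*} [TopologicalSpace X] [SecondCountableTopology X]
    [MeasurableSpace X] [BorelSpace X] [StandardBorelSpace X] (K : Set (X → ℝ))
    (hCD : ∀ g ∈ K, {x : X | ¬ ContinuousAt g x}.Countable)
    [MeasurableSpace K] [BorelSpace K] (μ : Measure K) [IsProbabilityMeasure μ] :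
    {x : X | μ {g : K | ¬ ContinuousAt g.1 x} ≠ 0}.Countable := by
  by_contra hS
  set S := {x : X | μ {g : K | ¬ ContinuousAt g.1 x} ≠ 0} with hSdef
  have hD : MeasurableSet {p : X × K | ¬ ContinuousAt p.2.1 p.1} :=
    (measurableSet_contAt K).compl
  have hSm : MeasurableSet S :=
    (measurable_measure_prodMk_left (ν := μ) hD) (measurableSet_singleton 0).compl
  haveI := hSm.standardBorel
  have hunc : ¬ Countable S := fun h => hS h
  let e : S ≃ᵐ ℝ := PolishSpace.measurableEquivOfNotCountable hunc
    (by rw [not_countable_iff]; infer_instance)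
  let A : Set (K × ℝ) := {p | ¬ ContinuousAt p.1.1 (e.symm p.2 : X)}
  have hf : Measurable fun p : K × ℝ => ((e.symm p.2 : X), p.1) :=
    (measurable_subtype_coe.comp (e.symm.measurable.comp measurable_snd)).prodMk measurable_fst
  have hA : MeasurableSet A := hf hD
  have hA0 : (μ.prod (volume : Measure ℝ)) A = 0 := by
    rw [Measure.measure_prod_null hA]
    refine Filter.Eventually.of_forall fun g => ?_
    refine Countable.measure_zero ?_ _
    exact (hCD g.1 g.2).preimage (Subtype.val_injective.comp e.symm.injective)
  have hA1 : ((volume : Measure ℝ).prod μ) (Prod.swap ⁻¹' A) = 0 := by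
    rw [← Measure.prod_swap, Measure.map_apply measurable_swap hA] at hA0
    exact hA0
  have h := Measure.measure_ae_null_of_prod_null hA1
  obtain ⟨t, ht⟩ := h.exists
  exact (e.symm t).2 ht

theorem countablyDetermined_of_CD
    {Y : Type*} [TopologicalSpace Y] [PolishSpace Y] [MeasurableSpace Y] [BorelSpace Y]
    (X : Set Y) (hX : MeasurableSet X)
    (K : Set (X → ℝ)) (hK : IsCompact K)
    (hCD : ∀ g ∈ K, {x : X | ¬ ContinuousAt g x}.Countable)
    [MeasurableSpace K] [BorelSpace K]
    (μ : Measure K) [IsProbabilityMeasure μ] [μ.Regular] :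
    CountablyDetermined μ := by
  haveI := hX.standardBorel
  have hS := countable_bad K hCD μ
  set S := {x : X | μ {g : K | ¬ ContinuousAt g.1 x} ≠ 0} with hSdef
  have hB := TopologicalSpace.isBasis_countableBasis X
  set 𝓣 : Set (Set X) := TopologicalSpace.countableBasis X ∪ (fun x => {x}) '' S with h𝓣
  have h𝓣c : 𝓣.Countable := (TopologicalSpace.countable_countableBasis X).union (hS.image _)
  have key : ∀ x : X, ∀ᵐ g : K ∂μ, ∀ U : Set ℝ, IsOpen U → g.1 x ∈ U →
      ∃ T ∈ 𝓣, x ∈ T ∧ ∀ y ∈ T, g.1 y ∈ U := by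
    intro x
    by_cases hx : x ∈ S
    · refine Filter.Eventually.of_forall fun g U _ hg => ⟨{x}, Or.inr ⟨x, hx, rfl⟩, rfl, ?_⟩
      rintro y rfl
      exact hg
    · have h0 : ∀ᵐ g : K ∂μ, ContinuousAt g.1 x := by
        rw [ae_iff]; exact not_not.1 hx
      filter_upwards [h0] with g hg U hU hgU
      obtain ⟨V, hV, hxV, hVs⟩ := hB.mem_nhds_iff.1 (hg (hU.mem_nhds hgU))
      exact ⟨V, Or.inl hV, hxV, hVs⟩
  have hc : ∀ x : X, Continuous fun g : K => g.1 x :=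
    fun x => (continuous_apply x).comp continuous_subtype_val
  let f : Set X × ℚ → Set K := fun p => {g | ∀ y ∈ p.1, (p.2 : ℝ) ≤ g.1 y}
  let f' : Set X × ℚ → Set K := fun p => {g | ∀ y ∈ p.1, g.1 y ≤ (p.2 : ℝ)}
  have hPc : (𝓣 ×ˢ (univ : Set ℚ)).Countable := h𝓣c.prod countable_univ
  refine cd_of_subbasis K μ (f '' (𝓣 ×ˢ univ) ∪ f' '' (𝓣 ×ˢ univ))
    ((hPc.image _).union (hPc.image _)) ?_ ?_ ?_
  · rintro _ (⟨p, -, rfl⟩ | ⟨p, -, rfl⟩)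
    · simp only [f, ofPred_forall]
      exact isClosed_iInter fun y => isClosed_iInter fun _ => isClosed_le continuous_const (hc y)
    · simp only [f', ofPred_forall]
      exact isClosed_iInter fun y => isClosed_iInter fun _ => isClosed_le (hc y) continuous_const
  · intro x a
    filter_upwards [key x] with g hg hga
    obtain ⟨q, haq, hq⟩ := exists_rat_btwn hga
    obtain ⟨T, hT, hxT, h⟩ := hg (Ioi (q : ℝ)) isOpen_Ioi hq
    exact ⟨f (T, q), Or.inl ⟨(T, q), ⟨hT, mem_univ _⟩, rfl⟩, fun y hy => (h y hy).le,
      fun g' hg' => haq.trans_le (hg' x hxT)⟩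
  · intro x a
    filter_upwards [key x] with g hg hga
    obtain ⟨q, hq, haq⟩ := exists_rat_btwn hga
    obtain ⟨T, hT, hxT, h⟩ := hg (Iio (q : ℝ)) isOpen_Iio hq
    exact ⟨f' (T, q), Or.inr ⟨(T, q), ⟨hT, mem_univ _⟩, rfl⟩, fun y hy => (h y hy).le,
      fun g' hg' => (hg' x hxT).trans_lt haq⟩
end

section
/- Suppose X is a separable metrizable space and K ⊆ ℝ^X is a compact space (with the pointwise topology) such that for every g ∈ K and every nonempty closed set F ⊆ X, the restricted function g|F has a point of continuity. Then every Radon probability measure μ on K is of countable Maharam type. -/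
open MeasureTheory Set

lemma aux_exists_max {X α : Type*} [CompleteLinearOrder α] [TopologicalSpace α] [OrderTopology α]
    [FirstCountableTopology α] (f : Set X → α)
    (hf : ∀ C D : Set X, C.Countable → D.Countable → C ⊆ D → f C ≤ f D) :
    ∃ C : Set X, C.Countable ∧ ∀ D : Set X, D.Countable → f D ≤ f C := by
  have hne : (f '' {C | C.Countable}).Nonempty := ⟨f ∅, ∅, countable_empty, rfl⟩
  obtain ⟨u, -, hu, hmem⟩ := exists_seq_tendsto_sSup hne (OrderTop.bddAbove _)
  choose C hC hCu using hmem
  refine ⟨⋃ n, C n, countable_iUnion hC, fun D hD => ?_⟩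
  calc f D ≤ sSup (f '' {C | C.Countable}) := le_sSup ⟨D, hD, rfl⟩
    _ ≤ _ := le_of_tendsto' hu fun n => by
      rw [← hCu n]
      exact hf _ _ (hC n) (countable_iUnion hC) (subset_iUnion C n)

lemma aux_hull {Ω : Type*} {m m0 : MeasurableSpace Ω} (hm : m ≤ m0) (μ : Measure Ω)
    [IsProbabilityMeasure μ] {A : Set Ω} (hA : MeasurableSet A) :
    ∃ H : Set Ω, MeasurableSet[m] H ∧
      ∀ R : Set Ω, MeasurableSet[m] R → (μ (R ∩ A) = 0 ↔ μ (R ∩ H) = 0) := by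
  set f : Ω → ℝ := A.indicator (fun _ => (1 : ℝ)) with hf
  have hfi : Integrable f μ := (integrable_const (1 : ℝ)).indicator hA
  have hsm : Measurable[m] (μ[f | m]) := stronglyMeasurable_condExp.measurable
  have hH : MeasurableSet[m] {ω | (μ[f | m]) ω ≠ 0} :=
    (hsm (measurableSet_singleton (0 : ℝ))).compl
  refine ⟨_, hH, fun R hR => ?_⟩
  have h1 : ∫ x in R, (μ[f | m]) x ∂μ = μ.real (R ∩ A) := by
    rw [setIntegral_condExp hm hfi hR, hf, setIntegral_indicator hA]
    simp
  have h2 : 0 ≤ᵐ[μ] μ[f | m] := condExp_nonneg (ae_of_all _ fun x =>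
    indicator_nonneg (fun _ _ => zero_le_one) x)
  have h3 := setIntegral_eq_zero_iff_of_nonneg_ae (s := R) (ae_restrict_of_ae h2)
    (integrable_condExp (μ := μ) (m := m) (f := f)).integrableOn
  rw [h1, measureReal_eq_zero_iff] at h3
  rw [h3, Filter.EventuallyEq, ae_restrict_iff' (hm _ hR), ae_iff]
  have : {a | ¬ (a ∈ R → (μ[f | m]) a = (0 : Ω → ℝ) a)} = R ∩ {ω | (μ[f | m]) ω ≠ 0} := by
    ext a; simp
  rw [this]

lemma aux_esssup {Ω X : Type*} [MeasurableSpace Ω] (μ : Measure Ω)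
    [IsProbabilityMeasure μ] (Q : X → Set Ω) (hQ : ∀ x, MeasurableSet (Q x)) (U : Set X) :
    ∃ T : Set X, T.Countable ∧ T ⊆ U ∧ ∀ x ∈ U, μ (Q x \ ⋃ t ∈ T, Q t) = 0 := by
  obtain ⟨T, hT, hmax⟩ := aux_exists_max (fun T => μ (⋃ t ∈ T ∩ U, Q t)) (fun C D _ _ h =>
    measure_mono (biUnion_subset_biUnion_left (inter_subset_inter_left U h)))
  have hTU : (T ∩ U).Countable := hT.mono inter_subset_left
  refine ⟨T ∩ U, hTU, inter_subset_right, fun x hx => ?_⟩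
  have h1 := hmax (insert x T) (hT.insert x)
  simp only [insert_inter_of_mem hx, biUnion_insert] at h1
  have hm : MeasurableSet (⋃ t ∈ T ∩ U, Q t) := MeasurableSet.biUnion hTU fun t _ => hQ t
  have h2 : Q x \ (⋃ t ∈ T ∩ U, Q t) = (Q x ∪ ⋃ t ∈ T ∩ U, Q t) \ (⋃ t ∈ T ∩ U, Q t) := by
    rw [union_sdiff_right]
  rw [h2, measure_sdiff subset_union_right hm.nullMeasurableSet (measure_ne_top _ _)]
  exact tsub_eq_zero_of_le h1

lemma aux_null_trans {Ω : Type*} [MeasurableSpace Ω] {μ : Measure Ω} {A B C : Set Ω}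
    (h1 : μ (A \ B) = 0) (h2 : μ (B \ C) = 0) : μ (A \ C) = 0 := by
  refine measure_mono_null (t := (A \ B) ∪ (B \ C)) ?_ (measure_union_null h1 h2)
  intro x hx
  by_cases h : x ∈ B
  · exact Or.inr ⟨h, hx.2⟩
  · exact Or.inl ⟨hx.1, h⟩

lemma aux_pos_inter {Ω : Type*} [MeasurableSpace Ω] {μ : Measure Ω} {P B C : Set Ω}
    (h1 : μ (P ∩ B) ≠ 0) (h2 : μ (B \ C) = 0) : μ (P ∩ C) ≠ 0 := by
  intro h
  apply h1
  refine measure_mono_null (t := (P ∩ C) ∪ (B \ C)) ?_ (measure_union_null h h2)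
  intro x hx
  by_cases h : x ∈ C
  · exact Or.inl ⟨hx.1, h⟩
  · exact Or.inr ⟨hx.2, h⟩

lemma aux_le {Ω : Type*} [MeasurableSpace Ω] {μ : Measure Ω} {B C : Set Ω}
    (h2 : μ (B \ C) = 0) : μ B ≤ μ C :=
  measure_mono_ae (ae_le_set.2 h2)

lemma aux_stable {Ω X : Type*} [MeasurableSpace Ω] (μ : Measure Ω)
    [IsProbabilityMeasure μ] (Q : Set X → X → Set Ω) (hQ : ∀ C x, MeasurableSet (Q C x))
    (hmono : ∀ C D x, C ⊆ D → μ (Q D x \ Q C x) = 0) (U : ℕ → Set X) :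
    ∃ C0 : Set X, C0.Countable ∧ ∃ S : ℕ → Set Ω, ∀ D : Set X, D.Countable → C0 ⊆ D → ∀ i,
      (∀ x ∈ U i, μ (Q D x \ S i) = 0) ∧
      ∀ P : Set Ω, μ (P ∩ S i) ≠ 0 → ∃ x ∈ U i, μ (P ∩ Q D x) ≠ 0 := by
  choose T hTc hTU hT using fun (C : Set X) (i : ℕ) => aux_esssup μ (Q C) (hQ C) (U i)
  set S : Set X → ℕ → Set Ω := fun C i => ⋃ t ∈ T C i, Q C t with hS
  have hSm : ∀ C i, MeasurableSet (S C i) := fun C i =>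
    MeasurableSet.biUnion (hTc C i) fun t _ => hQ C t
  have hSmono : ∀ C D i, C ⊆ D → μ (S D i \ S C i) = 0 := by
    intro C D i h
    have : S D i \ S C i = ⋃ t ∈ T D i, (Q D t \ S C i) := by
      simp only [hS, iUnion_sdiff]
    rw [this, measure_biUnion_null_iff (hTc D i)]
    exact fun t ht => aux_null_trans (hmono C D t h) (hT C i t (hTU D i ht))
  have hex : ∀ i, ∃ C : Set X, C.Countable ∧ ∀ D : Set X, D.Countable → μ (S C i) ≤ μ (S D i) := by
    intro i
    exact aux_exists_max (α := ENNRealᵒᵈ) (fun C => OrderDual.toDual (μ (S C i)))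
      (fun C D _ _ h => OrderDual.toDual_le_toDual.2 (aux_le (hSmono C D i h)))
  choose C hCc hC using hex
  refine ⟨⋃ i, C i, countable_iUnion hCc, S (⋃ i, C i), fun D hD hsub i => ⟨fun x hx =>
    aux_null_trans (hT D i x hx) (hSmono _ _ i hsub), fun P hP => ?_⟩⟩
  have h1 := hSmono _ _ i hsub
  have h2 : μ (S (⋃ i, C i) i) ≤ μ (S D i) :=
    (aux_le (hSmono _ _ i (subset_iUnion C i))).trans (hC i D hD)
  have h3 : S D i =ᵐ[μ] S (⋃ i, C i) i :=
    ae_eq_of_ae_subset_of_measure_ge (ae_le_set.2 h1) h2 (hSm _ _).nullMeasurableSet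
      (measure_ne_top _ _)
  have h4 := aux_pos_inter hP (ae_le_set.1 h3.symm.le)
  by_contra! hcon
  apply h4
  have : P ∩ S D i = ⋃ t ∈ T D i, (P ∩ Q D t) := by
    simp only [hS, inter_iUnion]
  rw [this, measure_biUnion_null_iff (hTc D i)]
  exact fun t ht => hcon t (hTU D i ht)

lemma aux_build {Ω X : Type*} [m0 : MeasurableSpace Ω] (μ : Measure Ω)
    [IsProbabilityMeasure μ] (m : Set X → MeasurableSpace Ω) (hm : ∀ C, m C ≤ m0)
    (hmm : ∀ C D, C ⊆ D → m C ≤ m D) (A B : X → Set Ω)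
    (hA : ∀ x C, x ∈ C → MeasurableSet[m C] (A x))
    (hB : ∀ x C, x ∈ C → MeasurableSet[m C] (B x))
    (H G : Set X → X → Set Ω)
    (hHm : ∀ C x, MeasurableSet[m C] (H C x)) (hGm : ∀ C x, MeasurableSet[m C] (G C x))
    (hH : ∀ C x (R : Set Ω), MeasurableSet[m C] R → (μ (R ∩ A x) = 0 ↔ μ (R ∩ H C x) = 0))
    (hG : ∀ C x (R : Set Ω), MeasurableSet[m C] R → (μ (R ∩ B x) = 0 ↔ μ (R ∩ G C x) = 0))
    (hQmono : ∀ C D x, C ⊆ D → μ ((H D x ∩ G D x) \ (H C x ∩ G C x)) = 0)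
    (hpos : ∀ C : Set X, C.Countable → ∃ x, μ (H C x ∩ G C x) ≠ 0)
    (U : ℕ → Set X) :
    ∃ (P : ℕ → Set Ω) (SA SB : Set X), (∀ n, (P n).Nonempty) ∧ (∀ n, P (n + 1) ⊆ P n) ∧
      SA.Nonempty ∧ (∀ x ∈ SA, ∃ n, P n ⊆ A x) ∧ (∀ x ∈ SB, ∃ n, P n ⊆ B x) ∧
      ∀ x ∈ SA ∪ SB, ∀ i, x ∈ U i → (∃ y ∈ SA, y ∈ U i) ∧ (∃ y ∈ SB, y ∈ U i) := by
  obtain ⟨C0, hC0, S, hS⟩ := aux_stable μ (fun C x => H C x ∩ G C x)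
    (fun C x => hm C _ ((hHm C x).inter (hGm C x))) hQmono U
  let St : Set Ω → Prop := fun P => μ P ≠ 0 ∧ ∃ D : Set X, D.Countable ∧ C0 ⊆ D ∧ MeasurableSet[m D] P
  let good : Set Ω → X → Prop := fun P x => ∀ i, x ∈ U i → μ (P \ S i) = 0
  -- the two extension steps
  have stepA : ∀ (P : Set Ω) (D : Set X) (x : X), D.Countable → C0 ⊆ D → MeasurableSet[m D] P →
      μ (P ∩ (H D x ∩ G D x)) ≠ 0 → ∃ P' ⊆ P, St P' ∧ P' ⊆ A x ∧ good P' x := by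
    intro P D x hD hC hP h
    have hR : MeasurableSet[m D] (P ∩ (H D x ∩ G D x)) := hP.inter ((hHm D x).inter (hGm D x))
    refine ⟨P ∩ (H D x ∩ G D x) ∩ A x, fun z hz => hz.1.1, ⟨?_, insert x D, hD.insert x,
      hC.trans (subset_insert x D), ?_⟩, inter_subset_right, fun i hi => ?_⟩
    · rw [ne_eq, hH D x _ hR]
      convert h using 3
      ext z; simp only [mem_inter_iff]; tauto
    · exact (hmm _ _ (subset_insert x D) _ hR).inter (hA x _ (mem_insert x D))
    · refine measure_mono_null ?_ ((hS D hD hC i).1 x hi)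
      exact fun z hz => ⟨hz.1.1.2, hz.2⟩
  have stepB : ∀ (P : Set Ω) (D : Set X) (x : X), D.Countable → C0 ⊆ D → MeasurableSet[m D] P →
      μ (P ∩ (H D x ∩ G D x)) ≠ 0 → ∃ P' ⊆ P, St P' ∧ P' ⊆ B x ∧ good P' x := by
    intro P D x hD hC hP h
    have hR : MeasurableSet[m D] (P ∩ (H D x ∩ G D x)) := hP.inter ((hHm D x).inter (hGm D x))
    refine ⟨P ∩ (H D x ∩ G D x) ∩ B x, fun z hz => hz.1.1, ⟨?_, insert x D, hD.insert x,
      hC.trans (subset_insert x D), ?_⟩, inter_subset_right, fun i hi => ?_⟩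
    · rw [ne_eq, hG D x _ hR]
      convert h using 3
      ext z; simp only [mem_inter_iff]; tauto
    · exact (hmm _ _ (subset_insert x D) _ hR).inter (hB x _ (mem_insert x D))
    · refine measure_mono_null ?_ ((hS D hD hC i).1 x hi)
      exact fun z hz => ⟨hz.1.1.2, hz.2⟩
  have extA : ∀ (i : ℕ) (P : Set Ω), St P → ∃ P' ⊆ P, St P' ∧
      ((∃ x ∈ U i, P' ⊆ A x ∧ good P' x) ∨ μ (P' ∩ S i) = 0) := by
    intro i P hP
    by_cases h : μ (P ∩ S i) = 0
    · exact ⟨P, Subset.rfl, hP, Or.inr h⟩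
    obtain ⟨h0, D, hD, hC, hPm⟩ := hP
    obtain ⟨x, hx, hx'⟩ := (hS D hD hC i).2 P h
    obtain ⟨P', h1, h2, h3⟩ := stepA P D x hD hC hPm hx'
    exact ⟨P', h1, h2, Or.inl ⟨x, hx, h3⟩⟩
  have extB : ∀ (i : ℕ) (P : Set Ω), St P → ∃ P' ⊆ P, St P' ∧
      ((∃ x ∈ U i, P' ⊆ B x ∧ good P' x) ∨ μ (P' ∩ S i) = 0) := by
    intro i P hP
    by_cases h : μ (P ∩ S i) = 0
    · exact ⟨P, Subset.rfl, hP, Or.inr h⟩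
    obtain ⟨h0, D, hD, hC, hPm⟩ := hP
    obtain ⟨x, hx, hx'⟩ := (hS D hD hC i).2 P h
    obtain ⟨P', h1, h2, h3⟩ := stepB P D x hD hC hPm hx'
    exact ⟨P', h1, h2, Or.inl ⟨x, hx, h3⟩⟩
  have ext : ∀ (i : ℕ) (P : {P : Set Ω // St P}), ∃ P' : {P : Set Ω // St P}, P'.1 ⊆ P.1 ∧
      ((∃ x ∈ U i, P'.1 ⊆ A x ∧ good P'.1 x) ∨ μ (P'.1 ∩ S i) = 0) ∧
      ((∃ x ∈ U i, P'.1 ⊆ B x ∧ good P'.1 x) ∨ μ (P'.1 ∩ S i) = 0) := by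
    rintro i ⟨P, hP⟩
    obtain ⟨P1, h1, h2, h3⟩ := extA i P hP
    obtain ⟨P2, k1, k2, k3⟩ := extB i P1 h2
    refine ⟨⟨P2, k2⟩, k1.trans h1, ?_, k3⟩
    rcases h3 with ⟨x, hx, h4, h5⟩ | h3
    · exact Or.inl ⟨x, hx, k1.trans h4, fun j hj =>
        measure_mono_null (sdiff_subset_sdiff_left k1) (h5 j hj)⟩
    · exact Or.inr (measure_mono_null (inter_subset_inter_left _ k1) h3)
  choose nxt hn1 hnA hnB using ext
  obtain ⟨x0, hx0⟩ := hpos C0 hC0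
  obtain ⟨P0, -, hP0, hP0A, hP0g⟩ := stepA univ C0 x0 hC0 Subset.rfl MeasurableSet.univ
    (by simpa using hx0)
  let P : ℕ → {P : Set Ω // St P} := fun n => Nat.rec ⟨P0, hP0⟩ (fun k s => nxt k s) n
  have hPs : ∀ n, P (n + 1) = nxt n (P n) := fun n => rfl
  have hanti : Antitone fun n => (P n).1 := antitone_nat_of_succ_le fun n => by
    rw [hPs]; exact hn1 n (P n)
  refine ⟨fun n => (P n).1, {x | ∃ n, (P n).1 ⊆ A x ∧ good (P n).1 x},
    {x | ∃ n, (P n).1 ⊆ B x ∧ good (P n).1 x}, fun n => nonempty_of_measure_ne_zero (P n).2.1,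
    fun n => hanti (Nat.le_succ n), ⟨x0, 0, hP0A, hP0g⟩, fun x ⟨n, h, _⟩ => ⟨n, h⟩,
    fun x ⟨n, h, _⟩ => ⟨n, h⟩, ?_⟩
  intro x hx i hxi
  have hg : ∃ n, good (P n).1 x := by
    rcases hx with ⟨n, _, h⟩ | ⟨n, _, h⟩ <;> exact ⟨n, h⟩
  obtain ⟨n, hn⟩ := hg
  have key : μ ((P (i + 1)).1 ∩ S i) ≠ 0 := by
    intro h
    apply (P (max n (i + 1))).2.1
    refine measure_mono_null ?_ (measure_union_null h (hn i hxi))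
    intro z hz
    by_cases hzS : z ∈ S i
    · exact Or.inl ⟨hanti (le_max_right n (i + 1)) hz, hzS⟩
    · exact Or.inr ⟨hanti (le_max_left n (i + 1)) hz, hzS⟩
  constructor
  · rcases hnA i (P i) with ⟨y, hy, h1, h2⟩ | h
    · exact ⟨y, ⟨i + 1, h1, h2⟩, hy⟩
    · exact absurd h key
  · rcases hnB i (P i) with ⟨y, hy, h1, h2⟩ | h
    · exact ⟨y, ⟨i + 1, h1, h2⟩, hy⟩
    · exact absurd h key

lemma aux_hull_mono {Ω : Type*} {m m' m0 : MeasurableSpace Ω} (hmm : m ≤ m') (μ : Measure[m0] Ω)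
    {A H H' : Set Ω} (hHm : MeasurableSet[m] H)
    (hH : ∀ R : Set Ω, MeasurableSet[m] R → (μ (R ∩ A) = 0 ↔ μ (R ∩ H) = 0))
    (hH' : ∀ R : Set Ω, MeasurableSet[m'] R → (μ (R ∩ A) = 0 ↔ μ (R ∩ H') = 0)) :
    μ (H' \ H) = 0 := by
  have h1 : μ (Hᶜ ∩ A) = 0 := (hH _ hHm.compl).2 (by simp)
  have h2 := (hH' _ (hmm _ hHm.compl)).1 h1
  rwa [inter_comm, ← Set.sdiff_eq] at h2

/-- no oscillating function in `K` -/
lemma aux_top {X : Type*} [TopologicalSpace X] (g : X → ℝ)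
    (hg : ∀ F : Set X, IsClosed F → F.Nonempty → ∃ x ∈ F, ContinuousWithinAt g F x)
    (U : ℕ → Set X) (hU : TopologicalSpace.IsTopologicalBasis (range U)) (a b : ℝ) (hab : a < b)
    (SA SB : Set X) (hne : SA.Nonempty) (hA : ∀ x ∈ SA, g x ≤ a) (hB : ∀ x ∈ SB, b ≤ g x)
    (h : ∀ x ∈ SA ∪ SB, ∀ i, x ∈ U i → (∃ y ∈ SA, y ∈ U i) ∧ (∃ y ∈ SB, y ∈ U i)) : False := by
  obtain ⟨z, hz, hc⟩ := hg (closure (SA ∪ SB)) isClosed_closure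
    ((hne.mono subset_union_left).closure)
  have hlt : 0 < (b - a) / 2 := by linarith
  have h1 : ∀ᶠ x in nhdsWithin z (closure (SA ∪ SB)), dist (g x) (g z) < (b - a) / 2 :=
    hc (Metric.ball_mem_nhds _ hlt)
  rw [eventually_nhdsWithin_iff] at h1
  obtain ⟨_, ⟨i, rfl⟩, hzi, hi⟩ := hU.mem_nhds_iff.1 h1
  obtain ⟨x, hxi, hx⟩ := mem_closure_iff.1 hz (U i) (hU.isOpen ⟨i, rfl⟩) hzi
  obtain ⟨⟨y, hy, hyi⟩, ⟨w, hw, hwi⟩⟩ := h x hx i hxi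
  have h2 : dist (g y) (g z) < _ := hi hyi (subset_closure (Or.inl hy))
  have h3 : dist (g w) (g z) < _ := hi hwi (subset_closure (Or.inr hw))
  rw [Real.dist_eq, abs_lt] at h2 h3
  have := hA y hy
  have := hB w hw
  linarith [h2.1, h3.2]

lemma aux_cyl {X : Type*} (K : Set (X → ℝ)) (M : MeasurableSpace K)
    (hM : ∀ x, Measurable[M] (fun g : K => g.1 x)) (Z V : Set K) (hZ : IsCompact Z)
    (hV : IsOpen V) (hZV : Z ⊆ V) : ∃ W, MeasurableSet[M] W ∧ Z ⊆ W ∧ W ⊆ V := by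
  refine hZ.induction_on (p := fun Z => ∃ W, MeasurableSet[M] W ∧ Z ⊆ W ∧ W ⊆ V)
    ⟨∅, MeasurableSet.empty, Subset.rfl, empty_subset _⟩
    (fun s t h ⟨W, h1, h2, h3⟩ => ⟨W, h1, h.trans h2, h3⟩)
    (fun s t ⟨W, h1, h2, h3⟩ ⟨W', h1', h2', h3'⟩ =>
      ⟨W ∪ W', h1.union h1', union_subset_union h2 h2', union_subset h3 h3'⟩) ?_
  intro z hz
  obtain ⟨V', hV', rfl⟩ := isOpen_induced_iff.1 hV
  obtain ⟨I, u, hu, hsub⟩ := isOpen_pi_iff.1 hV' z.1 (hZV hz)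
  have hopen : IsOpen ((I : Set X).pi u) := isOpen_set_pi I.finite_toSet fun a ha => (hu a ha).1
  refine ⟨Subtype.val ⁻¹' ((I : Set X).pi u), mem_nhdsWithin_of_mem_nhds
    ((hopen.preimage continuous_subtype_val).mem_nhds fun a ha => (hu a ha).2),
    Subtype.val ⁻¹' ((I : Set X).pi u), ?_, Subset.rfl, preimage_mono hsub⟩
  have : (Subtype.val ⁻¹' ((I : Set X).pi u) : Set K) =
      ⋂ a ∈ I, (fun g : K => g.1 a) ⁻¹' (u a) := by
    ext g; simp [Set.mem_pi]
  rw [this]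
  exact Finset.measurableSet_biInter I fun a ha => hM a (hu a ha).1.measurableSet

lemma aux_sep0 {Ω : Type*} [m : MeasurableSpace Ω] (μ : Measure Ω) [IsFiniteMeasure μ]
    (hcg : MeasurableSpace.CountablyGenerated Ω) : ∃ 𝒜 : Set (Set Ω), 𝒜.Countable ∧
      (∀ A ∈ 𝒜, MeasurableSet A) ∧ ∀ t, MeasurableSet t → ∀ ε : ℝ, 0 < ε →
        ∃ A ∈ 𝒜, μ (symmDiff t A) < ENNReal.ofReal ε := by
  obtain ⟨𝒜, h𝒜c, h𝒜⟩ := exists_countable_measureDense μ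
  exact ⟨𝒜, h𝒜c, h𝒜.measurable, fun t ht ε hε => h𝒜.approx t ht (measure_ne_top _ _) ε hε⟩

lemma aux_sep {Ω : Type*} {m m0 : MeasurableSpace Ω} (μ : Measure[m0] Ω) [IsFiniteMeasure μ]
    (hm : m ≤ m0) (hcg : @MeasurableSpace.CountablyGenerated Ω m) :
    ∃ 𝒜 : Set (Set Ω), 𝒜.Countable ∧
      (∀ A ∈ 𝒜, MeasurableSet[m] A) ∧ ∀ t, MeasurableSet[m] t → ∀ ε : ℝ, 0 < ε →
        ∃ A ∈ 𝒜, μ (symmDiff t A) < ENNReal.ofReal ε := by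
  have := isFiniteMeasure_trim (μ := μ) hm
  obtain ⟨𝒜, h𝒜c, h𝒜m, h𝒜⟩ := @aux_sep0 Ω m (μ.trim hm) this hcg
  refine ⟨𝒜, h𝒜c, h𝒜m, fun t ht ε hε => ?_⟩
  obtain ⟨A, hA, h⟩ := h𝒜 t ht ε hε
  exact ⟨A, hA, (le_trim hm).trans_lt h⟩

lemma aux_Iio {Ω : Type*} [MeasurableSpace Ω] (f : Ω → ℝ)
    (h : ∀ r, MeasurableSet {ω | f ω < r}) : Measurable f := measurable_of_Iio h

lemma aux_approx_s12 {X : Type*} (K : Set (X → ℝ)) (m : MeasurableSpace K) [m0 : MeasurableSpace K]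
    [BorelSpace K] (μ : Measure K) [IsProbabilityMeasure μ] [μ.Regular]
    (hm : m ≤ m0) (hcg : @MeasurableSpace.CountablyGenerated K m)
    (hM : ∀ x (r : ℝ), ∃ t, MeasurableSet[m] t ∧ {g : K | g.1 x < r} =ᵐ[μ] t) :
    ∃ 𝓕 : Set (Set K), 𝓕.Countable ∧ (∀ A ∈ 𝓕, MeasurableSet A) ∧
      ∀ B : Set K, MeasurableSet B → ∀ ε : ℝ, 0 < ε →
        ∃ A ∈ 𝓕, μ (symmDiff B A) < ENNReal.ofReal ε := by
  obtain ⟨𝒜, h𝒜c, h𝒜m, h𝒜⟩ := aux_sep μ hm hcg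
  refine ⟨𝒜, h𝒜c, fun A hA => hm _ (h𝒜m A hA), fun B hB ε hε => ?_⟩
  have hε3 : ENNReal.ofReal (ε / 3) ≠ 0 := by simpa using by positivity
  obtain ⟨Z, hZB, hZ, hZμ⟩ := hB.exists_isCompact_sdiff_lt (measure_ne_top μ B) hε3
  obtain ⟨V, hZV, hV, -, hVμ⟩ := hZ.measurableSet.exists_isOpen_sdiff_lt (measure_ne_top μ Z) hε3
  obtain ⟨W, ⟨t, ht, hWt⟩, hZW, hWV⟩ := aux_cyl K (eventuallyMeasurableSpace m (ae μ))
    (fun x => @aux_Iio _ (eventuallyMeasurableSpace m (ae μ)) _ (fun r => hM x r)) Z V hZ hV hZV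
  obtain ⟨A, hA, hAt⟩ := h𝒜 t ht (ε / 3) (by positivity)
  refine ⟨A, hA, ?_⟩
  have hsub : symmDiff B A ⊆ ((B \ Z) ∪ (V \ Z)) ∪ (symmDiff W t ∪ symmDiff t A) := by
    intro z hz
    have h1 := @hZB z
    have h2 := @hZW z
    have h3 := @hWV z
    simp only [mem_symmDiff, mem_union, mem_sdiff] at *
    tauto
  have hnull : μ (symmDiff W t) = 0 := measure_symmDiff_eq_zero_iff.2 hWt
  calc μ (symmDiff B A) ≤ (μ (B \ Z) + μ (V \ Z)) + (μ (symmDiff W t) + μ (symmDiff t A)) :=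
        (measure_mono hsub).trans ((measure_union_le _ _).trans
          (add_le_add (measure_union_le _ _) (measure_union_le _ _)))
    _ < (ENNReal.ofReal (ε / 3) + ENNReal.ofReal (ε / 3)) + ENNReal.ofReal (ε / 3) := by
        rw [hnull, zero_add]
        exact ENNReal.add_lt_add (ENNReal.add_lt_add hZμ hVμ) hAt
    _ = ENNReal.ofReal ε := by
        rw [← ENNReal.ofReal_add (by positivity) (by positivity),
          ← ENNReal.ofReal_add (by positivity) (by positivity)]
        congr 1; ring

theorem countable_maharam_type_of_pointwise_continuity_points
    {X : Type*} [TopologicalSpace X] [TopologicalSpace.SeparableSpace X]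
    [TopologicalSpace.MetrizableSpace X]
    (K : Set (X → ℝ)) (hK : IsCompact K)
    (hpc : ∀ g ∈ K, ∀ F : Set X, IsClosed F → F.Nonempty →
      ∃ x ∈ F, ContinuousWithinAt g F x)
    [MeasurableSpace K] [BorelSpace K]
    (μ : Measure K) [IsProbabilityMeasure μ] [μ.Regular] :
    ∃ 𝓕 : Set (Set K), 𝓕.Countable ∧ (∀ A ∈ 𝓕, MeasurableSet A) ∧
      ∀ B : Set K, MeasurableSet B → ∀ ε : ℝ, 0 < ε →
        ∃ A ∈ 𝓕, μ (symmDiff B A) < ENNReal.ofReal ε := by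
  rename_i m0 _ _ _
  have hcont : ∀ x, Continuous (fun g : K => g.1 x) := fun x =>
    (continuous_apply x).comp continuous_subtype_val
  let m : Set X → MeasurableSpace K := fun C =>
    MeasurableSpace.comap (fun (g : K) (c : C) => g.1 c) MeasurableSpace.pi
  have hm : ∀ C, m C ≤ m0 := fun C => Measurable.comap_le
    (measurable_pi_lambda _ fun c => (hcont c).measurable)
  have hev : ∀ C x, x ∈ C → Measurable[m C] (fun g : K => g.1 x) := fun C x hx =>
    @Measurable.comp _ _ _ (m C) MeasurableSpace.pi _ _ _ (measurable_pi_apply (⟨x, hx⟩ : C))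
      (comap_measurable (fun (g : K) (c : C) => g.1 c))
  have hmm : ∀ C D, C ⊆ D → m C ≤ m D := fun C D h => Measurable.comap_le
    (@measurable_pi_lambda _ _ _ (m D) _ _ fun c => hev D c (h c.2))
  let L : ℚ → X → Set K := fun a x => {g | g.1 x ≤ a}
  let R : ℚ → X → Set K := fun b x => {g | (b : ℝ) ≤ g.1 x}
  have hL : ∀ a x C, x ∈ C → MeasurableSet[m C] (L a x) := fun a x C hx =>
    hev C x hx measurableSet_Iic
  have hR : ∀ a x C, x ∈ C → MeasurableSet[m C] (R a x) := fun a x C hx =>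
    hev C x hx measurableSet_Ici
  choose HL hHLm hHL using fun a C x => aux_hull (hm C) μ (hm _ _ (hL a x univ (mem_univ x)))
  choose HR hHRm hHR using fun a C x => aux_hull (hm C) μ (hm _ _ (hR a x univ (mem_univ x)))
  have hmono : ∀ a b C D x, C ⊆ D →
      μ ((HL a D x ∩ HR b D x) \ (HL a C x ∩ HR b C x)) = 0 := by
    intro a b C D x h
    have h1 := aux_hull_mono (hmm C D h) μ (hHLm a C x) (hHL a C x) (hHL a D x)
    have h2 := aux_hull_mono (hmm C D h) μ (hHRm b C x) (hHR b C x) (hHR b D x)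
    refine measure_mono_null ?_ (measure_union_null h1 h2)
    intro z hz
    simp only [mem_union, mem_sdiff, mem_inter_iff] at *
    tauto
  by_cases hcase : ∃ a b : ℚ, a < b ∧ ∀ C : Set X, C.Countable → ∃ x,
      μ (HL a C x ∩ HR b C x) ≠ 0
  · exfalso
    obtain ⟨a, b, hab, hpos⟩ := hcase
    have hX : SecondCountableTopology X := by
      let := TopologicalSpace.metrizableSpaceMetric X
      exact UniformSpace.secondCountable_of_separable X
    obtain ⟨x0, -⟩ := hpos ∅ countable_empty
    have hbne : (TopologicalSpace.countableBasis X).Nonempty := by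
      obtain ⟨s, hs, -⟩ := (TopologicalSpace.isBasis_countableBasis X).exists_subset_of_mem_open
        (mem_univ x0) isOpen_univ
      exact ⟨s, hs⟩
    obtain ⟨U, hU⟩ := (TopologicalSpace.countable_countableBasis X).exists_eq_range hbne
    have hUb := TopologicalSpace.isBasis_countableBasis X
    rw [hU] at hUb
    obtain ⟨P, SA, SB, hPne, hPanti, hne, hA, hB, hlim⟩ := aux_build μ m hm hmm (L a) (R b) (hL a)
      (hR b) (HL a) (HR b) (hHLm a) (hHRm b) (hHL a) (hHR b) (hmono a b) hpos U
    have hKc : CompactSpace K := isCompact_iff_compactSpace.1 hK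
    obtain ⟨g, hg⟩ := IsCompact.nonempty_iInter_of_sequence_nonempty_isCompact_isClosed
      (fun n => closure (P n)) (fun n => closure_mono (hPanti n)) (fun n => (hPne n).closure)
      isClosed_closure.isCompact (fun n => isClosed_closure)
    rw [mem_iInter] at hg
    refine aux_top g.1 (hpc g.1 g.2) U hUb a b (by exact_mod_cast hab) SA SB hne ?_ ?_ hlim
    · intro x hx
      obtain ⟨n, hn⟩ := hA x hx
      exact closure_minimal hn (isClosed_le (hcont x) continuous_const) (hg n)
    · intro x hx
      obtain ⟨n, hn⟩ := hB x hx
      exact closure_minimal hn (isClosed_le continuous_const (hcont x)) (hg n)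
  · push Not at hcase
    have hcase' : ∀ p : ℚ × ℚ, ∃ C : Set X, C.Countable ∧
        (p.1 < p.2 → ∀ x, μ (HL p.1 C x ∩ HR p.2 C x) = 0) := by
      intro p
      by_cases h : p.1 < p.2
      · obtain ⟨C, hC, h'⟩ := hcase p.1 p.2 h
        exact ⟨C, hC, fun _ => h'⟩
      · exact ⟨∅, countable_empty, fun h' => absurd h' h⟩
    choose C hCc hC using hcase'
    set D := ⋃ p, C p with hD
    have hDc : D.Countable := countable_iUnion hCc
    have hnull : ∀ a b : ℚ, a < b → ∀ x, μ (HL a D x ∩ HR b D x) = 0 := by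
      intro a b hab x
      have h1 := hmono a b (C (a, b)) D x (subset_iUnion C (a, b))
      have h2 := aux_le h1
      rw [hC (a, b) hab x] at h2
      exact le_antisymm h2 zero_le
    have hcg : @MeasurableSpace.CountablyGenerated K (m D) := by
      have : Countable D := hDc
      exact MeasurableSpace.CountablyGenerated.comap _
    refine aux_approx_s12 K (m D) μ (hm D) hcg fun x r => ?_
    refine ⟨⋃ a ∈ {a : ℚ | (a : ℝ) < r}, HL a D x,
      MeasurableSet.biUnion (to_countable _) fun a _ => hHLm a D x, ?_⟩
    -- `L a ⊆ HL a` and `HL a ⊆ {g x < b}` almost everywhere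
    have e1 : ∀ a, μ (L a x \ HL a D x) = 0 := by
      intro a
      have := (hHL a D x _ (hHLm a D x).compl).2 (by simp)
      rwa [inter_comm, ← Set.sdiff_eq] at this
    have e2 : ∀ b, μ (R b x \ HR b D x) = 0 := by
      intro a
      have := (hHR a D x _ (hHRm a D x).compl).2 (by simp)
      rwa [inter_comm, ← Set.sdiff_eq] at this
    have e3 : ∀ a b : ℚ, a < b → μ (HL a D x ∩ R b x) = 0 := by
      intro a b hab
      by_contra h
      exact aux_pos_inter h (e2 b) (hnull a b hab x)
    refine Filter.EventuallyLE.antisymm (ae_le_set.2 ?_) (ae_le_set.2 ?_)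
    · refine measure_mono_null ?_ (measure_iUnion_null e1)
      intro g hg
      obtain ⟨a, ha1, ha2⟩ := exists_rat_btwn (show g.1 x < r from hg.1)
      refine mem_iUnion.2 ⟨a, ha1.le, fun h => hg.2 (mem_biUnion (show a ∈ {a : ℚ | (a : ℝ) < r} from ha2) h)⟩
    · refine measure_mono_null ?_ (measure_iUnion_null fun p : {p : ℚ × ℚ // p.1 < p.2} =>
        e3 p.1.1 p.1.2 p.2)
      intro g hg
      obtain ⟨a, ha, hga⟩ := mem_iUnion₂.1 hg.1
      obtain ⟨b, hb1, hb2⟩ := exists_rat_btwn (show (a : ℝ) < r from ha)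
      have hgr : r ≤ g.1 x := not_lt.1 hg.2
      exact mem_iUnion.2 ⟨⟨(a, b), by exact_mod_cast hb1⟩, hga, hb2.le.trans hgr⟩
end
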